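/- arXiv:2008.07236 — 3 statements merged into one kernel-verified Lean document; each statement's English description precedes it below -/
import Mathlib

section
/- Let 0 < R < 1, 0 < c ≤ 1 and δ > 0 be constants. Let (C_n) be a sequence of doubly transitive binary linear codes, where C_n has length n (n ranging over an infinite set of positive integers), such that the rates R(C_n) converge to R and the minimal distance of C_n is at least δ·n^c for all n. Then there exists a constant a with 0 < a < 1 - R such that for every p ∈ (0,1/2) with (4p(1-p))^{1/(4·ln 2)} < a, one has P_err(C_n, p) → 0 as n → ∞; that is, the sequence (C_n) decodes errors on BSC(p) with high probability. -/
/-!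
Let `h(p)` be the EXIT function of a code of length `n`: the probability that a fixed bit is not
determined by the other bits when each of them is erased independently with probability `p`. By
double transitivity it does not depend on the bit. It is the probability of an up-set (`exitFun`),
and by the Margulis–Russo formula `n h(p)` is the derivative of the expected dimension `D(p)` of
the subcode supported on the random set of erased positions (`dimf_hasDerivAt`).

Since `D(1) = R n`, the function `h` is bounded away from one at some erasure probability below
`1 - R`. The intersection of `k` independent random sets of density `p` has density `p ^ k`, so
`h(p ^ k) ≤ h(p) ^ k` (`bexp_pow_le`), and therefore `h(p₀) ≤ 1/2` for a constant `p₀ > 0`. Double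
transitivity also makes all influences of the up-set equal, apart from the vanishing influence of
the bit itself. The Kahn–Kalai–Linial argument (`kkl`, based on biased hypercontractivity) then
shows that the total influence is at least a constant times `log n` times the variance, and
integrating this gives `h(p₀ / 2) ≤ n ^ (-ε)` (`sharp_threshold`). The power trick improves this to
`h(l) ≤ n ^ (-2)` at some constant `l > 0`, whence `D(l) ≤ 1 / n`.

To pass from erasures to errors, let `θ = 2 ^ l - 1`. The multivariate weight enumerator is affine
in each variable, and its value with one variable set to `1` is between once and twice the value
with that variable set to `0`. Concavity of `y ↦ y ^ l` on `[1, 2]`, applied one coordinate at a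
time, gives `log (∑_{c ∈ C} θ ^ w(c)) ≤ D(l) log 2` (`log_cenum_le`). Hence
`∑_{c ≠ 0} θ ^ w(c) ≤ 2 ^ (1/n) - 1 → 0`, and the Bhattacharyya union bound (`Perr_le_cenum`) shows
that the block error probability vanishes as soon as `2 √(p (1 - p)) ≤ θ`. The constant `a` is
chosen so that the condition on `p` implies this inequality.
-/

open Finset Filter

/-- The rate of a binary linear code. -/
noncomputable def codeRate {ι : Type} [Fintype ι] (C : Submodule (ZMod 2) (ι → ZMod 2)) : ℝ :=
  (Module.finrank (ZMod 2) C : ℝ) / (Fintype.card ι : ℝ)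

/-- `weightEnum C i` is the number of codewords of Hamming weight `i`. -/
noncomputable def weightEnum {ι : Type} [Fintype ι] (C : Submodule (ZMod 2) (ι → ZMod 2))
    (i : ℕ) : ℕ :=
  Nat.card {x : ι → ZMod 2 // x ∈ C ∧ hammingNorm x = i}

/-- The permutation `π` of coordinates maps the code `C` onto itself. -/
def PreservesCode {ι : Type} [Fintype ι] (C : Submodule (ZMod 2) (ι → ZMod 2))
    (π : Equiv.Perm ι) : Prop :=
  ∀ x : ι → ZMod 2, x ∈ C ↔ x ∘ π ∈ C

/-- The automorphism group of `C` acts 2-transitively on coordinates. -/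
def DoublyTransitive {ι : Type} [Fintype ι] (C : Submodule (ZMod 2) (ι → ZMod 2)) : Prop :=
  ∀ i₁ j₁ i₂ j₂ : ι, i₁ ≠ j₁ → i₂ ≠ j₂ →
    ∃ π : Equiv.Perm ι, PreservesCode C π ∧ π i₁ = i₂ ∧ π j₁ = j₂

/-- Minimal distance: the least Hamming weight of a nonzero codeword. -/
noncomputable def minDist {ι : Type} [Fintype ι] (C : Submodule (ZMod 2) (ι → ZMod 2)) : ℕ :=
  sInf {d | ∃ x ∈ C, x ≠ 0 ∧ hammingNorm x = d}

/-- Reed-Muller code RM(m,d). -/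
noncomputable def ReedMuller (m d : ℕ) : Submodule (ZMod 2) ((Fin m → ZMod 2) → ZMod 2) :=
  Submodule.map
    (LinearMap.pi fun v : Fin m → ZMod 2 => (MvPolynomial.aeval v).toLinearMap)
    (MvPolynomial.restrictTotalDegree (Fin m) (ZMod 2) d)

open scoped Classical in
/-- ML block error probability on BSC(p). -/
noncomputable def Perr {ι : Type} [Fintype ι] (C : Submodule (ZMod 2) (ι → ZMod 2)) (p : ℝ) : ℝ :=
  ∑ z : ι → ZMod 2,
    if ∃ x ∈ C, x ≠ 0 ∧ hammingNorm (z + x) ≤ hammingNorm z then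
      p ^ hammingNorm z * (1 - p) ^ (Fintype.card ι - hammingNorm z) else 0

/-- Rank of the projection of `C` to the coordinates in `S`. -/
noncomputable def rankC {ι : Type} [Fintype ι] (C : Submodule (ZMod 2) (ι → ZMod 2))
    (S : Finset ι) : ℕ :=
  Module.finrank (ZMod 2)
    (C.map (LinearMap.funLeft (ZMod 2) (ZMod 2) (Subtype.val : {i // i ∈ S} → ι)))

/-- `f_C(S) = |S| - r_C(S)`. -/
noncomputable def fC {ι : Type} [Fintype ι] (C : Submodule (ZMod 2) (ι → ZMod 2))
    (S : Finset ι) : ℝ :=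
  (S.card : ℝ) - (rankC C S : ℝ)

/-- `μ_C(λ) = E_{S ~ λ} f_C(S)`. -/
noncomputable def muC {ι : Type} [Fintype ι] (C : Submodule (ZMod 2) (ι → ZMod 2)) (l : ℝ) : ℝ :=
  ∑ S : Finset ι, l ^ S.card * (1 - l) ^ (Fintype.card ι - S.card) * fC C S

/-- Bit erasure probability `P_{b,i}(p)`. -/
noncomputable def Pbi {ι : Type} [Fintype ι] [DecidableEq ι]
    (C : Submodule (ZMod 2) (ι → ZMod 2)) (i : ι) (p : ℝ) : ℝ :=
  ∑ R ∈ ((Finset.univ : Finset ι).erase i).powerset,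
    (1 - p) ^ R.card * p ^ (Fintype.card ι - R.card) *
      (if rankC C R < rankC C (insert i R) then (1 : ℝ) else 0)

/-- The average EXIT function `h(p)`. -/
noncomputable def exitAvg {ι : Type} [Fintype ι] [DecidableEq ι]
    (C : Submodule (ZMod 2) (ι → ZMod 2)) (p : ℝ) : ℝ :=
  (1 / (Fintype.card ι : ℝ)) * ∑ i : ι, Pbi C i p / p

/-- The dual code. -/
def dualCode {ι : Type} [Fintype ι] (C : Submodule (ZMod 2) (ι → ZMod 2)) :
    Submodule (ZMod 2) (ι → ZMod 2) where
  carrier := {y | ∀ x ∈ C, ∑ i, x i * y i = 0}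
  zero_mem' := by intro x hx; simp
  add_mem' := by
    intro y z hy hz x hx
    simp only [Pi.add_apply, mul_add, Finset.sum_add_distrib, Set.mem_setOf_eq] at *
    rw [hy x hx, hz x hx, add_zero]
  smul_mem' := by
    intro c y hy x hx
    simp only [Pi.smul_apply, smul_eq_mul]
    rw [show (∑ i, x i * (c * y i)) = c * ∑ i, x i * y i by rw [Finset.mul_sum]; congr 1; funext i; ring, hy x hx, mul_zero]

/-! ### Product Bernoulli expectations -/

/-- The probability that a Bernoulli(`p`) bit takes the value `b`. -/
noncomputable def bw (p : ℝ) (b : Bool) : ℝ := if b then p else 1 - p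

/-- The expectation of `f` over a vector of i.i.d. Bernoulli(`p`) bits. -/
noncomputable def bexp {ι : Type} [Fintype ι] [DecidableEq ι] (p : ℝ) (f : (ι → Bool) → ℝ) : ℝ :=
  ∑ x : ι → Bool, (∏ i, bw p (x i)) * f x

section Basics

variable {ι : Type} [Fintype ι] [DecidableEq ι]

lemma bw_nonneg {p : ℝ} (h0 : 0 ≤ p) (h1 : p ≤ 1) (b : Bool) : 0 ≤ bw p b := by
  unfold bw; split_ifs <;> linarith

lemma bexp_mono {p : ℝ} (h0 : 0 ≤ p) (h1 : p ≤ 1) {f g : (ι → Bool) → ℝ} (h : ∀ x, f x ≤ g x) :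
    bexp p f ≤ bexp p g := by
  unfold bexp
  refine Finset.sum_le_sum fun x _ => mul_le_mul_of_nonneg_left (h x) ?_
  exact Finset.prod_nonneg fun i _ => bw_nonneg h0 h1 _

lemma bexp_nonneg {p : ℝ} (h0 : 0 ≤ p) (h1 : p ≤ 1) {f : (ι → Bool) → ℝ} (h : ∀ x, 0 ≤ f x) :
    0 ≤ bexp p f :=
  Finset.sum_nonneg fun x _ =>
    mul_nonneg (Finset.prod_nonneg fun i _ => bw_nonneg h0 h1 _) (h x)

lemma bexp_add (p : ℝ) (f g : (ι → Bool) → ℝ) :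
    bexp p (fun x => f x + g x) = bexp p f + bexp p g := by
  simp [bexp, mul_add, Finset.sum_add_distrib]

lemma bexp_const_mul (p a : ℝ) (f : (ι → Bool) → ℝ) :
    bexp p (fun x => a * f x) = a * bexp p f := by
  unfold bexp
  rw [Finset.mul_sum]
  exact Finset.sum_congr rfl fun x _ => by ring

lemma bexp_sum {κ : Type} (s : Finset κ) (p : ℝ) (f : κ → (ι → Bool) → ℝ) :
    bexp p (fun x => ∑ k ∈ s, f k x) = ∑ k ∈ s, bexp p (f k) := by
  simp only [bexp, Finset.mul_sum]
  exact Finset.sum_comm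

lemma bw_sum (p : ℝ) : ∑ b : Bool, bw p b = 1 := by simp [bw]

lemma bexp_one (p : ℝ) : bexp p (fun _ : ι → Bool => (1 : ℝ)) = 1 := by
  unfold bexp
  have h := Finset.prod_univ_sum (fun _ : ι => (Finset.univ : Finset Bool)) (fun _ b => bw p b)
  simp only [bw_sum, Finset.prod_const_one, Fintype.piFinset_univ] at h
  simpa using h.symm

lemma bexp_const (p a : ℝ) : bexp p (fun _ : ι → Bool => a) = a := by
  have := bexp_const_mul (ι := ι) p a (fun _ => 1)
  simpa [bexp_one] using this

lemma bexp_cauchy {p : ℝ} (h0 : 0 ≤ p) (h1 : p ≤ 1) (f g : (ι → Bool) → ℝ) :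
    (bexp p fun x => f x * g x) ^ 2 ≤ (bexp p fun x => f x ^ 2) * (bexp p fun x => g x ^ 2) := by
  unfold bexp
  refine Finset.sum_sq_le_sum_mul_sum_of_sq_le_mul _ ?_ ?_ ?_
  · exact fun x _ => mul_nonneg (Finset.prod_nonneg fun i _ => bw_nonneg h0 h1 _) (sq_nonneg _)
  · exact fun x _ => mul_nonneg (Finset.prod_nonneg fun i _ => bw_nonneg h0 h1 _) (sq_nonneg _)
  · intro x _; exact le_of_eq (by ring)

lemma sum_update_half (i : ι) (G : (ι → Bool) → ℝ) :
    ∑ x : ι → Bool, G x =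
      (1 / 2) * ∑ x : ι → Bool, (G (Function.update x i true) + G (Function.update x i false)) := by
  have hinv : Function.Involutive (fun x : ι → Bool => Function.update x i (!(x i))) := by
    intro x
    simp
  have h := Equiv.sum_comp (Function.Involutive.toPerm _ hinv) G
  have h2 : ∑ x : ι → Bool, (G (Function.update x i true) + G (Function.update x i false))
      = ∑ x, (G x + G (Function.Involutive.toPerm _ hinv x)) := by
    refine Finset.sum_congr rfl fun x _ => ?_
    have hx : Function.update x i (x i) = x := Function.update_eq_self i x
    change _ = G x + G (Function.update x i (!(x i)))
    cases hb : x i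
    · rw [hb] at hx; rw [hx]; simp [add_comm]
    · rw [hb] at hx; rw [hx]; simp
  rw [h2, Finset.sum_add_distrib, h]
  ring

lemma prod_bw_update (p : ℝ) (x : ι → Bool) (i : ι) (b : Bool) :
    ∏ j, bw p (Function.update x i b j) = bw p b * ∏ j ∈ univ.erase i, bw p (x j) := by
  rw [← Finset.mul_prod_erase univ _ (Finset.mem_univ i)]
  simp only [Function.update_self]
  congr 1
  refine Finset.prod_congr rfl fun j hj => ?_
  rw [Function.update_of_ne (Finset.ne_of_mem_erase hj)]

/-- Averaging over the `i`-th bit first. -/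
lemma bexp_split (p : ℝ) (i : ι) (f : (ι → Bool) → ℝ) :
    bexp p f = bexp p fun x =>
      p * f (Function.update x i true) + (1 - p) * f (Function.update x i false) := by
  unfold bexp
  rw [sum_update_half i, sum_update_half i (fun x => (∏ j, bw p (x j)) * (_ + _))]
  congr 1
  refine Finset.sum_congr rfl fun x _ => ?_
  simp only [prod_bw_update, Function.update_idem]
  simp [bw]
  ring

lemma bexp_comp_perm (p : ℝ) (π : Equiv.Perm ι) (f : (ι → Bool) → ℝ) :
    (bexp p fun x => f (x ∘ π)) = bexp p f := by
  unfold bexp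
  rw [← Equiv.sum_comp (Equiv.arrowCongr π.symm (Equiv.refl Bool))
    (fun x => (∏ i, bw p (x i)) * f x)]
  refine Finset.sum_congr rfl fun x _ => ?_
  have h1 : (Equiv.arrowCongr π.symm (Equiv.refl Bool)) x = x ∘ π := by
    ext j; simp [Equiv.arrowCongr]
  rw [h1]
  congr 1
  exact (Equiv.prod_comp π (fun i => bw p (x i))).symm

/-- The change of `f` when the `i`-th bit is switched from `false` to `true`. -/
def bdiff (i : ι) (f : (ι → Bool) → ℝ) (x : ι → Bool) : ℝ :=
  f (Function.update x i true) - f (Function.update x i false)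

/-- The Margulis–Russo formula. -/
lemma bexp_hasDerivAt (p : ℝ) (f : (ι → Bool) → ℝ) :
    HasDerivAt (fun q => bexp q f) (∑ i, bexp p (bdiff i f)) p := by
  have hb : ∀ b : Bool, HasDerivAt (fun q => bw q b) (if b then 1 else -1) p := by
    intro b
    cases b
    · simpa [bw] using (hasDerivAt_id p).const_sub 1
    · simpa [bw] using hasDerivAt_id' p
  have h1 : HasDerivAt (fun q => bexp q f)
      (∑ x : ι → Bool, (∑ i, (∏ j ∈ univ.erase i, bw p (x j)) • (if x i then (1 : ℝ) else -1)) * f x)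
      p := by
    unfold bexp
    refine HasDerivAt.fun_sum fun x _ => ?_
    exact (HasDerivAt.fun_finsetProd fun i _ => hb (x i)).mul_const _
  convert h1 using 1
  simp only [Finset.sum_mul]
  rw [Finset.sum_comm]
  refine Finset.sum_congr rfl fun i _ => ?_
  unfold bexp
  rw [sum_update_half i, sum_update_half i (fun x => (_ • _) * f x)]
  congr 1
  refine Finset.sum_congr rfl fun x _ => ?_
  have he : ∀ b, ∏ j ∈ univ.erase i, bw p (Function.update x i b j)
      = ∏ j ∈ univ.erase i, bw p (x j) := by
    intro b
    refine Finset.prod_congr rfl fun j hj => ?_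
    rw [Function.update_of_ne (Finset.ne_of_mem_erase hj)]
  simp only [prod_bw_update, he, bdiff, Function.update_idem, Function.update_self]
  simp [bw]
  ring

/-- If `x` and `y` are independent with parameters `p` and `q`, then `x ∧ y` has parameter `p q`. -/
lemma bexp_inter (p q : ℝ) (f : (ι → Bool) → ℝ) :
    (bexp p fun x => bexp q fun y => f fun i => x i && y i) = bexp (p * q) f := by
  have hw : ∀ b : Bool, bw (p * q) b =
      ∑ c ∈ univ.filter (fun c : Bool × Bool => (c.1 && c.2) = b), bw p c.1 * bw q c.2 := by
    intro b
    rw [Finset.sum_filter, Fintype.sum_prod_type]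
    cases b <;> simp [bw]
    ring
  have hR : bexp (p * q) f = ∑ z : ι → Bool, ∑ c ∈ univ.filter
      (fun c : ι → Bool × Bool => (fun i => (c i).1 && (c i).2) = z),
        (∏ i, bw p (c i).1 * bw q (c i).2) * f (fun i => (c i).1 && (c i).2) := by
    unfold bexp
    refine Finset.sum_congr rfl fun z _ => ?_
    simp only [hw]
    rw [Finset.prod_univ_sum, Finset.sum_mul]
    refine Finset.sum_congr ?_ ?_
    · ext c; simp [funext_iff]
    · intro c hc
      have : (fun i => (c i).1 && (c i).2) = z := by simpa using hc
      rw [this]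
  rw [hR, Finset.sum_fiberwise]
  unfold bexp
  rw [← Equiv.sum_comp (Equiv.arrowProdEquivProdArrow ι (fun _ => Bool) (fun _ => Bool)).symm,
    Fintype.sum_prod_type]
  refine Finset.sum_congr rfl fun x _ => ?_
  rw [Finset.mul_sum]
  refine Finset.sum_congr rfl fun y _ => ?_
  simp [Equiv.arrowProdEquivProdArrow, Finset.prod_mul_distrib, mul_assoc]

end Basics

/-! ### Biased Fourier analysis and hypercontractivity -/

section Fourier

variable {ι : Type} [Fintype ι] [DecidableEq ι]

/-- The normalised (mean `0`, variance `1`) function of a Bernoulli(`p`) bit. -/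
noncomputable def bphi (p : ℝ) (b : Bool) : ℝ :=
  ((if b then 1 else 0) - p) / Real.sqrt (p * (1 - p))

/-- The `p`-biased Fourier characters. -/
noncomputable def bchi (p : ℝ) (S : Finset ι) (x : ι → Bool) : ℝ := ∏ i ∈ S, bphi p (x i)

/-- The `p`-biased Fourier coefficients. -/
noncomputable def bhat (p : ℝ) (f : (ι → Bool) → ℝ) (S : Finset ι) : ℝ :=
  bexp p fun x => f x * bchi p S x

lemma bphi_mean (p : ℝ) : p * bphi p true + (1 - p) * bphi p false = 0 := by
  simp [bphi]; ring

lemma bphi_sq {p : ℝ} (h0 : 0 < p) (h1 : p < 1) :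
    p * bphi p true ^ 2 + (1 - p) * bphi p false ^ 2 = 1 := by
  have hq : 0 < 1 - p := by linarith
  simp only [bphi, div_pow, Real.sq_sqrt (mul_pos h0 hq).le]
  simp
  field_simp
  ring

lemma bphi_kernel {p : ℝ} (h0 : 0 < p) (h1 : p < 1) (b c : Bool) :
    bw p c * (1 + bphi p b * bphi p c) = if b = c then 1 else 0 := by
  have hq : 0 < 1 - p := by linarith
  have hs : Real.sqrt (p * (1 - p)) * Real.sqrt (p * (1 - p)) = p * (1 - p) :=
    Real.mul_self_sqrt (mul_pos h0 hq).le
  simp only [bphi, div_mul_div_comm, hs]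
  cases b <;> cases c <;> simp only [bw, if_true, if_false, Bool.false_eq_true, reduceCtorEq] <;>
    field_simp <;> ring

lemma bhat_empty (p : ℝ) (f : (ι → Bool) → ℝ) : bhat p f ∅ = bexp p f := by
  simp [bhat, bchi]

lemma parseval {p : ℝ} (h0 : 0 < p) (h1 : p < 1) (f : (ι → Bool) → ℝ) :
    ∑ S : Finset ι, bhat p f S ^ 2 = bexp p fun x => f x ^ 2 := by
  have hk : ∀ x y : ι → Bool, (∏ i, bw p (y i)) * ∑ S : Finset ι, bchi p S x * bchi p S y
      = if x = y then 1 else 0 := by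
    intro x y
    have : ∑ S : Finset ι, bchi p S x * bchi p S y = ∏ i, (1 + bphi p (x i) * bphi p (y i)) := by
      rw [Finset.prod_one_add, Finset.powerset_univ]
      exact Finset.sum_congr rfl fun S _ => by simp [bchi, Finset.prod_mul_distrib]
    rw [this, ← Finset.prod_mul_distrib]
    simp only [bphi_kernel h0 h1]
    rw [Finset.prod_ite_zero]
    simp [funext_iff]
  have h2 : ∀ S : Finset ι, bhat p f S ^ 2 = ∑ x : ι → Bool, ∑ y : ι → Bool,
      (∏ i, bw p (x i)) * f x * f y * ((∏ i, bw p (y i)) * (bchi p S x * bchi p S y)) := by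
    intro S
    rw [sq]
    unfold bhat bexp
    rw [Finset.sum_mul_sum]
    exact Finset.sum_congr rfl fun x _ => Finset.sum_congr rfl fun y _ => by ring
  simp only [h2]
  rw [Finset.sum_comm]
  unfold bexp
  refine Finset.sum_congr rfl fun x _ => ?_
  rw [Finset.sum_comm]
  simp only [← Finset.mul_sum, hk]
  simp
  ring

lemma bchi_update_of_notMem (p : ℝ) {S : Finset ι} {i : ι} (hi : i ∉ S) (x : ι → Bool) (b : Bool) :
    bchi p S (Function.update x i b) = bchi p S x := by
  unfold bchi
  refine Finset.prod_congr rfl fun j hj => ?_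
  rw [Function.update_of_ne (fun h : j = i => hi (h ▸ hj))]

lemma bchi_insert (p : ℝ) {S : Finset ι} {i : ι} (hi : i ∉ S) (x : ι → Bool) :
    bchi p (insert i S) x = bphi p (x i) * bchi p S x := by
  unfold bchi
  rw [Finset.prod_insert hi]

/-- The two-point inequality behind hypercontractivity. -/
lemma two_point {p α β g h r : ℝ} (h0 : 0 ≤ p) (h1 : p ≤ 1) (hα : |α| ≤ 1 / 2) (hβ : |β| ≤ 1 / 2)
    (hm : p * α + (1 - p) * β = 0) (hv : p * α ^ 2 + (1 - p) * β ^ 2 = r) (hr : r ≤ 1 / 16) :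
    p * (g + α * h) ^ 4 + (1 - p) * (g + β * h) ^ 4 ≤ g ^ 4 + 2 * (g ^ 2 * h ^ 2) + h ^ 4 := by
  have key : ∀ a : ℝ, |a| ≤ 1 / 2 → (g + a * h) ^ 4 ≤
      g ^ 4 + a * (4 * g ^ 3 * h) + a ^ 2 * (7 * (g ^ 2 * h ^ 2) + 5 / 4 * h ^ 4) := by
    intro a ha
    have ha' := abs_le.mp ha
    have e1 : 0 ≤ a ^ 2 * h ^ 2 * ((g - 2 * a * h) ^ 2) := by positivity
    have e2 : 0 ≤ a ^ 2 * h ^ 4 * (1 / 4 - a ^ 2) := by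
      have : a ^ 2 ≤ 1 / 4 := by nlinarith
      have : 0 ≤ 1 / 4 - a ^ 2 := by linarith
      positivity
    nlinarith [e1, e2]
  have e1 := mul_le_mul_of_nonneg_left (key α hα) h0
  have e2 := mul_le_mul_of_nonneg_left (key β hβ) (by linarith : 0 ≤ 1 - p)
  have hP : 0 ≤ g ^ 2 * h ^ 2 := by positivity
  have hQ : 0 ≤ h ^ 4 := by positivity
  have hsum : p * (g + α * h) ^ 4 + (1 - p) * (g + β * h) ^ 4 ≤
      g ^ 4 + (p * α + (1 - p) * β) * (4 * g ^ 3 * h) +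
        (p * α ^ 2 + (1 - p) * β ^ 2) * (7 * (g ^ 2 * h ^ 2) + 5 / 4 * h ^ 4) := by
    linarith
  rw [hm, hv] at hsum
  nlinarith [mul_le_mul_of_nonneg_right hr (by positivity : 0 ≤ 7 * (g ^ 2 * h ^ 2) + 5 / 4 * h ^ 4)]

/-- Hypercontractivity (from `L²` to `L⁴`) for the `p`-biased measure, by induction on the set `J`
of coordinates involved. -/
lemma hypercontractive {p ρ : ℝ} (h0 : 0 < p) (h1 : p < 1) (hρ0 : 0 ≤ ρ)
    (hρ : ρ ≤ Real.sqrt (p * (1 - p)) / 2) (J : Finset ι) :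
    ∀ a : Finset ι → ℝ,
      (bexp p fun x => (∑ S ∈ J.powerset, ρ ^ S.card * a S * bchi p S x) ^ 4)
        ≤ (∑ S ∈ J.powerset, a S ^ 2) ^ 2 := by
  have hq : 0 < 1 - p := by linarith
  have hs : 0 < Real.sqrt (p * (1 - p)) := Real.sqrt_pos.mpr (mul_pos h0 hq)
  have hs2 : Real.sqrt (p * (1 - p)) ^ 2 = p * (1 - p) := Real.sq_sqrt (mul_pos h0 hq).le
  have hb : ∀ b, |ρ * bphi p b| ≤ 1 / 2 := by
    intro b
    rw [abs_mul, abs_of_nonneg hρ0, bphi, abs_div, abs_of_pos hs, ← mul_div_assoc, div_le_iff₀ hs]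
    have : |(if b then (1 : ℝ) else 0) - p| ≤ 1 := by
      cases b
      · simp [abs_of_pos h0, h1.le]
      · simp [abs_of_pos hq, h0.le]
    nlinarith [abs_nonneg ((if b then (1 : ℝ) else 0) - p)]
  have hr : ρ ^ 2 ≤ 1 / 16 := by
    have : p * (1 - p) ≤ 1 / 4 := by nlinarith [sq_nonneg (p - 1 / 2)]
    nlinarith
  induction J using Finset.induction_on with
  | empty =>
    intro a
    simp [bchi, bexp_const]
    exact le_of_eq (by ring)
  | insert i J hi ih =>
    intro a
    set g : (ι → Bool) → ℝ := fun x => ∑ S ∈ J.powerset, ρ ^ S.card * a S * bchi p S x with hg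
    set h : (ι → Bool) → ℝ :=
      fun x => ∑ S ∈ J.powerset, ρ ^ S.card * a (insert i S) * bchi p S x with hh
    set A := ∑ S ∈ J.powerset, a S ^ 2
    set B := ∑ S ∈ J.powerset, a (insert i S) ^ 2
    have hiS : ∀ S ∈ J.powerset, i ∉ S := fun S hS hiS => hi (Finset.mem_powerset.mp hS hiS)
    have hA : 0 ≤ A := Finset.sum_nonneg fun _ _ => sq_nonneg _
    have hB : 0 ≤ B := Finset.sum_nonneg fun _ _ => sq_nonneg _
    have hdec : ∀ x, ∑ S ∈ (insert i J).powerset, ρ ^ S.card * a S * bchi p S x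
        = g x + ρ * bphi p (x i) * h x := by
      intro x
      rw [Finset.sum_powerset_insert hi]
      congr 1
      rw [hh, Finset.mul_sum]
      refine Finset.sum_congr rfl fun S hS => ?_
      rw [Finset.card_insert_of_notMem (hiS S hS), bchi_insert p (hiS S hS)]
      ring
    have hgu : ∀ x b, g (Function.update x i b) = g x := by
      intro x b
      refine Finset.sum_congr rfl fun S hS => ?_
      rw [bchi_update_of_notMem p (hiS S hS)]
    have hhu : ∀ x b, h (Function.update x i b) = h x := by
      intro x b
      refine Finset.sum_congr rfl fun S hS => ?_
      rw [bchi_update_of_notMem p (hiS S hS)]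
    have hsum : ∑ S ∈ (insert i J).powerset, a S ^ 2 = A + B := Finset.sum_powerset_insert hi _
    rw [hsum]
    simp only [hdec]
    have hstep : (bexp p fun x => (g x + ρ * bphi p (x i) * h x) ^ 4) ≤
        bexp p fun x => g x ^ 4 + 2 * (g x ^ 2 * h x ^ 2) + h x ^ 4 := by
      rw [bexp_split p i]
      refine bexp_mono h0.le h1.le fun x => ?_
      simp only [hgu, hhu, Function.update_self]
      refine two_point h0.le h1.le (hb true) (hb false) ?_ (r := ρ ^ 2) ?_ hr
      · linear_combination ρ * bphi_mean p
      · linear_combination ρ ^ 2 * bphi_sq h0 h1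
    refine hstep.trans ?_
    rw [bexp_add, bexp_add, bexp_const_mul]
    have hgg : (bexp p fun x => g x ^ 4) ≤ A ^ 2 := ih a
    have hh4 : (bexp p fun x => h x ^ 4) ≤ B ^ 2 := ih fun S => a (insert i S)
    have hcs := bexp_cauchy h0.le h1.le (fun x => g x ^ 2) (fun x => h x ^ 2)
    have hgh : (bexp p fun x => g x ^ 2 * h x ^ 2) ≤ A * B := by
      refine le_of_sq_le_sq ?_ (mul_nonneg hA hB)
      refine hcs.trans ?_
      simp only [← pow_mul, Nat.reduceMul]
      rw [mul_pow]
      refine mul_le_mul hgg hh4 (bexp_nonneg h0.le h1.le fun x => by positivity) (sq_nonneg _)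
    nlinarith

end Fourier

/-! ### Influences of monotone Boolean functions -/

section Influence

variable {ι : Type} [Fintype ι] [DecidableEq ι]

/-- The part of `f` that is centred with respect to the `i`-th bit. -/
noncomputable def bcent (p : ℝ) (i : ι) (f : (ι → Bool) → ℝ) (x : ι → Bool) : ℝ :=
  f x - (p * f (Function.update x i true) + (1 - p) * f (Function.update x i false))

lemma bhat_bcent (p : ℝ) (i : ι) (f : (ι → Bool) → ℝ) (S : Finset ι) :
    bhat p (bcent p i f) S = if i ∈ S then bhat p f S else 0 := by
  unfold bhat
  split_ifs with hi
  · obtain ⟨T, hiT, rfl⟩ : ∃ T, i ∉ T ∧ insert i T = S :=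
      ⟨S.erase i, Finset.notMem_erase i S, Finset.insert_erase hi⟩
    rw [bexp_split p i, bexp_split p i (fun x => f x * _)]
    congr 1
    funext x
    simp only [bcent, bchi_insert p hiT, bchi_update_of_notMem p hiT, Function.update_self,
      Function.update_idem]
    linear_combination (-(p * f (Function.update x i true) +
      (1 - p) * f (Function.update x i false)) * bchi p T x) * bphi_mean p
  · rw [bexp_split p i]
    simp only [bcent, bchi_update_of_notMem p hi, Function.update_idem]
    rw [← bexp_const (ι := ι) p 0]
    congr 1
    funext x
    ring

/-- A monotone function with values in `{0, 1}`. -/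
def MonoBool (f : (ι → Bool) → ℝ) : Prop := (∀ x, f x = 0 ∨ f x = 1) ∧ Monotone f

lemma MonoBool.bdiff_zero_or_one {f : (ι → Bool) → ℝ} (hf : MonoBool f) (i : ι) (x : ι → Bool) :
    bdiff i f x = 0 ∨ bdiff i f x = 1 := by
  have hle : f (Function.update x i false) ≤ f (Function.update x i true) := by
    refine hf.2 (update_le_update_iff.mpr ⟨by simp, fun _ _ => le_rfl⟩)
  unfold bdiff
  rcases hf.1 (Function.update x i true) with h | h <;>
    rcases hf.1 (Function.update x i false) with h' | h' <;> rw [h, h'] at hle ⊢ <;> norm_num at *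

lemma abs_bcent_le {p : ℝ} (h0 : 0 ≤ p) (h1 : p ≤ 1) {f : (ι → Bool) → ℝ} (hf : MonoBool f)
    (i : ι) (x : ι → Bool) : |bcent p i f x| ≤ bdiff i f x := by
  have hx : Function.update x i (x i) = x := Function.update_eq_self i x
  have hd : 0 ≤ bdiff i f x := by rcases hf.bdiff_zero_or_one i x with h | h <;> rw [h]; norm_num
  cases hb : x i
  · rw [hb] at hx
    have : bcent p i f x = -(p * bdiff i f x) := by
      simp only [bcent, bdiff]; rw [hx]; ring
    rw [this, abs_neg, abs_mul, abs_of_nonneg hd, abs_of_nonneg h0]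
    nlinarith
  · rw [hb] at hx
    have : bcent p i f x = (1 - p) * bdiff i f x := by
      simp only [bcent, bdiff]; rw [hx]; ring
    rw [this, abs_mul, abs_of_nonneg hd, abs_of_nonneg (by linarith : 0 ≤ 1 - p)]
    nlinarith

lemma MonoBool.bdiff_sq {f : (ι → Bool) → ℝ} (hf : MonoBool f) (i : ι) (x : ι → Bool) :
    bdiff i f x ^ 2 = bdiff i f x := by
  rcases hf.bdiff_zero_or_one i x with h | h <;> rw [h] <;> norm_num

lemma MonoBool.bdiff_nonneg {f : (ι → Bool) → ℝ} (hf : MonoBool f) (i : ι) (x : ι → Bool) :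
    0 ≤ bdiff i f x := by
  rw [← hf.bdiff_sq]; positivity

lemma sum_bhat_le {p : ℝ} (h0 : 0 < p) (h1 : p < 1) {f : (ι → Bool) → ℝ} (hf : MonoBool f)
    (i : ι) : (∑ S : Finset ι, if i ∈ S then bhat p f S ^ 2 else 0) ≤ bexp p (bdiff i f) := by
  have h := parseval h0 h1 (bcent p i f)
  simp only [bhat_bcent, ite_pow, zero_pow two_ne_zero] at h
  rw [h]
  refine bexp_mono h0.le h1.le fun x => ?_
  rw [← hf.bdiff_sq, ← sq_abs]
  exact pow_le_pow_left₀ (abs_nonneg _) (abs_bcent_le h0.le h1.le hf i x) 2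

/-- The noise-attenuated Fourier weight at the `i`-th bit is at most `I_i ^ (3/2)`, where `I_i` is
the influence; this is the dual (`L^{4/3}` to `L²`) form of hypercontractivity. -/
lemma sum_rho_bhat_le {p ρ : ℝ} (h0 : 0 < p) (h1 : p < 1) (hρ0 : 0 ≤ ρ)
    (hρ : ρ ≤ Real.sqrt (p * (1 - p)) / 2) {f : (ι → Bool) → ℝ} (hf : MonoBool f) (i : ι) :
    (∑ S : Finset ι, if i ∈ S then (ρ ^ 2) ^ S.card * bhat p f S ^ 2 else 0) ≤
      bexp p (bdiff i f) * Real.sqrt (bexp p (bdiff i f)) := by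
  set I := bexp p (bdiff i f) with hI
  have hI0 : 0 ≤ I := bexp_nonneg h0.le h1.le (hf.bdiff_nonneg i)
  set d := bcent p i f with hd
  set M := ∑ S : Finset ι, (ρ ^ S.card * bhat p d S) ^ 2 with hM
  have hMe : (∑ S : Finset ι, if i ∈ S then (ρ ^ 2) ^ S.card * bhat p f S ^ 2 else 0) = M := by
    refine Finset.sum_congr rfl fun S _ => ?_
    rw [hd, bhat_bcent]
    split_ifs
    · ring
    · simp
  rw [hMe]
  have hM0 : 0 ≤ M := Finset.sum_nonneg fun _ _ => sq_nonneg _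
  set q : (ι → Bool) → ℝ :=
    fun x => ∑ S ∈ (univ : Finset ι).powerset, ρ ^ S.card * (ρ ^ S.card * bhat p d S) * bchi p S x
    with hq
  have hq4 : (bexp p fun x => q x ^ 4) ≤ M ^ 2 := by
    have := hypercontractive h0 h1 hρ0 hρ (univ : Finset ι) (fun S => ρ ^ S.card * bhat p d S)
    rwa [Finset.powerset_univ] at this
  have hdq : M = bexp p fun x => d x * q x := by
    simp only [hq, Finset.mul_sum, bexp_sum, Finset.powerset_univ]
    refine Finset.sum_congr rfl fun S _ => ?_
    have : (fun x => d x * (ρ ^ S.card * (ρ ^ S.card * bhat p d S) * bchi p S x)) =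
        fun x => (ρ ^ S.card * (ρ ^ S.card * bhat p d S)) * (d x * bchi p S x) := by
      funext x; ring
    rw [this, bexp_const_mul]
    change _ = _ * bhat p d S
    ring
  set G := bdiff i f with hG
  have hGq : M ≤ bexp p fun x => G x * (G x * |q x|) := by
    rw [hdq]
    refine bexp_mono h0.le h1.le fun x => ?_
    have h2 : G x * (G x * |q x|) = G x * |q x| := by
      rw [← mul_assoc, ← sq, hf.bdiff_sq]
    rw [h2]
    calc d x * q x ≤ |d x * q x| := le_abs_self _
      _ = |d x| * |q x| := abs_mul _ _
      _ ≤ _ := mul_le_mul_of_nonneg_right (abs_bcent_le h0.le h1.le hf i x) (abs_nonneg _)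
  have hc1 : (bexp p fun x => G x * (G x * |q x|)) ^ 2 ≤ I * bexp p fun x => G x * q x ^ 2 := by
    refine (bexp_cauchy h0.le h1.le _ _).trans (le_of_eq ?_)
    simp only [mul_pow, hG, hf.bdiff_sq, sq_abs]
    rfl
  have hc2 : (bexp p fun x => G x * q x ^ 2) ^ 2 ≤ I * M ^ 2 := by
    refine (bexp_cauchy h0.le h1.le _ _).trans ?_
    simp only [hG, hf.bdiff_sq, ← pow_mul, Nat.reduceMul]
    exact mul_le_mul_of_nonneg_left hq4 hI0
  have hX : M ^ 2 ≤ I * bexp p fun x => G x * q x ^ 2 :=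
    (pow_le_pow_left₀ hM0 hGq 2).trans hc1
  have h4 : M ^ 2 * M ^ 2 ≤ I ^ 3 * M ^ 2 := by
    have := pow_le_pow_left₀ (sq_nonneg M) hX 2
    nlinarith [mul_le_mul_of_nonneg_left hc2 (sq_nonneg I)]
  rcases hM0.eq_or_lt with h | h
  · rw [← h]; positivity
  · have h5 : M ^ 2 ≤ I ^ 3 := le_of_mul_le_mul_right h4 (by positivity)
    refine le_of_sq_le_sq ?_ (by positivity)
    rw [mul_pow, Real.sq_sqrt hI0]
    linarith [h5, (by ring : I ^ 2 * I = I ^ 3)]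

/-- A form of the Kahn–Kalai–Linial inequality: Fourier weight below level `K` is controlled by
hypercontractivity, and weight above level `K` by the total influence. -/
lemma kkl {p ρ : ℝ} (h0 : 0 < p) (h1 : p < 1) (hρ0 : 0 < ρ)
    (hρ : ρ ≤ Real.sqrt (p * (1 - p)) / 2) {f : (ι → Bool) → ℝ} (hf : MonoBool f)
    (K : ℕ) (hK : 0 < K) :
    bexp p f * (1 - bexp p f) ≤
      ((ρ ^ 2) ^ K)⁻¹ * ∑ i, bexp p (bdiff i f) * Real.sqrt (bexp p (bdiff i f)) +
        (∑ i, bexp p (bdiff i f)) / K := by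
  have hρ1 : ρ ^ 2 ≤ 1 := by
    have h2 : Real.sqrt (p * (1 - p)) ≤ 1 := Real.sqrt_le_one.mpr (by nlinarith)
    nlinarith
  have hP := parseval h0 h1 f
  have hff : (bexp p fun x => f x ^ 2) = bexp p f := by
    congr 1; funext x
    rcases hf.1 x with h | h <;> rw [h] <;> norm_num
  rw [hff, ← Finset.add_sum_erase univ _ (Finset.mem_univ ∅), bhat_empty] at hP
  have hV : bexp p f * (1 - bexp p f) = ∑ S ∈ univ.erase ∅, bhat p f S ^ 2 := by linarith
  have hA : ∑ S : Finset ι, (S.card : ℝ) * ((ρ ^ 2) ^ S.card * bhat p f S ^ 2) ≤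
      ∑ i, bexp p (bdiff i f) * Real.sqrt (bexp p (bdiff i f)) := by
    refine le_trans (le_of_eq ?_) (Finset.sum_le_sum fun i _ => sum_rho_bhat_le h0 h1 hρ0.le hρ hf i)
    rw [Finset.sum_comm]
    refine Finset.sum_congr rfl fun S _ => ?_
    rw [← Finset.sum_filter, Finset.sum_const, nsmul_eq_mul]
    simp
  have hW : ∑ S : Finset ι, (S.card : ℝ) * bhat p f S ^ 2 ≤ ∑ i, bexp p (bdiff i f) := by
    refine le_trans (le_of_eq ?_) (Finset.sum_le_sum fun i _ => sum_bhat_le h0 h1 hf i)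
    rw [Finset.sum_comm]
    refine Finset.sum_congr rfl fun S _ => ?_
    rw [← Finset.sum_filter, Finset.sum_const, nsmul_eq_mul]
    simp
  have hKR : (0 : ℝ) < K := by exact_mod_cast hK
  have hpk : 0 < (ρ ^ 2) ^ K := by positivity
  calc bexp p f * (1 - bexp p f) = ∑ S ∈ univ.erase ∅, bhat p f S ^ 2 := hV
    _ ≤ ∑ S ∈ univ.erase ∅, (((ρ ^ 2) ^ K)⁻¹ * ((S.card : ℝ) * ((ρ ^ 2) ^ S.card * bhat p f S ^ 2))
          + ((S.card : ℝ) * bhat p f S ^ 2) / K) := by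
        refine Finset.sum_le_sum fun S hS => ?_
        have hS1 : 1 ≤ (S.card : ℝ) := by
          have : S.card ≠ 0 := by simpa using Finset.ne_of_mem_erase hS
          exact_mod_cast Nat.one_le_iff_ne_zero.mpr this
        set y := bhat p f S ^ 2 with hy
        have hy0 : 0 ≤ y := sq_nonneg _
        rcases le_total S.card K with h | h
        · have h2 : (ρ ^ 2) ^ K ≤ (ρ ^ 2) ^ S.card := pow_le_pow_of_le_one (by positivity) hρ1 h
          have h3 : y ≤ ((ρ ^ 2) ^ K)⁻¹ * ((S.card : ℝ) * ((ρ ^ 2) ^ S.card * y)) := by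
            rw [inv_mul_eq_div, le_div_iff₀ hpk]
            have : y * (ρ ^ 2) ^ K ≤ (ρ ^ 2) ^ S.card * y := by nlinarith
            have h4 : 0 ≤ (ρ ^ 2) ^ S.card * y := by positivity
            nlinarith
          have h4 : 0 ≤ (S.card : ℝ) * y / K := by positivity
          linarith
        · have h3 : y ≤ (S.card : ℝ) * y / K := by
            rw [le_div_iff₀ hKR]
            have : (K : ℝ) ≤ S.card := by exact_mod_cast h
            nlinarith
          have h4 : 0 ≤ ((ρ ^ 2) ^ K)⁻¹ * ((S.card : ℝ) * ((ρ ^ 2) ^ S.card * y)) := by positivity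
          linarith
    _ ≤ ∑ S : Finset ι, (((ρ ^ 2) ^ K)⁻¹ * ((S.card : ℝ) * ((ρ ^ 2) ^ S.card * bhat p f S ^ 2))
          + ((S.card : ℝ) * bhat p f S ^ 2) / K) :=
        Finset.sum_le_sum_of_subset_of_nonneg (Finset.subset_univ _)
          fun S _ _ => by positivity
    _ ≤ _ := by
        rw [Finset.sum_add_distrib, ← Finset.mul_sum, ← Finset.sum_div]
        gcongr

end Influence

/-! ### Sharp threshold -/

section Threshold

variable {ι : Type} [Fintype ι] [DecidableEq ι]

lemma bexp_monotoneOn {f : (ι → Bool) → ℝ} (hf : MonoBool f) :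
    MonotoneOn (fun p => bexp p f) (Set.Icc 0 1) := by
  refine monotoneOn_of_deriv_nonneg (convex_Icc 0 1)
    (fun p _ => (bexp_hasDerivAt p f).continuousAt.continuousWithinAt)
    (fun p _ => (bexp_hasDerivAt p f).differentiableAt.differentiableWithinAt) ?_
  intro p hp
  rw [interior_Icc] at hp
  rw [(bexp_hasDerivAt p f).deriv]
  exact Finset.sum_nonneg fun i _ => bexp_nonneg hp.1.le hp.2.le (hf.bdiff_nonneg i)

lemma MonoBool.bexp_mem {f : (ι → Bool) → ℝ} (hf : MonoBool f) {p : ℝ} (h0 : 0 ≤ p) (h1 : p ≤ 1) :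
    0 ≤ bexp p f ∧ bexp p f ≤ 1 := by
  constructor
  · exact bexp_nonneg h0 h1 fun x => by rcases hf.1 x with h | h <;> rw [h]; norm_num
  · rw [← bexp_one (ι := ι) p]
    exact bexp_mono h0 h1 fun x => by rcases hf.1 x with h | h <;> rw [h]; norm_num

/-- The intersection of `k` independent random sets with parameter `p` has parameter `p ^ k`, and
it lies in an up-set only if all `k` sets do. -/
lemma bexp_pow_le {f : (ι → Bool) → ℝ} (hf : MonoBool f) {p : ℝ} (h0 : 0 ≤ p) (h1 : p ≤ 1)
    (k : ℕ) : bexp (p ^ k) f ≤ bexp p f ^ k := by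
  induction k with
  | zero => simpa using (hf.bexp_mem zero_le_one le_rfl).2
  | succ k ih =>
    rw [pow_succ', pow_succ', ← bexp_inter]
    have hle : ∀ x y : ι → Bool, (f fun i => x i && y i) ≤ f x * f y := by
      intro x y
      have e1 : (f fun i => x i && y i) ≤ f x := hf.2 fun i => by
        change (x i && y i) ≤ x i
        cases x i <;> simp
      have e2 : (f fun i => x i && y i) ≤ f y := hf.2 fun i => by
        change (x i && y i) ≤ y i
        cases x i <;> simp
      rcases hf.1 x with h | h <;> rcases hf.1 y with h' | h' <;> rw [h] at e1 ⊢ <;>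
        rw [h'] at e2 ⊢ <;> linarith
    have hk0 : 0 ≤ p ^ k := pow_nonneg h0 k
    have hk1 : p ^ k ≤ 1 := pow_le_one₀ h0 h1
    calc (bexp p fun x => bexp (p ^ k) fun y => f fun i => x i && y i)
        ≤ bexp p fun x => bexp (p ^ k) fun y => f x * f y :=
          bexp_mono h0 h1 fun x => bexp_mono hk0 hk1 fun y => hle x y
      _ = bexp p f * bexp (p ^ k) f := by
          simp only [bexp_const_mul]
          simp only [mul_comm _ (bexp (p ^ k) f), bexp_const_mul]
      _ ≤ _ := mul_le_mul_of_nonneg_left ih (hf.bexp_mem h0 h1).1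

/-- If all influences are comparable, the total influence is at least of order `log n` times the
variance. -/
lemma total_influence_ge {ρ : ℝ} (hρ0 : 0 < ρ) (hρ1 : ρ < 1) :
    ∃ c0 : ℝ, 0 < c0 ∧ ∃ N : ℕ, ∀ (ι : Type) [Fintype ι] [DecidableEq ι], N ≤ Fintype.card ι →
      ∀ p : ℝ, 0 < p → p < 1 → ρ ≤ Real.sqrt (p * (1 - p)) / 2 →
      ∀ f : (ι → Bool) → ℝ, MonoBool f →
      (∀ i, bexp p (bdiff i f) ≤ 2 * (∑ j, bexp p (bdiff j f)) / Fintype.card ι) →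
      c0 * Real.log (Fintype.card ι) * (bexp p f * (1 - bexp p f)) ≤ ∑ j, bexp p (bdiff j f) := by
  set L := -Real.log (ρ ^ 2) with hL
  have hL0 : 0 < L := by
    have : Real.log (ρ ^ 2) < 0 := Real.log_neg (by positivity) (by nlinarith)
    linarith
  refine ⟨1 / (1 + 8 * L), by positivity, ⌈Real.exp (max 768 (8 * L))⌉₊, ?_⟩
  intro ι _ _ hN p h0 h1 hρ f hf hinf
  set n : ℝ := (Fintype.card ι : ℝ) with hn
  set J := ∑ j, bexp p (bdiff j f) with hJ
  set t := Real.log n with ht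
  have hexpn : Real.exp (max 768 (8 * L)) ≤ n := (Nat.le_ceil _).trans (by rw [hn]; exact_mod_cast hN)
  have hn0 : 0 < n := (Real.exp_pos _).trans_le hexpn
  have htmax : max 768 (8 * L) ≤ t := (Real.le_log_iff_exp_le hn0).mpr hexpn
  have ht1 : 768 ≤ t := (le_max_left _ _).trans htmax
  have ht2 : 8 * L ≤ t := (le_max_right _ _).trans htmax
  have hI0 : ∀ i, 0 ≤ bexp p (bdiff i f) := fun i => bexp_nonneg h0.le h1.le (hf.bdiff_nonneg i)
  have hJ0 : 0 ≤ J := Finset.sum_nonneg fun i _ => hI0 i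
  obtain ⟨hf0, hf1⟩ := hf.bexp_mem h0.le h1.le
  set V := bexp p f * (1 - bexp p f) with hV
  have hV1 : V ≤ 1 := by nlinarith
  have hV0 : 0 ≤ V := mul_nonneg hf0 (by linarith)
  rw [div_mul_eq_mul_div, one_mul, div_mul_eq_mul_div, div_le_iff₀ (by positivity)]
  rcases le_or_gt t J with hcase | hcase
  · nlinarith
  -- the truncation level, chosen so that `ρ ^ (-2 K) ≤ n ^ (1/4)`
  set K := ⌊t / (4 * L)⌋₊ with hK
  have hy2 : 2 ≤ t / (4 * L) := by rw [le_div_iff₀ (by positivity)]; linarith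
  have hKle : (K : ℝ) ≤ t / (4 * L) := Nat.floor_le (by linarith)
  have hKge : t / (8 * L) ≤ K := by
    have h3 := Nat.lt_floor_add_one (t / (4 * L))
    have h4 : t / (8 * L) = (t / (4 * L)) / 2 := by field_simp; norm_num
    rw [h4]
    linarith
  have hK0 : 0 < K := Nat.floor_pos.mpr (by linarith)
  have hKR : (0 : ℝ) < K := by exact_mod_cast hK0
  have hmain := kkl h0 h1 hρ0 hρ hf K hK0
  have hexp : ((ρ ^ 2) ^ K)⁻¹ ≤ Real.exp (t / 4) := by
    have e1 : ((ρ ^ 2) ^ K)⁻¹ = Real.exp (K * L) := by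
      rw [hL, mul_neg, Real.exp_neg, mul_comm, Real.exp_mul, Real.exp_log (by positivity),
        Real.rpow_natCast]
    rw [e1]
    refine Real.exp_le_exp.mpr ?_
    have := mul_le_mul_of_nonneg_right hKle hL0.le
    refine this.trans (le_of_eq ?_)
    field_simp
  have hsum : ∑ i, bexp p (bdiff i f) * Real.sqrt (bexp p (bdiff i f)) ≤
      J * Real.sqrt (2 * J / n) := by
    rw [hJ, Finset.sum_mul]
    exact Finset.sum_le_sum fun i _ =>
      mul_le_mul_of_nonneg_left (Real.sqrt_le_sqrt (hinf i)) (hI0 i)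
  have hsmall : Real.exp (t / 4) * Real.sqrt (2 * J / n) ≤ 1 / t := by
    refine le_of_sq_le_sq ?_ (by positivity)
    rw [mul_pow, Real.sq_sqrt (by positivity), ← Real.exp_nat_mul]
    have hnt : n = Real.exp (t / 2) * Real.exp (t / 2) := by
      rw [← Real.exp_add, add_halves, Real.exp_log hn0]
    have h24 : (2 * (t / 4) : ℝ) = t / 2 := by ring
    have h5 : 2 * t ^ 3 ≤ Real.exp (t / 2) := by
      have := Real.pow_div_factorial_le_exp (t / 2) (by linarith) 4
      refine le_trans ?_ this
      norm_num [Nat.factorial]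
      have h6 : 0 ≤ t ^ 3 := by positivity
      nlinarith
    push_cast
    rw [h24, hnt, div_pow, one_pow, le_div_iff₀ (by positivity)]
    have h7 := Real.exp_pos (t / 2)
    have h8 : Real.exp (t / 2) * (2 * J / (Real.exp (t / 2) * Real.exp (t / 2))) * t ^ 2
        = 2 * J * t ^ 2 / Real.exp (t / 2) := by field_simp
    rw [h8, div_le_one h7]
    nlinarith [sq_nonneg t]
  have hA : ((ρ ^ 2) ^ K)⁻¹ * ∑ i, bexp p (bdiff i f) * Real.sqrt (bexp p (bdiff i f)) ≤ J / t := by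
    calc _ ≤ Real.exp (t / 4) * (J * Real.sqrt (2 * J / n)) := by
            refine mul_le_mul hexp hsum ?_ (Real.exp_pos _).le
            exact Finset.sum_nonneg fun i _ => mul_nonneg (hI0 i) (Real.sqrt_nonneg _)
      _ = J * (Real.exp (t / 4) * Real.sqrt (2 * J / n)) := by ring
      _ ≤ J * (1 / t) := mul_le_mul_of_nonneg_left hsmall hJ0
      _ = J / t := by ring
  have hB : J / K ≤ J * (8 * L) / t := by
    have h9 : J / K ≤ J / (t / (8 * L)) :=
      div_le_div_of_nonneg_left hJ0 (by positivity) hKge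
    refine h9.trans (le_of_eq ?_)
    field_simp
  have hfin : V ≤ (J + J * (8 * L)) / t := by
    rw [add_div]; linarith
  rw [le_div_iff₀ (by linarith)] at hfin
  linarith

/-- Polynomial decay below the threshold, by integrating the differential inequality
`h' ≥ c log n · h (1 - h)`. -/
lemma sharp_threshold {p0 : ℝ} (hp0 : 0 < p0) (hp1 : p0 ≤ 1 / 2) :
    ∃ ε : ℝ, 0 < ε ∧ ∃ N : ℕ, ∀ (ι : Type) [Fintype ι] [DecidableEq ι], N ≤ Fintype.card ι →
      ∀ f : (ι → Bool) → ℝ, MonoBool f →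
      (∀ p i, 0 < p → p < 1 →
        bexp p (bdiff i f) ≤ 2 * (∑ j, bexp p (bdiff j f)) / Fintype.card ι) →
      bexp p0 f ≤ 1 / 2 →
      bexp (p0 / 2) f ≤ Real.exp (-(ε * Real.log (Fintype.card ι))) := by
  obtain ⟨c0, hc0, N, hN⟩ := total_influence_ge (ρ := p0 / 8) (by positivity) (by linarith)
  refine ⟨c0 * p0 / 4, by positivity, max N 1, ?_⟩
  intro ι _ _ hcard f hf hinf hhalf
  have hcard1 : 1 ≤ Fintype.card ι := (le_max_right _ _).trans hcard
  have hlog : 0 ≤ Real.log (Fintype.card ι) := Real.log_nonneg (by exact_mod_cast hcard1)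
  set κ := c0 / 2 * Real.log (Fintype.card ι) with hκ
  have hder : ∀ p, HasDerivAt (fun q => bexp q f * Real.exp (-(κ * q)))
      ((∑ i, bexp p (bdiff i f)) * Real.exp (-(κ * p)) +
        bexp p f * (Real.exp (-(κ * p)) * (-κ))) p := by
    intro p
    refine (bexp_hasDerivAt p f).mul ?_
    have := ((hasDerivAt_id' p).const_mul κ).neg.exp
    simpa using this
  have hmono : MonotoneOn (fun q => bexp q f * Real.exp (-(κ * q))) (Set.Icc (p0 / 2) p0) := by
    refine monotoneOn_of_deriv_nonneg (convex_Icc _ _)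
      (fun p _ => (hder p).continuousAt.continuousWithinAt)
      (fun p _ => (hder p).differentiableAt.differentiableWithinAt) ?_
    intro p hp
    rw [interior_Icc] at hp
    rw [(hder p).deriv]
    have hpp : 0 < p := by linarith [hp.1]
    have hpp1 : p < 1 := by linarith [hp.2]
    have hρ : p0 / 8 ≤ Real.sqrt (p * (1 - p)) / 2 := by
      have : p0 / 4 ≤ Real.sqrt (p * (1 - p)) := by
        refine Real.le_sqrt_of_sq_le ?_
        nlinarith [hp.1, hp.2]
      linarith
    have h1 := hN ι ((le_max_left _ _).trans hcard) p hpp hpp1 hρ f hf (fun i => hinf p i hpp hpp1)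
    have h2 : bexp p f ≤ 1 / 2 := le_trans
      (bexp_monotoneOn hf ⟨hpp.le, hpp1.le⟩ ⟨hp0.le, by linarith⟩ hp.2.le) hhalf
    have h3 := (hf.bexp_mem hpp.le hpp1.le).1
    have h4 : κ * bexp p f ≤ ∑ i, bexp p (bdiff i f) := by
      refine le_trans ?_ h1
      have : bexp p f / 2 ≤ bexp p f * (1 - bexp p f) := by nlinarith
      have h5 := mul_le_mul_of_nonneg_left this (mul_nonneg hc0.le hlog)
      rw [hκ]
      linarith
    have h5 := Real.exp_pos (-(κ * p))
    nlinarith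
  have hfin := hmono ⟨le_rfl, by linarith⟩ ⟨by linarith, le_rfl⟩ (by linarith : p0 / 2 ≤ p0)
  simp only at hfin
  have hb : bexp (p0 / 2) f * Real.exp (-(κ * (p0 / 2))) ≤ Real.exp (-(κ * p0)) := by
    refine hfin.trans ?_
    have := Real.exp_pos (-(κ * p0))
    nlinarith
  have e : Real.exp (-(κ * p0)) =
      Real.exp (-(c0 * p0 / 4 * Real.log (Fintype.card ι))) * Real.exp (-(κ * (p0 / 2))) := by
    rw [← Real.exp_add]; congr 1; rw [hκ]; ring
  rw [e] at hb
  exact le_of_mul_le_mul_right hb (Real.exp_pos _)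

end Threshold

/-! ### Weight enumerators and random shortenings -/

section Code

variable {ι : Type} [Fintype ι] [DecidableEq ι]

open scoped Classical in
/-- The codewords of `C` as a finite set. -/
noncomputable def codeFin (C : Submodule (ZMod 2) (ι → ZMod 2)) : Finset (ι → ZMod 2) :=
  univ.filter fun c => c ∈ C

lemma mem_codeFin {C : Submodule (ZMod 2) (ι → ZMod 2)} {c : ι → ZMod 2} :
    c ∈ codeFin C ↔ c ∈ C := by simp [codeFin]

/-- The monomial `∏_{i ∈ supp c} t_i`. -/
def cmon (c : ι → ZMod 2) (t : ι → ℝ) : ℝ := ∏ i, if c i = 0 then 1 else t i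

/-- The multivariate weight enumerator `∑_{c ∈ C} ∏_{i ∈ supp c} t_i`. Setting `t_i = 0` shortens
the code at `i`, and setting `t_i = 1` punctures it. -/
noncomputable def cenum (C : Submodule (ZMod 2) (ι → ZMod 2)) (t : ι → ℝ) : ℝ :=
  ∑ c ∈ codeFin C, cmon c t

lemma cmon_update (c : ι → ZMod 2) (t : ι → ℝ) (i : ι) (s : ℝ) :
    cmon c (Function.update t i s) =
      (if c i = 0 then 1 else s) * ∏ j ∈ univ.erase i, if c j = 0 then 1 else t j := by
  unfold cmon
  rw [← Finset.mul_prod_erase univ _ (Finset.mem_univ i), Function.update_self]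
  congr 1
  refine Finset.prod_congr rfl fun j hj => ?_
  rw [Function.update_of_ne (Finset.ne_of_mem_erase hj)]

lemma cenum_update (C : Submodule (ZMod 2) (ι → ZMod 2)) (t : ι → ℝ) (i : ι) (s : ℝ) :
    cenum C (Function.update t i s) =
      (1 - s) * cenum C (Function.update t i 0) + s * cenum C (Function.update t i 1) := by
  unfold cenum
  rw [Finset.mul_sum, Finset.mul_sum, ← Finset.sum_add_distrib]
  refine Finset.sum_congr rfl fun c _ => ?_
  simp only [cmon_update]
  split_ifs <;> ring

lemma cmon_mono {c : ι → ZMod 2} {t s : ι → ℝ} (h0 : ∀ i, 0 ≤ t i) (h : ∀ i, t i ≤ s i) :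
    cmon c t ≤ cmon c s := by
  unfold cmon
  refine Finset.prod_le_prod (fun i _ => ?_) (fun i _ => ?_)
  · split_ifs; exacts [zero_le_one, h0 i]
  · split_ifs; exacts [le_rfl, h i]

lemma cmon_nonneg {c : ι → ZMod 2} {t : ι → ℝ} (h0 : ∀ i, 0 ≤ t i) : 0 ≤ cmon c t := by
  unfold cmon
  refine Finset.prod_nonneg fun i _ => ?_
  split_ifs; exacts [zero_le_one, h0 i]

lemma cenum_mono (C : Submodule (ZMod 2) (ι → ZMod 2)) {t s : ι → ℝ} (h0 : ∀ i, 0 ≤ t i)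
    (h : ∀ i, t i ≤ s i) : cenum C t ≤ cenum C s :=
  Finset.sum_le_sum fun _ _ => cmon_mono h0 h

lemma one_le_cenum (C : Submodule (ZMod 2) (ι → ZMod 2)) {t : ι → ℝ} (h0 : ∀ i, 0 ≤ t i) :
    1 ≤ cenum C t := by
  have h := Finset.single_le_sum (f := fun c => cmon c t) (fun c _ => cmon_nonneg h0)
    (mem_codeFin.mpr C.zero_mem)
  have h1 : cmon (0 : ι → ZMod 2) t = 1 := by simp [cmon]
  rw [h1] at h
  exact h

/-- At a sign vector, the enumerator is a character sum over `C`, hence nonnegative. -/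
lemma cenum_sign_nonneg (C : Submodule (ZMod 2) (ι → ZMod 2)) {t : ι → ℝ}
    (ht : ∀ i, t i = 1 ∨ t i = -1) : 0 ≤ cenum C t := by
  have hmul : ∀ c d : ι → ZMod 2, cmon (c + d) t = cmon c t * cmon d t := by
    intro c d
    unfold cmon
    rw [← Finset.prod_mul_distrib]
    refine Finset.prod_congr rfl fun i _ => ?_
    have hz : ∀ a b : ZMod 2, ∀ s : ℝ, s * s = 1 → (if a + b = 0 then (1 : ℝ) else s) =
        (if a = 0 then 1 else s) * (if b = 0 then 1 else s) := by
      intro a b s hs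
      have h01 : ∀ a : ZMod 2, a = 0 ∨ a = 1 := by decide
      have h11 : (1 : ZMod 2) + 1 = 0 := by decide
      rcases h01 a with rfl | rfl <;> rcases h01 b with rfl | rfl <;> simp [hs, h11]
    refine hz _ _ _ ?_
    rcases ht i with h | h <;> rw [h] <;> norm_num
  have hshift : ∀ d ∈ codeFin C, ∑ c ∈ codeFin C, cmon (c + d) t = cenum C t := by
    intro d hd
    unfold cenum
    refine Finset.sum_nbij' (fun c => c + d) (fun c => c - d) ?_ ?_ ?_ ?_ ?_
    · intro c hc
      exact mem_codeFin.mpr (C.add_mem (mem_codeFin.mp hc) (mem_codeFin.mp hd))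
    · intro c hc
      exact mem_codeFin.mpr (C.sub_mem (mem_codeFin.mp hc) (mem_codeFin.mp hd))
    · intro c _; simp
    · intro c _; simp
    · intro c _; rfl
  have hsq : cenum C t * cenum C t = (codeFin C).card * cenum C t := by
    conv_lhs => rw [cenum, Finset.sum_mul_sum, Finset.sum_comm]
    simp only [← hmul]
    rw [Finset.sum_congr rfl hshift, Finset.sum_const, nsmul_eq_mul]
  have hcard : (0 : ℝ) < (codeFin C).card := by
    exact_mod_cast Finset.card_pos.mpr ⟨0, mem_codeFin.mpr C.zero_mem⟩
  by_contra hneg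
  push Not at hneg
  nlinarith [mul_pos_of_neg_of_neg hneg hneg]

/-- The enumerator is affine in each variable, so nonnegativity extends from the vertices of the
cube `[-1, 1]^ι` to the whole cube. -/
lemma cenum_nonneg (C : Submodule (ZMod 2) (ι → ZMod 2)) {t : ι → ℝ}
    (ht : ∀ i, -1 ≤ t i ∧ t i ≤ 1) : 0 ≤ cenum C t := by
  have key : ∀ J : Finset ι, ∀ t : ι → ℝ, (∀ i, -1 ≤ t i ∧ t i ≤ 1) →
      (∀ i, i ∉ J → t i = 1 ∨ t i = -1) → 0 ≤ cenum C t := by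
    intro J
    induction J using Finset.induction_on with
    | empty => exact fun t _ h => cenum_sign_nonneg C fun i => h i (Finset.notMem_empty i)
    | insert i J hi ih =>
      intro t ht hJ
      have hs : ∀ s : ℝ, s = 1 ∨ s = -1 → 0 ≤ cenum C (Function.update t i s) := by
        intro s hs
        refine ih _ ?_ ?_
        · intro j
          rcases eq_or_ne j i with rfl | h
          · rw [Function.update_self]
            rcases hs with h | h <;> rw [h] <;> norm_num
          · rw [Function.update_of_ne h]; exact ht j
        · intro j hj
          rcases eq_or_ne j i with rfl | h
          · rw [Function.update_self]; exact hs
          · rw [Function.update_of_ne h]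
            exact hJ j (by simp [h, hj])
      have h1 := hs 1 (Or.inl rfl)
      have h2 := hs (-1) (Or.inr rfl)
      have h3 := cenum_update C t i (-1)
      have h4 := cenum_update C t i (t i)
      rw [Function.update_eq_self] at h4
      have hti := ht i
      have h5 : cenum C t = (1 + t i) / 2 * cenum C (Function.update t i 1) +
          (1 - t i) / 2 * cenum C (Function.update t i (-1)) := by
        rw [h3, h4]; ring
      rw [h5]
      have : 0 ≤ (1 + t i) / 2 := by linarith
      have : 0 ≤ (1 - t i) / 2 := by linarith
      positivity
  exact key univ t ht fun i hi => absurd (Finset.mem_univ i) hi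

/-- One-coordinate interpolation between shortening and puncturing, with `θ = 2 ^ l - 1`. -/
lemma log_cenum_update_le (C : Submodule (ZMod 2) (ι → ZMod 2)) {l : ℝ} (hl0 : 0 ≤ l) (hl1 : l ≤ 1)
    {t : ι → ℝ} (ht : ∀ i, 0 ≤ t i ∧ t i ≤ 1) (i : ι) :
    Real.log (cenum C (Function.update t i ((2 : ℝ) ^ l - 1))) ≤
      l * Real.log (cenum C (Function.update t i 1)) +
        (1 - l) * Real.log (cenum C (Function.update t i 0)) := by
  have hnn : ∀ s : ℝ, 0 ≤ s → ∀ j, 0 ≤ Function.update t i s j := by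
    intro s hs j
    rcases eq_or_ne j i with rfl | h
    · rwa [Function.update_self]
    · rw [Function.update_of_ne h]; exact (ht j).1
  set u := cenum C (Function.update t i 0) with hu
  set w := cenum C (Function.update t i 1) with hw
  have hu1 : 1 ≤ u := one_le_cenum C (hnn 0 le_rfl)
  have hu0 : 0 < u := by linarith
  have hwu : u ≤ w := by
    refine cenum_mono C (hnn 0 le_rfl) fun j => ?_
    rcases eq_or_ne j i with rfl | h
    · simp
    · simp [Function.update_of_ne h]
  have hneg : 0 ≤ cenum C (Function.update t i (-1)) := by
    refine cenum_nonneg C fun j => ?_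
    rcases eq_or_ne j i with rfl | h
    · simp
    · rw [Function.update_of_ne h]; exact ⟨by linarith [(ht j).1], (ht j).2⟩
  rw [cenum_update] at hneg
  have hw2 : w ≤ 2 * u := by linarith
  rw [cenum_update, ← hu, ← hw]
  -- with `x = w / u - 1 ∈ [0, 1]`, concavity of `y ↦ y ^ l` gives `1 + θ x ≤ (1 + x) ^ l`
  set x := w / u - 1 with hx
  have hx0 : 0 ≤ x := by rw [hx, sub_nonneg, le_div_iff₀ hu0]; linarith
  have hx1 : x ≤ 1 := by
    have : w / u ≤ 2 := by rw [div_le_iff₀ hu0]; linarith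
    linarith
  have hwx : w = u * (1 + x) := by rw [hx]; field_simp; ring
  have hconc := (Real.concaveOn_rpow hl0 hl1).2 (x := 1) (by simp) (y := 2) (by simp)
    (by linarith : 0 ≤ 1 - x) hx0 (by ring)
  simp only [smul_eq_mul, Real.one_rpow, mul_one] at hconc
  have hpow : (1 : ℝ) ≤ 2 ^ l := Real.one_le_rpow (by norm_num) hl0
  have hA : (1 - ((2 : ℝ) ^ l - 1)) * u + ((2 : ℝ) ^ l - 1) * w =
      u * (1 + ((2 : ℝ) ^ l - 1) * x) := by rw [hwx]; ring
  have hpos : 0 < 1 + ((2 : ℝ) ^ l - 1) * x := by nlinarith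
  have hle : 1 + ((2 : ℝ) ^ l - 1) * x ≤ (1 + x) ^ l := by
    refine le_trans (le_of_eq (by ring)) (hconc.trans (le_of_eq ?_))
    congr 1; ring
  rw [hA, hwx, Real.log_mul hu0.ne' hpos.ne', Real.log_mul hu0.ne' (by positivity)]
  have hlog := Real.log_le_log hpos hle
  rw [Real.log_rpow (by linarith)] at hlog
  linarith

/-- The indicator vector of an erasure pattern. -/
def bind01 (x : ι → Bool) (i : ι) : ℝ := if x i then 1 else 0

/-- The weight enumerator at `θ = 2 ^ l - 1` is bounded by the expected log-size of the code
shortened to a random set of coordinates of density `l`. -/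
lemma log_cenum_le (C : Submodule (ZMod 2) (ι → ZMod 2)) {l : ℝ} (hl0 : 0 ≤ l) (hl1 : l ≤ 1) :
    Real.log (cenum C fun _ => (2 : ℝ) ^ l - 1) ≤
      bexp l fun x => Real.log (cenum C (bind01 x)) := by
  have hθ0 : 0 ≤ (2 : ℝ) ^ l - 1 := by
    have : (1 : ℝ) ≤ 2 ^ l := Real.one_le_rpow (by norm_num) hl0
    linarith
  have hθ1 : (2 : ℝ) ^ l - 1 ≤ 1 := by
    have : (2 : ℝ) ^ l ≤ 2 ^ (1 : ℝ) := Real.rpow_le_rpow_of_exponent_le (by norm_num) hl1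
    rw [Real.rpow_one] at this
    linarith
  have key : ∀ J : Finset ι, Real.log (cenum C fun _ => (2 : ℝ) ^ l - 1) ≤
      bexp l fun x => Real.log (cenum C fun i => if i ∈ J then bind01 x i else (2 : ℝ) ^ l - 1) := by
    intro J
    induction J using Finset.induction_on with
    | empty => simp [bexp_const]
    | insert i J hi ih =>
      refine ih.trans ?_
      rw [bexp_split l i (fun x => Real.log (cenum C fun j => if j ∈ insert i J then _ else _))]
      refine bexp_mono hl0 hl1 fun x => ?_
      set t : ι → ℝ := fun j => if j ∈ J then bind01 x j else (2 : ℝ) ^ l - 1 with ht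
      have h1 : t = Function.update t i ((2 : ℝ) ^ l - 1) := by
        have : t i = (2 : ℝ) ^ l - 1 := by simp [ht, hi]
        rw [← this, Function.update_eq_self]
      have h2 : ∀ b : Bool, (fun j => if j ∈ insert i J then bind01 (Function.update x i b) j
          else (2 : ℝ) ^ l - 1) = Function.update t i (if b then 1 else 0) := by
        intro b
        funext j
        rcases eq_or_ne j i with rfl | h
        · simp [bind01]
        · simp [bind01, h, ht]
      have hb : ∀ j, 0 ≤ t j ∧ t j ≤ 1 := by
        intro j
        simp only [ht, bind01]
        split_ifs <;> constructor <;> linarith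
      rw [h2, h2, h1]
      simpa using log_cenum_update_le C hl0 hl1 hb i
  simpa using key univ

end Code

/-! ### The EXIT function of a code -/

section Exit

variable {ι : Type} [Fintype ι] [DecidableEq ι]

open scoped Classical in
/-- The indicator that the `i`-th bit cannot be recovered from the other bits when the erased
positions are those where `x` is `true`: some codeword is nonzero at `i` and otherwise supported on
erased positions. -/
noncomputable def exitFun (C : Submodule (ZMod 2) (ι → ZMod 2)) (i : ι) (x : ι → Bool) : ℝ :=
  if ∃ c ∈ C, c i ≠ 0 ∧ ∀ j, j ≠ i → c j ≠ 0 → x j = true then 1 else 0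

lemma exitFun_monoBool (C : Submodule (ZMod 2) (ι → ZMod 2)) (i : ι) : MonoBool (exitFun C i) := by
  constructor
  · intro x
    unfold exitFun
    split_ifs <;> simp
  · intro x y hxy
    unfold exitFun
    split_ifs with h1 h2
    · exact le_rfl
    · exfalso
      obtain ⟨c, hc, hci, hcx⟩ := h1
      refine h2 ⟨c, hc, hci, fun j hj hcj => ?_⟩
      have h3 := hxy j
      rw [hcx j hj hcj] at h3
      exact top_le_iff.mp h3
    · exact zero_le_one
    · exact le_rfl

lemma bdiff_exitFun_self (C : Submodule (ZMod 2) (ι → ZMod 2)) (i : ι) (x : ι → Bool) :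
    bdiff i (exitFun C i) x = 0 := by
  have h : ∀ b, exitFun C i (Function.update x i b) = exitFun C i x := by
    intro b
    unfold exitFun
    congr 1
    refine propext (exists_congr fun c => and_congr_right fun _ => and_congr_right fun _ =>
      forall_congr' fun j => forall_congr' fun hj => ?_)
    rw [Function.update_of_ne hj]
  unfold bdiff
  rw [h, h, sub_self]

lemma exitFun_comp_perm {C : Submodule (ZMod 2) (ι → ZMod 2)} {π : Equiv.Perm ι}
    (hπ : PreservesCode C π) (i : ι) (x : ι → Bool) :
    exitFun C i (x ∘ π) = exitFun C (π i) x := by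
  unfold exitFun
  congr 1
  refine propext ⟨?_, ?_⟩
  · rintro ⟨c, hc, hci, hcx⟩
    refine ⟨c ∘ π.symm, ?_, by simpa using hci, ?_⟩
    · rw [hπ]
      have : (c ∘ π.symm) ∘ π = c := by ext j; simp
      rwa [this]
    · intro j hj hcj
      have := hcx (π.symm j) (fun h => hj (by rw [← h]; simp)) hcj
      simpa using this
  · rintro ⟨c, hc, hci, hcx⟩
    refine ⟨c ∘ π, (hπ c).mp hc, hci, ?_⟩
    intro j hj hcj
    exact hcx (π j) (fun h => hj (π.injective h)) hcj

lemma bdiff_exitFun_comp_perm {C : Submodule (ZMod 2) (ι → ZMod 2)} {π : Equiv.Perm ι}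
    (hπ : PreservesCode C π) (i j : ι) (x : ι → Bool) :
    bdiff j (exitFun C i) (x ∘ π) = bdiff (π j) (exitFun C (π i)) x := by
  have h : ∀ b, Function.update (x ∘ π) j b = (Function.update x (π j) b) ∘ π := by
    intro b
    funext k
    rcases eq_or_ne k j with rfl | hk
    · simp
    · simp [Function.update_of_ne hk, Function.update_of_ne (π.injective.ne hk)]
  simp only [bdiff, h, exitFun_comp_perm hπ]

lemma bexp_exitFun_eq {C : Submodule (ZMod 2) (ι → ZMod 2)} (hC : DoublyTransitive C)
    (p : ℝ) (i j : ι) : bexp p (exitFun C i) = bexp p (exitFun C j) := by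
  rcases eq_or_ne i j with rfl | hij
  · rfl
  obtain ⟨π, hπ, hi, -⟩ := hC i j j i hij hij.symm
  rw [← bexp_comp_perm p π (exitFun C i)]
  simp only [exitFun_comp_perm hπ, hi]

/-- Double transitivity makes all influences of the EXIT indicator at `i` equal, except the one at
`i` itself, which vanishes. -/
lemma influence_exitFun_le {C : Submodule (ZMod 2) (ι → ZMod 2)} (hC : DoublyTransitive C)
    (hcard : 2 ≤ Fintype.card ι) {p : ℝ} (h0 : 0 < p) (h1 : p < 1) (i j : ι) :
    bexp p (bdiff j (exitFun C i)) ≤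
      2 * (∑ k, bexp p (bdiff k (exitFun C i))) / Fintype.card ι := by
  have hI0 : ∀ k, 0 ≤ bexp p (bdiff k (exitFun C i)) :=
    fun k => bexp_nonneg h0.le h1.le ((exitFun_monoBool C i).bdiff_nonneg k)
  have hn : (2 : ℝ) ≤ Fintype.card ι := by exact_mod_cast hcard
  rw [le_div_iff₀ (by linarith)]
  rcases eq_or_ne j i with rfl | hj
  · have : bexp p (bdiff j (exitFun C j)) = 0 := by
      rw [← bexp_const (ι := ι) p 0]
      congr 1
      funext x
      exact bdiff_exitFun_self C j x
    rw [this, zero_mul]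
    exact mul_nonneg zero_le_two (Finset.sum_nonneg fun k _ => hI0 k)
  · have heq : ∀ k ∈ univ.erase i, bexp p (bdiff k (exitFun C i)) =
        bexp p (bdiff j (exitFun C i)) := by
      intro k hk
      obtain ⟨π, hπ, hi, hkj⟩ := hC i k i j (Finset.ne_of_mem_erase hk).symm hj.symm
      rw [← bexp_comp_perm p π (bdiff k (exitFun C i))]
      simp only [bdiff_exitFun_comp_perm hπ, hi, hkj]
    have hsum : ∑ k ∈ univ.erase i, bexp p (bdiff k (exitFun C i)) =
        (Fintype.card ι - 1 : ℝ) * bexp p (bdiff j (exitFun C i)) := by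
      rw [Finset.sum_congr rfl heq, Finset.sum_const, nsmul_eq_mul,
        Finset.card_erase_of_mem (Finset.mem_univ i), Finset.card_univ,
        Nat.cast_sub (by omega)]
      simp
    have hle : ∑ k ∈ univ.erase i, bexp p (bdiff k (exitFun C i)) ≤
        ∑ k, bexp p (bdiff k (exitFun C i)) :=
      Finset.sum_le_sum_of_subset_of_nonneg (Finset.subset_univ _) fun k _ _ => hI0 k
    nlinarith [hI0 j]

/-- The dimension of the subcode of words supported on the erased positions, written as the
base-two logarithm of its size. -/
noncomputable def dimf (C : Submodule (ZMod 2) (ι → ZMod 2)) (x : ι → Bool) : ℝ :=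
  Real.log (cenum C (bind01 x)) / Real.log 2

lemma cenum_bind01 (C : Submodule (ZMod 2) (ι → ZMod 2)) (x : ι → Bool) :
    cenum C (bind01 x) =
      ((codeFin C).filter fun c => ∀ i, c i ≠ 0 → x i = true).card := by
  rw [cenum, Finset.card_filter, Nat.cast_sum]
  refine Finset.sum_congr rfl fun c _ => ?_
  have : cmon c (bind01 x) = ∏ i, if (c i ≠ 0 → x i = true) then (1 : ℝ) else 0 := by
    unfold cmon bind01
    refine Finset.prod_congr rfl fun i _ => ?_
    by_cases h : c i = 0 <;> simp [h]
  rw [this, Finset.prod_ite_zero]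
  simp

/-- Erasing position `i` raises the dimension by the EXIT indicator. -/
lemma bdiff_dimf (C : Submodule (ZMod 2) (ι → ZMod 2)) (i : ι) (x : ι → Bool) :
    bdiff i (dimf C) x = exitFun C i x := by
  set A := (codeFin C).filter fun c => ∀ j, c j ≠ 0 → Function.update x i true j = true with hA
  have hmemA : ∀ c, c ∈ A ↔ c ∈ C ∧ ∀ j, j ≠ i → c j ≠ 0 → x j = true := by
    intro c
    rw [hA, Finset.mem_filter, mem_codeFin]
    refine and_congr_right fun _ => ⟨fun h j hj hcj => ?_, fun h j hcj => ?_⟩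
    · have := h j hcj
      rwa [Function.update_of_ne hj] at this
    · rcases eq_or_ne j i with rfl | hj
      · simp
      · rw [Function.update_of_ne hj]; exact h j hj hcj
  have hA0 : ((codeFin C).filter fun c => ∀ j, c j ≠ 0 → Function.update x i false j = true) =
      A.filter fun c => c i = 0 := by
    ext c
    rw [Finset.mem_filter, Finset.mem_filter, hmemA, mem_codeFin, and_assoc]
    refine and_congr_right fun _ => ⟨fun h => ⟨fun j hj hcj => ?_, ?_⟩, fun h j hcj => ?_⟩
    · have := h j hcj
      rwa [Function.update_of_ne hj] at this
    · by_contra hci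
      simpa using h i hci
    · have hj : j ≠ i := fun hji => hcj (hji ▸ h.2)
      rw [Function.update_of_ne hj]
      exact h.1 j hj hcj
  have hzero : (0 : ι → ZMod 2) ∈ A.filter fun c => c i = 0 := by
    rw [Finset.mem_filter, hmemA]
    exact ⟨⟨C.zero_mem, fun j _ h => absurd rfl h⟩, rfl⟩
  have hpos : (0 : ℝ) < (A.filter fun c => c i = 0).card := by
    exact_mod_cast Finset.card_pos.mpr ⟨0, hzero⟩
  have hlog2 : 0 < Real.log 2 := Real.log_pos (by norm_num)
  unfold bdiff dimf
  rw [cenum_bind01, cenum_bind01, hA0, ← hA]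
  unfold exitFun
  split_ifs with h
  · obtain ⟨d, hd, hdi, hdx⟩ := h
    have hbij : (A.filter fun c => ¬ c i = 0).card = (A.filter fun c => c i = 0).card := by
      have h11 : ∀ a b : ZMod 2, b ≠ 0 → (a ≠ 0 ↔ a + b = 0) := by decide
      have hdd : ∀ c : ι → ZMod 2, c + d + d = c := by
        intro c
        funext k
        have : ∀ a b : ZMod 2, a + b + b = a := by decide
        exact this _ _
      have hadd : ∀ c ∈ A, c + d ∈ A := by
        intro c hc
        rw [hmemA] at hc ⊢
        refine ⟨C.add_mem hc.1 hd, fun j hj hcj => ?_⟩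
        by_cases h0 : c j = 0
        · refine hdx j hj fun hdj => hcj ?_
          simp [h0, hdj]
        · exact hc.2 j hj h0
      refine Finset.card_nbij' (fun c => c + d) (fun c => c + d) ?_ ?_ ?_ ?_
      · intro c hc
        simp only [Finset.coe_filter, Set.mem_ofPred_eq] at hc ⊢
        exact ⟨hadd c hc.1, (h11 _ _ hdi).mp hc.2⟩
      · intro c hc
        simp only [Finset.coe_filter, Set.mem_ofPred_eq] at hc ⊢
        refine ⟨hadd c hc.1, (h11 _ _ hdi).mpr ?_⟩
        have := congrFun (hdd c) i
        simp only [Pi.add_apply] at this ⊢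
        rw [this, hc.2]
      · intro c _; exact hdd c
      · intro c _; exact hdd c
    have hcardA : (A.card : ℝ) = 2 * (A.filter fun c => c i = 0).card := by
      have := Finset.card_filter_add_card_filter_not (s := A) (fun c : ι → ZMod 2 => c i = 0)
      rw [hbij] at this
      rw [← this]; push_cast; ring
    rw [hcardA, Real.log_mul (by norm_num) hpos.ne']
    field_simp
    ring
  · have : (A.filter fun c => c i = 0) = A := by
      rw [Finset.filter_eq_self]
      intro c hc
      by_contra hci
      exact h ⟨c, ((hmemA c).mp hc).1, hci, ((hmemA c).mp hc).2⟩
    rw [this, sub_self]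

lemma dimf_nonneg (C : Submodule (ZMod 2) (ι → ZMod 2)) (x : ι → Bool) : 0 ≤ dimf C x := by
  refine div_nonneg (Real.log_nonneg (one_le_cenum C fun i => ?_)) (Real.log_nonneg (by norm_num))
  unfold bind01
  split_ifs <;> norm_num

lemma bexp_at_one (f : (ι → Bool) → ℝ) : bexp 1 f = f fun _ => true := by
  unfold bexp
  rw [Finset.sum_eq_single fun _ => true]
  · simp [bw]
  · intro x _ hx
    obtain ⟨i, hi⟩ := Function.ne_iff.mp hx
    rw [Finset.prod_eq_zero (Finset.mem_univ i), zero_mul]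
    simp [bw, hi]
  · simp

lemma bexp_at_zero (f : (ι → Bool) → ℝ) : bexp 0 f = f fun _ => false := by
  unfold bexp
  rw [Finset.sum_eq_single fun _ => false]
  · simp [bw]
  · intro x _ hx
    obtain ⟨i, hi⟩ := Function.ne_iff.mp hx
    rw [Finset.prod_eq_zero (Finset.mem_univ i), zero_mul]
    simp [bw, hi]
  · simp

lemma dimf_true (C : Submodule (ZMod 2) (ι → ZMod 2)) :
    dimf C (fun _ => true) = Module.finrank (ZMod 2) C := by
  have h1 : cenum C (bind01 fun _ : ι => true) = (2 : ℝ) ^ Module.finrank (ZMod 2) C := by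
    rw [cenum_bind01]
    have h2 : ((codeFin C).filter fun c => ∀ i, c i ≠ 0 → true = true).card = Nat.card C := by
      rw [Finset.filter_true_of_mem (fun c _ i _ => rfl), ← Nat.card_eq_finsetCard]
      exact Nat.card_congr (Equiv.subtypeEquivRight fun c => mem_codeFin)
    rw [h2, Module.natCard_eq_pow_finrank (K := ZMod 2)]
    simp
  have hlog2 : 0 < Real.log 2 := Real.log_pos (by norm_num)
  rw [dimf, h1, Real.log_pow]
  field_simp

lemma dimf_false (C : Submodule (ZMod 2) (ι → ZMod 2)) : dimf C (fun _ => false) = 0 := by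
  have h1 : cenum C (bind01 fun _ : ι => false) = 1 := by
    rw [cenum_bind01]
    have : ((codeFin C).filter fun c => ∀ i, c i ≠ 0 → false = true) = {0} := by
      ext c
      rw [Finset.mem_filter, mem_codeFin, Finset.mem_singleton]
      constructor
      · rintro ⟨-, h⟩
        funext i
        by_contra hi
        simpa using h i hi
      · rintro rfl
        exact ⟨C.zero_mem, fun i h => absurd rfl h⟩
    rw [this]
    simp
  simp [dimf, h1]

/-- The area theorem in differential form. -/
lemma dimf_hasDerivAt {C : Submodule (ZMod 2) (ι → ZMod 2)} (hC : DoublyTransitive C)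
    (i : ι) (p : ℝ) :
    HasDerivAt (fun q => bexp q (dimf C)) (Fintype.card ι * bexp p (exitFun C i)) p := by
  have h := bexp_hasDerivAt p (dimf C)
  convert h using 1
  have : ∀ k, bexp p (bdiff k (dimf C)) = bexp p (exitFun C i) := by
    intro k
    rw [bexp_exitFun_eq hC p i k]
    congr 1
    funext x
    exact bdiff_dimf C k x
  simp [this]

/-- Between `a` and `b`, the expected dimension increases by at least `n h(a) (b - a)` and at most
`n h(b) (b - a)`, where `h` is the EXIT function. -/
lemma dimf_increment {C : Submodule (ZMod 2) (ι → ZMod 2)} (hC : DoublyTransitive C) (i : ι)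
    {a b : ℝ} (ha : 0 ≤ a) (hab : a < b) (hb : b ≤ 1) :
    Fintype.card ι * bexp a (exitFun C i) * (b - a) ≤ bexp b (dimf C) - bexp a (dimf C) ∧
    bexp b (dimf C) - bexp a (dimf C) ≤ Fintype.card ι * bexp b (exitFun C i) * (b - a) := by
  obtain ⟨q, hq, hqe⟩ := exists_hasDerivAt_eq_slope (fun q => bexp q (dimf C)) _ hab
    (fun q _ => (dimf_hasDerivAt hC i q).continuousAt.continuousWithinAt)
    (fun q _ => dimf_hasDerivAt hC i q)
  rw [eq_div_iff (by linarith)] at hqe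
  have hm := bexp_monotoneOn (exitFun_monoBool C i)
  have h1 : bexp a (exitFun C i) ≤ bexp q (exitFun C i) :=
    hm ⟨ha, by linarith⟩ ⟨by linarith [hq.1], by linarith [hq.2]⟩ hq.1.le
  have h2 : bexp q (exitFun C i) ≤ bexp b (exitFun C i) :=
    hm ⟨by linarith [hq.1], by linarith [hq.2]⟩ ⟨by linarith, hb⟩ hq.2.le
  rw [← hqe]
  have hba : 0 ≤ b - a := by linarith
  constructor <;> gcongr

end Exit

/-! ### The union bound on the binary symmetric channel -/

section Channel

variable {ι : Type} [Fintype ι] [DecidableEq ι]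

lemma prod_ite_hamming (a b : ℝ) (z : ι → ZMod 2) :
    ∏ i, (if z i = 0 then a else b) =
      b ^ hammingNorm z * a ^ (Fintype.card ι - hammingNorm z) := by
  rw [Finset.prod_ite, Finset.prod_const, Finset.prod_const, mul_comm]
  have h := Finset.card_filter_add_card_filter_not (s := (univ : Finset ι)) (fun i => z i = 0)
  have h2 : hammingNorm z = (univ.filter fun i => ¬ z i = 0).card := rfl
  rw [Finset.card_univ] at h
  congr 2
  omega

open scoped Classical in
/-- The Bhattacharyya union bound: a nonzero codeword `x` beats the transmitted word with
probability at most `∑_z √(μ(z) μ(z + x)) = (2 √(p (1 - p))) ^ w(x)`. -/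
lemma Perr_le_cenum (C : Submodule (ZMod 2) (ι → ZMod 2)) {p : ℝ} (h0 : 0 < p) (h1 : p < 1 / 2) :
    Perr C p ≤ cenum C (fun _ => 2 * Real.sqrt (p * (1 - p))) - 1 := by
  set a := Real.sqrt (1 - p) with ha
  set b := Real.sqrt p with hb
  have ha2 : a ^ 2 = 1 - p := Real.sq_sqrt (by linarith)
  have hb2 : b ^ 2 = p := Real.sq_sqrt h0.le
  have ha0 : 0 ≤ a := Real.sqrt_nonneg _
  have hb0 : 0 ≤ b := Real.sqrt_nonneg _
  have hba : b ≤ a := Real.sqrt_le_sqrt (by linarith)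
  set v : ZMod 2 → ℝ := fun s => if s = 0 then a else b with hv
  have hv0 : ∀ s, 0 ≤ v s := by
    intro s
    simp only [hv]
    split_ifs <;> assumption
  have hprod0 : ∀ z : ι → ZMod 2, 0 ≤ ∏ i, v (z i) :=
    fun z => Finset.prod_nonneg fun i _ => hv0 _
  have hanti : ∀ z y : ι → ZMod 2, hammingNorm y ≤ hammingNorm z →
      ∏ i, v (z i) ≤ ∏ i, v (y i) := by
    intro z y hyz
    simp only [hv]
    rw [prod_ite_hamming, prod_ite_hamming]
    have hz : hammingNorm z ≤ Fintype.card ι := hammingNorm_le_card_fintype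
    obtain ⟨d, hd⟩ := Nat.exists_eq_add_of_le hyz
    have e : Fintype.card ι - hammingNorm y = d + (Fintype.card ι - hammingNorm z) := by omega
    rw [e, hd, pow_add, pow_add, mul_assoc]
    gcongr
  have hmu : ∀ z : ι → ZMod 2, p ^ hammingNorm z * (1 - p) ^ (Fintype.card ι - hammingNorm z) =
      (∏ i, v (z i)) ^ 2 := by
    intro z
    simp only [hv]
    rw [prod_ite_hamming, mul_pow, ← pow_mul, ← pow_mul, mul_comm _ 2, mul_comm _ 2, pow_mul,
      pow_mul, ha2, hb2]
  have hterm : ∀ x : ι → ZMod 2, ∑ z : ι → ZMod 2, (∏ i, v (z i)) * ∏ i, v ((z + x) i) =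
      cmon x fun _ => 2 * Real.sqrt (p * (1 - p)) := by
    intro x
    have hs := Finset.prod_univ_sum (fun _ : ι => (Finset.univ : Finset (ZMod 2)))
      (fun i s => v s * v (s + x i))
    rw [Fintype.piFinset_univ] at hs
    simp only [← Finset.prod_mul_distrib, Pi.add_apply]
    rw [← hs]
    unfold cmon
    refine Finset.prod_congr rfl fun i _ => ?_
    have huniv : (univ : Finset (ZMod 2)) = {0, 1} := by decide
    have h01 : ∀ s : ZMod 2, s = 0 ∨ s = 1 := by decide
    have h11 : (1 : ZMod 2) + 1 = 0 := by decide
    rw [huniv, Finset.sum_pair (by decide)]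
    rcases h01 (x i) with h | h
    · rw [h]
      simp only [hv]
      simp
      nlinarith
    · rw [h, Real.sqrt_mul h0.le, ← ha, ← hb]
      simp [hv, h11]
      ring
  have hsplit : cenum C (fun _ => 2 * Real.sqrt (p * (1 - p))) - 1 =
      ∑ x ∈ (codeFin C).erase 0, cmon x fun _ => 2 * Real.sqrt (p * (1 - p)) := by
    rw [cenum, ← Finset.add_sum_erase _ _ (mem_codeFin.mpr C.zero_mem)]
    have : cmon (0 : ι → ZMod 2) (fun _ => 2 * Real.sqrt (p * (1 - p))) = 1 := by simp [cmon]
    rw [this]; ring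
  rw [hsplit, ← Finset.sum_congr rfl fun x _ => hterm x, Finset.sum_comm]
  have hP : Perr C p = ∑ z : ι → ZMod 2,
      if ∃ x ∈ C, x ≠ 0 ∧ hammingNorm (z + x) ≤ hammingNorm z then
        p ^ hammingNorm z * (1 - p) ^ (Fintype.card ι - hammingNorm z) else 0 := by
    unfold Perr
    congr!
  rw [hP]
  refine Finset.sum_le_sum fun z _ => ?_
  have hnn : ∀ x ∈ (codeFin C).erase 0, 0 ≤ (∏ i, v (z i)) * ∏ i, v ((z + x) i) :=
    fun x _ => mul_nonneg (hprod0 z) (hprod0 _)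
  split_ifs with h
  · obtain ⟨x, hx, hx0, hw⟩ := h
    rw [hmu]
    refine le_trans ?_ (Finset.single_le_sum hnn
      (Finset.mem_erase.mpr ⟨hx0, mem_codeFin.mpr hx⟩))
    rw [sq]
    exact mul_le_mul_of_nonneg_left (hanti _ _ hw) (hprod0 z)
  · exact Finset.sum_nonneg hnn

lemma Perr_nonneg (C : Submodule (ZMod 2) (ι → ZMod 2)) {p : ℝ} (h0 : 0 < p) (h1 : p < 1 / 2) :
    0 ≤ Perr C p := by
  unfold Perr
  refine Finset.sum_nonneg fun z _ => ?_
  have : 0 ≤ 1 - p := by linarith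
  split_ifs <;> positivity

end Channel

/-! ### Doubly transitive codes of rate bounded away from one -/

/-- For doubly transitive codes of rate at most `(1 + R) / 2`, the weight enumerator at some fixed
`θ > 0` tends to one. The value is `θ = 2 ^ l - 1`, where `l` is an erasure probability at which the
EXIT function is at most `n ^ (-2)`. -/
lemma exists_cenum_le {R : ℝ} (hR0 : 0 < R) (hR1 : R < 1) :
    ∃ θ : ℝ, 0 < θ ∧ ∃ N : ℕ, ∀ (ι : Type) [Fintype ι] [DecidableEq ι], N ≤ Fintype.card ι →
      ∀ C : Submodule (ZMod 2) (ι → ZMod 2), DoublyTransitive C → codeRate C ≤ (1 + R) / 2 →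
      cenum C (fun _ => θ) ≤ Real.exp (Real.log 2 / Fintype.card ι) := by
  set η := (2 + 2 * R) / (3 + R) with hη
  have hη0 : 0 < η := by positivity
  have hη1 : η < 1 := by rw [hη, div_lt_one (by linarith)]; linarith
  set p1 := (1 - R) / 4 with hp1
  have hp10 : 0 < p1 := by rw [hp1]; linarith
  have hp11 : p1 < 1 / 4 := by rw [hp1]; linarith
  obtain ⟨k, hk⟩ := exists_pow_lt_of_lt_one (by norm_num : (0 : ℝ) < 1 / 2) hη1
  have hk0 : k ≠ 0 := by
    rintro rfl
    norm_num at hk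
  set p0 := p1 ^ k with hp0
  have hp00 : 0 < p0 := by positivity
  have hp01 : p0 ≤ 1 / 2 := by
    have := pow_le_of_le_one hp10.le (by linarith : p1 ≤ 1) hk0
    linarith
  obtain ⟨ε, hε, N, hN⟩ := sharp_threshold hp00 hp01
  obtain ⟨m, hm⟩ := exists_nat_ge (2 / ε)
  have hm2 : 2 ≤ ε * m := by
    rw [div_le_iff₀ hε] at hm
    linarith
  set l := (p0 / 2) ^ m with hl
  have hl0 : 0 < l := by positivity
  have hl1 : l ≤ 1 := pow_le_one₀ (by positivity) (by linarith)
  refine ⟨(2 : ℝ) ^ l - 1, ?_, max N 2, ?_⟩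
  · have := Real.one_lt_rpow (by norm_num : (1 : ℝ) < 2) hl0
    linarith
  intro ι _ _ hcard C hC hrate
  have hcard2 : 2 ≤ Fintype.card ι := (le_max_right _ _).trans hcard
  have hnpos : (0 : ℝ) < Fintype.card ι := by exact_mod_cast (by omega : 0 < Fintype.card ι)
  obtain ⟨i⟩ : Nonempty ι := Fintype.card_pos_iff.mp (by omega)
  have hmono := exitFun_monoBool C i
  -- the area theorem bounds the EXIT function at `p1`
  have hs1 : bexp p1 (exitFun C i) ≤ η := by
    have h1 := (dimf_increment hC i hp10.le (by linarith : p1 < 1) le_rfl).1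
    have h2 : 0 ≤ bexp p1 (dimf C) :=
      bexp_nonneg hp10.le (by linarith) (dimf_nonneg C)
    rw [bexp_at_one, dimf_true] at h1
    have h3 : (Module.finrank (ZMod 2) C : ℝ) ≤ (1 + R) / 2 * Fintype.card ι := by
      rw [codeRate, div_le_iff₀ hnpos] at hrate
      exact hrate
    have h4 : bexp p1 (exitFun C i) * (1 - p1) ≤ (1 + R) / 2 := by
      refine le_of_mul_le_mul_left ?_ hnpos
      linarith
    have h5 : 1 - p1 = (3 + R) / 4 := by rw [hp1]; ring
    rw [hη, le_div_iff₀ (by linarith)]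
    rw [h5] at h4
    linarith
  have hs2 : bexp p0 (exitFun C i) ≤ 1 / 2 :=
    (bexp_pow_le hmono hp10.le (by linarith) k).trans <|
      (pow_le_pow_left₀ (hmono.bexp_mem hp10.le (by linarith)).1 hs1 k).trans hk.le
  have hs3 := hN ι ((le_max_left _ _).trans hcard) (exitFun C i) hmono
    (fun p j h0 h1 => influence_exitFun_le hC hcard2 h0 h1 i j) hs2
  have hlogn : 0 ≤ Real.log (Fintype.card ι) :=
    Real.log_nonneg (by exact_mod_cast (by omega : 1 ≤ Fintype.card ι))
  have hs4 : bexp l (exitFun C i) ≤ 1 / (Fintype.card ι : ℝ) ^ 2 := by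
    have hh0 : 0 ≤ p0 / 2 := by positivity
    have hh1 : p0 / 2 ≤ 1 := by linarith
    refine (bexp_pow_le hmono hh0 hh1 m).trans
      ((pow_le_pow_left₀ (hmono.bexp_mem hh0 hh1).1 hs3 m).trans ?_)
    rw [← Real.exp_nat_mul, one_div, ← Real.exp_log (by positivity : 0 < (Fintype.card ι : ℝ) ^ 2),
      ← Real.exp_neg, Real.log_pow]
    refine Real.exp_le_exp.mpr ?_
    push_cast
    nlinarith [mul_le_mul_of_nonneg_right hm2 hlogn]
  -- the expected dimension at erasure probability `l` is at most `1 / n`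
  have hs5 : bexp l (dimf C) ≤ 1 / Fintype.card ι := by
    have h1 := (dimf_increment hC i le_rfl hl0 hl1).2
    rw [bexp_at_zero, dimf_false, sub_zero, sub_zero] at h1
    calc bexp l (dimf C) ≤ Fintype.card ι * bexp l (exitFun C i) * l := h1
      _ ≤ Fintype.card ι * bexp l (exitFun C i) * 1 := by
          have := (hmono.bexp_mem hl0.le hl1).1
          gcongr
      _ ≤ Fintype.card ι * (1 / (Fintype.card ι : ℝ) ^ 2) * 1 := by gcongr
      _ = 1 / Fintype.card ι := by field_simp
  have hlog2 : 0 < Real.log 2 := Real.log_pos (by norm_num)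
  have hs6 := log_cenum_le C hl0.le hl1
  have hs7 : (bexp l fun x => Real.log (cenum C (bind01 x))) = Real.log 2 * bexp l (dimf C) := by
    rw [← bexp_const_mul]
    congr 1
    funext x
    rw [dimf]
    field_simp
  rw [hs7] at hs6
  have hθ0 : 0 ≤ (2 : ℝ) ^ l - 1 := by
    have := Real.one_le_rpow (by norm_num : (1 : ℝ) ≤ 2) hl0.le
    linarith
  have hpos := one_le_cenum C fun _ : ι => hθ0
  rw [← Real.log_le_iff_le_exp (by linarith)]
  refine hs6.trans ?_
  rw [div_eq_mul_one_div]
  gcongr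

/-- doubly transitive codes with minimal distance `≥ δ·n^c` decode errors
on BSC(p) w.h.p. for `p` below a critical threshold. -/
theorem doubly_transitive_min_dist_BSC (R c δ : ℝ) (hR0 : 0 < R) (hR1 : R < 1)
    (hc0 : 0 < c) (hc1 : c ≤ 1) (hδ : 0 < δ)
    (n : ℕ → ℕ) (hn : StrictMono n) (hpos : ∀ k, 0 < n k)
    (C : ∀ k, Submodule (ZMod 2) (Fin (n k) → ZMod 2))
    (hdt : ∀ k, DoublyTransitive (C k))
    (hrate : Filter.Tendsto (fun k => codeRate (C k)) Filter.atTop (nhds R))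
    (hdist : ∀ k, δ * (n k : ℝ) ^ c ≤ (minDist (C k) : ℝ)) :
    ∃ a : ℝ, 0 < a ∧ a < 1 - R ∧
      ∀ p : ℝ, 0 < p → p < 1 / 2 →
        (4 * p * (1 - p)) ^ (1 / (4 * Real.log 2)) < a →
        Filter.Tendsto (fun k => Perr (C k) p) Filter.atTop (nhds 0) := by
  obtain ⟨θ, hθ, N, hN⟩ := exists_cenum_le hR0 hR1
  have hlog2 : 0 < Real.log 2 := Real.log_pos (by norm_num)
  have hexp : 0 < 1 / (4 * Real.log 2) := by positivity
  refine ⟨min ((1 - R) / 2) ((θ ^ 2) ^ (1 / (4 * Real.log 2))),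
    lt_min (by linarith) (by positivity), (min_le_left _ _).trans_lt (by linarith), ?_⟩
  intro p hp0 hp1 hpa
  -- the choice of the constant makes the Bhattacharyya parameter at most `θ`
  have hp : 4 * p * (1 - p) < θ ^ 2 :=
    (Real.rpow_lt_rpow_iff (mul_nonneg (by linarith) (by linarith)) (sq_nonneg θ) hexp).mp
      (hpa.trans_le (min_le_right _ _))
  have hbhat : 2 * Real.sqrt (p * (1 - p)) ≤ θ := by
    refine abs_le_of_sq_le_sq' ?_ hθ.le |>.2
    rw [mul_pow, Real.sq_sqrt (mul_nonneg hp0.le (by linarith))]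
    linarith
  have hnt : Tendsto n atTop atTop := hn.tendsto_atTop
  have hlim : Tendsto (fun k => Real.exp (Real.log 2 / (n k : ℝ)) - 1) atTop (nhds 0) := by
    have h1 : Tendsto (fun k => Real.log 2 / (n k : ℝ)) atTop (nhds 0) :=
      tendsto_const_nhds.div_atTop (tendsto_natCast_atTop_atTop.comp hnt)
    have h2 := (Real.continuous_exp.tendsto 0).comp h1
    have h3 := h2.sub_const 1
    simpa using h3
  refine tendsto_of_tendsto_of_tendsto_of_le_of_le' tendsto_const_nhds hlim
    (Eventually.of_forall fun k => Perr_nonneg (C k) hp0 hp1) ?_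
  filter_upwards [hrate.eventually_le_const (by linarith : R < (1 + R) / 2),
    hnt.eventually_ge_atTop N] with k hk1 hk2
  have h1 := hN (Fin (n k)) (by simpa using hk2) (C k) (hdt k) hk1
  rw [Fintype.card_fin] at h1
  have h2 := Perr_le_cenum (C k) hp0 hp1
  have h3 := cenum_mono (C k) (t := fun _ => 2 * Real.sqrt (p * (1 - p))) (s := fun _ => θ)
    (fun _ => by positivity) (fun _ => hbhat)
  linarith
end

section
/- There exist absolute constants R_0 > 0 and η > 0 with the following property. Let 0 < R ≤ R_0 and let (C_n) be a sequence of doubly transitive binary linear codes, where C_n has length n (n ranging over an infinite set of positive integers), such that the rates R(C_n) converge to R. Then there exists a constant a ≥ 1 - R^η such that for every p ∈ (0,1/2) with (4p(1-p))^{1/(4·ln 2)} < a, one has P_err(C_n, p) → 0 as n → ∞. In particular, for every fixed p ∈ (0,1/2) there exists R_1 > 0 such that every such sequence with R ≤ R_1 decodes errors on BSC(p) with high probability. -/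
/-!
Erase each coordinate independently with probability `l = 1 - δ`, and let `h(l)` be the EXIT
function of the code: the probability that a given coordinate is not determined by the unerased
coordinates among the others. By transitivity it does not depend on the chosen coordinate.

* The EXIT event is monotone, and by double transitivity all its nontrivial influences are equal.
  A logarithmic Sobolev inequality on the biased cube (`logsob`), applied to the martingale
  increments of the indicator in the manner of Falik and Samorodnitsky (`influence`), and the
  Margulis–Russo formula give `h' ≥ c (log n) h (1 - h) / (δ log (1 / δ))` (`sharp_deriv`). The
  order `δ log (1 / δ)` of the log-Sobolev constant is essential for small `δ`.
* The easy half of the area theorem, `h ≤ rate / δ` (`exit_le`), shows `h ≤ 1 / 2` as long as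
  `δ ≥ 4 R`, where the rate is at most `2 R`. Integrating the differential inequality between
  `δ = 4 R` and `δ = R ^ expo`, with `expo` a small absolute constant, multiplies
  `log (1 / δ)` by a constant factor and so yields `h ≤ n ^ (-2)` at `δ = R ^ expo`
  (`exit_small`).
* The weight enumerator satisfies `log Z (2 ^ l - 1) ≤ E log |C_S|`, where `C_S` is the subcode
  supported on a Bernoulli(`l`) random set `S` (`Z_le`); this is proved one coordinate at a time
  from the nonnegativity of the multi-variable enumerator on `[-1, 1] ^ n` and from concavity.
  As `log |C_S|` is at most the number of coordinates whose EXIT event occurs, `Z ≤ exp (n h)`,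
  which is at most `exp (1 / n)` at `δ = R ^ expo` (`Z_le_exp`).
* The Bhattacharyya bound (`Perr_le`) reads `P_err ≤ Z (√(4 p (1 - p))) - 1`. The condition on `p`
  with `a = 1 - R ^ (expo / 2)` ensures `√(4 p (1 - p)) ≤ 2 ^ l - 1` for `l = 1 - R ^ expo`, since
  `1 / (4 log 2) ≤ 1 / 2`.
-/

open Finset Filter

namespace BSC

/-! ### The biased discrete cube -/

set_option linter.unusedSectionVars false

section Cube

variable {ι : Type} [Fintype ι] [DecidableEq ι]

/-- The product Bernoulli(`l`) weight of a point of the cube `ι → Bool`. -/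
noncomputable def wt (l : ℝ) (x : ι → Bool) : ℝ := ∏ i, if x i then l else 1 - l

/-- Expectation with respect to the product Bernoulli(`l`) measure. -/
noncomputable def Ex (l : ℝ) (g : (ι → Bool) → ℝ) : ℝ := ∑ x, wt l x * g x

/-- Averaging over the coordinate `j`. -/
noncomputable def av (l : ℝ) (j : ι) (g : (ι → Bool) → ℝ) (x : ι → Bool) : ℝ :=
  l * g (Function.update x j true) + (1 - l) * g (Function.update x j false)

/-- Discrete derivative in the coordinate `j`. -/
def df (j : ι) (g : (ι → Bool) → ℝ) (x : ι → Bool) : ℝ :=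
  g (Function.update x j true) - g (Function.update x j false)

lemma sum_pair (j : ι) (F : (ι → Bool) → ℝ) :
    2 * ∑ x, F x = ∑ x, (F (Function.update x j true) + F (Function.update x j false)) := by
  have hinv : Function.Involutive (fun x : ι → Bool => Function.update x j (!(x j))) := by
    intro x; simp
  have h1 : ∑ x, F (Function.update x j (!(x j))) = ∑ x, F x :=
    Equiv.sum_comp hinv.toPerm F
  rw [two_mul]
  nth_rewrite 2 [← h1]
  rw [← Finset.sum_add_distrib]
  refine Finset.sum_congr rfl fun x _ => ?_
  cases h : x j
  · have : Function.update x j false = x := by rw [← h]; simp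
    rw [this]; simp [add_comm]
  · have : Function.update x j true = x := by rw [← h]; simp
    rw [this]; simp

lemma wt_update (l : ℝ) (j : ι) (x : ι → Bool) (b : Bool) :
    wt l (Function.update x j b) =
      (if b then l else 1 - l) * ∏ i ∈ univ.erase j, if x i then l else 1 - l := by
  unfold wt
  rw [← Finset.mul_prod_erase univ _ (Finset.mem_univ j)]
  congr 1
  · simp
  · refine Finset.prod_congr rfl fun i hi => ?_
    rw [Function.update_of_ne (Finset.ne_of_mem_erase hi)]

lemma Ex_av (l : ℝ) (j : ι) (g : (ι → Bool) → ℝ) : Ex l (av l j g) = Ex l g := by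
  have h1 := sum_pair j (fun x => wt l x * av l j g x)
  have h2 := sum_pair j (fun x => wt l x * g x)
  have : 2 * Ex l (av l j g) = 2 * Ex l g := by
    unfold Ex
    rw [h1, h2]
    refine Finset.sum_congr rfl fun x _ => ?_
    simp only [wt_update, av, Function.update_idem]
    simp
    ring
  linarith

lemma wt_nonneg {l : ℝ} (h0 : 0 ≤ l) (h1 : l ≤ 1) (x : ι → Bool) : 0 ≤ wt l x := by
  unfold wt
  refine Finset.prod_nonneg fun i _ => ?_
  split_ifs <;> linarith

lemma Ex_mono {l : ℝ} (h0 : 0 ≤ l) (h1 : l ≤ 1) {f g : (ι → Bool) → ℝ} (h : ∀ x, f x ≤ g x) :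
    Ex l f ≤ Ex l g :=
  Finset.sum_le_sum fun x _ => mul_le_mul_of_nonneg_left (h x) (wt_nonneg h0 h1 x)

lemma Ex_nonneg {l : ℝ} (h0 : 0 ≤ l) (h1 : l ≤ 1) {f : (ι → Bool) → ℝ} (h : ∀ x, 0 ≤ f x) :
    0 ≤ Ex l f :=
  Finset.sum_nonneg fun x _ => mul_nonneg (wt_nonneg h0 h1 x) (h x)

lemma Ex_add (l : ℝ) (f g : (ι → Bool) → ℝ) :
    Ex l (fun x => f x + g x) = Ex l f + Ex l g := by
  simp [Ex, mul_add, Finset.sum_add_distrib]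

lemma Ex_sub (l : ℝ) (f g : (ι → Bool) → ℝ) :
    Ex l (fun x => f x - g x) = Ex l f - Ex l g := by
  simp [Ex, mul_sub, Finset.sum_sub_distrib]

lemma Ex_smul (l c : ℝ) (f : (ι → Bool) → ℝ) :
    Ex l (fun x => c * f x) = c * Ex l f := by
  simp only [Ex, Finset.mul_sum]
  exact Finset.sum_congr rfl fun x _ => by ring

lemma Ex_sum {κ : Type} (s : Finset κ) (l : ℝ) (f : κ → (ι → Bool) → ℝ) :
    Ex l (fun x => ∑ k ∈ s, f k x) = ∑ k ∈ s, Ex l (f k) := by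
  simp only [Ex, Finset.mul_sum]
  exact Finset.sum_comm

lemma wt_sum (l : ℝ) : ∑ x : ι → Bool, wt l x = 1 := by
  have h := Fintype.prod_sum (κ := fun _ : ι => Bool)
    (fun _ b => if b then l else 1 - l)
  unfold wt
  rw [← h]
  simp

lemma Ex_const (l c : ℝ) : Ex l (fun _ : ι → Bool => c) = c := by
  unfold Ex
  rw [← Finset.sum_mul, wt_sum, one_mul]

/-- `g` does not depend on the coordinate `j`. -/
def Inv (j : ι) (g : (ι → Bool) → ℝ) : Prop := ∀ x b, g (Function.update x j b) = g x

lemma av_inv {l : ℝ} {j : ι} {g : (ι → Bool) → ℝ} (h : Inv j g) : av l j g = g := by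
  funext x; simp only [av, h x]; ring

lemma inv_av_self (l : ℝ) (j : ι) (g : (ι → Bool) → ℝ) : Inv j (av l j g) := by
  intro x b; simp [av]

lemma inv_av {l : ℝ} {j : ι} (k : ι) {g : (ι → Bool) → ℝ} (h : Inv j g) : Inv j (av l k g) := by
  by_cases hjk : j = k
  · subst hjk; exact inv_av_self l j g
  · intro x b
    simp only [av]
    rw [Function.update_comm hjk, Function.update_comm hjk, h, h]

lemma inv_const {g : (ι → Bool) → ℝ} (h : ∀ j, Inv j g) (x y : ι → Bool) : g x = g y := by
  have key : ∀ s : Finset ι, g (s.piecewise x y) = g y := by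
    intro s
    induction s using Finset.induction_on with
    | empty => simp
    | insert j s _ ih => rw [Finset.piecewise_insert, h j, ih]
  simpa using key univ

lemma Ex_of_inv (l : ℝ) {g : (ι → Bool) → ℝ} (h : ∀ j, Inv j g) (x : ι → Bool) :
    Ex l g = g x := by
  have : g = fun _ => g x := by funext y; exact inv_const h y x
  conv_lhs => rw [this]
  exact Ex_const l _

lemma av_comm (l : ℝ) (j k : ι) (g : (ι → Bool) → ℝ) : av l j (av l k g) = av l k (av l j g) := by
  by_cases hjk : j = k
  · subst hjk; rfl
  · funext x
    simp only [av]
    simp only [Function.update_comm hjk]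
    ring

lemma df_av_self (l : ℝ) (j : ι) (g : (ι → Bool) → ℝ) : df j (av l j g) = 0 := by
  funext x; simp [df, av]

lemma df_av (l : ℝ) {j k : ι} (hjk : j ≠ k) (g : (ι → Bool) → ℝ) :
    df j (av l k g) = av l k (df j g) := by
  funext x
  simp only [df, av, Function.update_comm hjk]
  ring

/-- Pythagoras for the conditional expectation `av l j`. -/
lemma pyth (l : ℝ) (j : ι) (g : (ι → Bool) → ℝ) :
    Ex l (fun x => (g x - av l j g x) ^ 2) = Ex l (fun x => g x ^ 2) -
      Ex l (fun x => av l j g x ^ 2) := by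
  rw [← Ex_sub, ← Ex_av l j, ← Ex_av l j (fun x => g x ^ 2 - av l j g x ^ 2)]
  congr 1
  funext x
  have e : ∀ b, av l j g (Function.update x j b) = av l j g x := fun b => inv_av_self l j g x b
  simp only [av] at e ⊢
  simp only [Function.update_idem] at e ⊢
  ring

end Cube

/-! ### Logarithmic Sobolev and influence inequalities -/

section LogSobolev

/-- Tangent line bound for the convex function `x log x` at `t`. -/
lemma xlogx_ge {x t : ℝ} (hx : 0 ≤ x) (ht : 0 < t) :
    x * Real.log t + x - t ≤ x * Real.log x := by
  rcases hx.eq_or_lt with rfl | hx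
  · simp; exact ht.le
  · have h := Real.log_le_sub_one_of_pos (div_pos ht hx)
    rw [Real.log_div ht.ne' hx.ne'] at h
    have h2 := mul_le_mul_of_nonneg_left h hx.le
    have h3 : x * (t / x - 1) = t - x := by field_simp
    rw [h3] at h2
    linarith

lemma two_point_nonneg {l u v : ℝ} (hl0 : 0 < l) (hl1 : l < 1)
    (hl : 9 / 4 ≤ -Real.log (1 - l)) (hu : 0 ≤ u) (hv : 0 ≤ v) :
    l * (u ^ 2 * Real.log (u ^ 2)) + (1 - l) * (v ^ 2 * Real.log (v ^ 2))
      - (l * u ^ 2 + (1 - l) * v ^ 2) * Real.log (l * u ^ 2 + (1 - l) * v ^ 2)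
      ≤ 4 * (1 - l) * (-Real.log (1 - l)) * (u - v) ^ 2 := by
  have hd : 0 < 1 - l := by linarith
  set m := l * u ^ 2 + (1 - l) * v ^ 2 with hm
  have hm0 : 0 ≤ m := by positivity
  -- For `v ≤ 2 u` the entropy is bounded by comparing `m` with `u²`; for `v > 2 u` the point of
  -- small mass `1 - l` dominates and `v² / m ≤ 1 / (1 - l)` is used.
  by_cases hc : v ≤ 2 * u
  · rcases hu.eq_or_lt with rfl | hu'
    · have : v = 0 := by linarith
      subst this
      simp [hm]
    · have h1 := xlogx_ge hm0 (pow_pos hu' 2)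
      have h2 : v ^ 2 * (Real.log (v ^ 2) - Real.log (u ^ 2)) ≤ v ^ 2 * (v ^ 2 / u ^ 2 - 1) := by
        rcases hv.eq_or_lt with rfl | hv'
        · simp
        · refine mul_le_mul_of_nonneg_left ?_ (by positivity)
          rw [← Real.log_div (by positivity) (by positivity)]
          exact Real.log_le_sub_one_of_pos (by positivity)
      have h3 : v ^ 2 * (v ^ 2 / u ^ 2 - 1) + (u ^ 2 - v ^ 2) ≤ 9 * (u - v) ^ 2 := by
        have e : v ^ 2 * (v ^ 2 / u ^ 2 - 1) + (u ^ 2 - v ^ 2)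
            = (u - v) ^ 2 * ((u + v) / u) ^ 2 := by
          field_simp; ring
        rw [e]
        have h4 : (u + v) / u ≤ 3 := by rw [div_le_iff₀ hu']; linarith
        have h5 : 0 ≤ (u + v) / u := by positivity
        have h6 : ((u + v) / u) ^ 2 ≤ 9 := by nlinarith
        nlinarith [sq_nonneg (u - v)]
      have h7 : 9 * ((1 - l) * (u - v) ^ 2)
          ≤ 4 * (-Real.log (1 - l)) * ((1 - l) * (u - v) ^ 2) :=
        mul_le_mul_of_nonneg_right (by linarith) (by positivity)
      have h8 := mul_le_mul_of_nonneg_left h3 hd.le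
      have h9 := mul_le_mul_of_nonneg_left h2 hd.le
      have e2 : m * Real.log (u ^ 2) = l * (u ^ 2 * Real.log (u ^ 2)) +
          (1 - l) * (v ^ 2 * Real.log (u ^ 2)) := by rw [hm]; ring
      have e3 : m - u ^ 2 = (1 - l) * (v ^ 2 - u ^ 2) := by rw [hm]; ring
      linarith
  · push Not at hc
    have hv' : 0 < v := by linarith
    have hmv : (1 - l) * v ^ 2 ≤ m := by rw [hm]; nlinarith [sq_nonneg u]
    have hmpos : 0 < m := lt_of_lt_of_le (by positivity) hmv
    have huv : u ^ 2 ≤ v ^ 2 := by nlinarith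
    have hum : u ^ 2 ≤ m := by rw [hm]; nlinarith [mul_nonneg hd.le (sub_nonneg.mpr huv)]
    have h1 : u ^ 2 * Real.log (u ^ 2) ≤ u ^ 2 * Real.log m := by
      rcases hu.eq_or_lt with rfl | hu'
      · simp
      · exact mul_le_mul_of_nonneg_left (Real.log_le_log (by positivity) hum) (by positivity)
    have h2 : Real.log (v ^ 2) - Real.log m ≤ -Real.log (1 - l) := by
      have := Real.log_le_log (by positivity) hmv
      rw [Real.log_mul hd.ne' (by positivity)] at this
      linarith
    have h3 : v ^ 2 ≤ 4 * (u - v) ^ 2 := by nlinarith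
    have h4 := mul_le_mul_of_nonneg_left h2 (by positivity : 0 ≤ (1 - l) * v ^ 2)
    have h5 := mul_le_mul_of_nonneg_left h3
      (mul_nonneg hd.le (by linarith : 0 ≤ -Real.log (1 - l)))
    have h6 := mul_le_mul_of_nonneg_left h1 hl0.le
    have e2 : m * Real.log m = l * (u ^ 2 * Real.log m) +
          (1 - l) * (v ^ 2 * Real.log m) := by rw [hm]; ring
    linarith

/-- Logarithmic Sobolev inequality on the two-point space with weights `l` and `1 - l`. The order
`(1 - l) log (1 / (1 - l))` of the constant as `l → 1` is what makes the threshold sharp enough. -/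
lemma two_point {l : ℝ} (hl0 : 0 < l) (hl1 : l < 1)
    (hl : 9 / 4 ≤ -Real.log (1 - l)) (u v : ℝ) :
    l * (u ^ 2 * Real.log (u ^ 2)) + (1 - l) * (v ^ 2 * Real.log (v ^ 2))
      - (l * u ^ 2 + (1 - l) * v ^ 2) * Real.log (l * u ^ 2 + (1 - l) * v ^ 2)
      ≤ 4 * (1 - l) * (-Real.log (1 - l)) * (u - v) ^ 2 := by
  have h := two_point_nonneg hl0 hl1 hl (abs_nonneg u) (abs_nonneg v)
  simp only [sq_abs] at h
  refine h.trans (mul_le_mul_of_nonneg_left ?_ ?_)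
  · exact sq_le_sq.mpr (abs_abs_sub_abs_le_abs_sub u v)
  · have : 0 < 1 - l := by linarith
    have : 0 ≤ -Real.log (1 - l) := by linarith
    positivity

lemma minkowski_two {l : ℝ} (hl0 : 0 ≤ l) (hl1 : l ≤ 1) (a b c d : ℝ) :
    (√(l * a ^ 2 + (1 - l) * b ^ 2) - √(l * c ^ 2 + (1 - l) * d ^ 2)) ^ 2
      ≤ l * (a - c) ^ 2 + (1 - l) * (b - d) ^ 2 := by
  have hd : 0 ≤ 1 - l := by linarith
  have hA : 0 ≤ l * a ^ 2 + (1 - l) * b ^ 2 := by positivity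
  have hB : 0 ≤ l * c ^ 2 + (1 - l) * d ^ 2 := by positivity
  have key : l * a * c + (1 - l) * b * d
      ≤ √(l * a ^ 2 + (1 - l) * b ^ 2) * √(l * c ^ 2 + (1 - l) * d ^ 2) := by
    rw [← Real.sqrt_mul hA]
    refine Real.le_sqrt_of_sq_le ?_
    nlinarith [mul_nonneg (mul_nonneg hl0 hd) (sq_nonneg (a * d - b * c))]
  have e1 := Real.sq_sqrt hA
  have e2 := Real.sq_sqrt hB
  nlinarith

variable {ι : Type} [Fintype ι] [DecidableEq ι]

/-- Tensorization of the logarithmic Sobolev inequality: the coordinates in `s` are integrated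
out one at a time, replacing `g` by the conditional `L²` norm `G`, whose derivatives are
controlled by those of `g` through Minkowski's inequality. -/
lemma logsob_aux {l : ℝ} (hl0 : 0 < l) (hl1 : l < 1) (hl : 9 / 4 ≤ -Real.log (1 - l))
    (g : (ι → Bool) → ℝ) (s : Finset ι) :
    ∃ G : (ι → Bool) → ℝ, (∀ j ∈ s, Inv j G) ∧
      Ex l (fun x => G x ^ 2) = Ex l (fun x => g x ^ 2) ∧
      (∀ k, Ex l (fun x => df k G x ^ 2) ≤ Ex l (fun x => df k g x ^ 2)) ∧
      Ex l (fun x => g x ^ 2 * Real.log (g x ^ 2)) - Ex l (fun x => G x ^ 2 * Real.log (G x ^ 2))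
        ≤ 4 * (1 - l) * (-Real.log (1 - l)) * ∑ j ∈ s, Ex l (fun x => df j g x ^ 2) := by
  have hd : 0 < 1 - l := by linarith
  have hC : 0 ≤ 4 * (1 - l) * (-Real.log (1 - l)) := by
    have : 0 ≤ -Real.log (1 - l) := by linarith
    positivity
  induction s using Finset.induction_on with
  | empty => exact ⟨g, by simp, rfl, fun _ => le_rfl, by simp⟩
  | insert j s hj ih =>
    obtain ⟨F, hF1, hF2, hF3, hF4⟩ := ih
    have hnn : ∀ x, 0 ≤ av l j (fun x => F x ^ 2) x := fun x => by
      unfold av; positivity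
    have hG2 : ∀ x, √(av l j (fun x => F x ^ 2) x) ^ 2 = av l j (fun x => F x ^ 2) x :=
      fun x => Real.sq_sqrt (hnn x)
    refine ⟨fun x => √(av l j (fun x => F x ^ 2) x), ?_, ?_, ?_, ?_⟩
    · intro i hi x b
      have : Inv i (av l j (fun x => F x ^ 2)) := by
        rcases Finset.mem_insert.mp hi with rfl | hi
        · exact inv_av_self _ _ _
        · exact inv_av j (fun x b => by simp only [hF1 i hi x b])
      simp only [this x b]
    · simp only [hG2]
      rw [← hF2]
      exact Ex_av l j _
    · intro k
      refine le_trans ?_ (hF3 k)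
      by_cases hk : k = j
      · subst hk
        refine Ex_mono hl0.le hl1.le fun x => ?_
        have : df k (fun x => √(av l k (fun x => F x ^ 2) x)) x = 0 := by
          simp only [df, inv_av_self l k (fun x => F x ^ 2) x, sub_self]
        rw [this]
        simpa using sq_nonneg _
      · rw [← Ex_av l j (fun x => df k F x ^ 2)]
        refine Ex_mono hl0.le hl1.le fun x => ?_
        simp only [df, av, Function.update_comm hk]
        exact minkowski_two hl0.le hl1.le _ _ _ _
    · rw [Finset.sum_insert hj, mul_add]
      have h1 : Ex l (fun x => F x ^ 2 * Real.log (F x ^ 2)) -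
          Ex l (fun x => √(av l j (fun x => F x ^ 2) x) ^ 2 *
            Real.log (√(av l j (fun x => F x ^ 2) x) ^ 2))
          ≤ 4 * (1 - l) * (-Real.log (1 - l)) * Ex l (fun x => df j F x ^ 2) := by
        simp only [hG2]
        rw [← Ex_av l j (fun x => F x ^ 2 * Real.log (F x ^ 2)), ← Ex_sub, ← Ex_smul]
        exact Ex_mono hl0.le hl1.le fun x => two_point hl0 hl1 hl _ _
      have h2 := mul_le_mul_of_nonneg_left (hF3 j) hC
      linarith

/-- Logarithmic Sobolev inequality for the product Bernoulli(`l`) measure. -/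
lemma logsob {l : ℝ} (hl0 : 0 < l) (hl1 : l < 1) (hl : 9 / 4 ≤ -Real.log (1 - l))
    (g : (ι → Bool) → ℝ) :
    Ex l (fun x => g x ^ 2 * Real.log (g x ^ 2)) -
      Ex l (fun x => g x ^ 2) * Real.log (Ex l (fun x => g x ^ 2))
        ≤ 4 * (1 - l) * (-Real.log (1 - l)) * ∑ j, Ex l (fun x => df j g x ^ 2) := by
  obtain ⟨G, h1, h2, -, h4⟩ := logsob_aux hl0 hl1 hl g univ
  have hx : ∀ φ : ℝ → ℝ, Ex l (fun x => φ (G x)) = φ (G (fun _ => true)) := fun φ =>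
    Ex_of_inv l (fun j x b => by simp only [h1 j (Finset.mem_univ j) x b]) _
  have e1 := hx (fun y => y ^ 2)
  have e2 := hx (fun y => y ^ 2 * Real.log (y ^ 2))
  rw [← h2, e1, ← e2]
  exact h4

/-- A function whose `L¹` norm is at most `b` has large entropy relative to its `L²` norm. -/
lemma ent_lower {l : ℝ} (hl0 : 0 < l) (hl1 : l < 1) (g : (ι → Bool) → ℝ) {b t : ℝ}
    (hb : 0 < b) (ht : 0 < t) (hg : Ex l (fun x => |g x|) ≤ b) :
    Ex l (fun x => g x ^ 2) * (Real.log t - 2 * Real.log b + 1) - t ≤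
      Ex l (fun x => g x ^ 2 * Real.log (g x ^ 2)) -
      Ex l (fun x => g x ^ 2) * Real.log (Ex l (fun x => g x ^ 2)) := by
  set v := Ex l (fun x => g x ^ 2) with hv
  have hv0 : 0 ≤ v := Ex_nonneg hl0.le hl1.le fun x => sq_nonneg _
  have h1 := xlogx_ge hv0 ht
  suffices h : 2 * v * Real.log v - 2 * v * Real.log b
      ≤ Ex l (fun x => g x ^ 2 * Real.log (g x ^ 2)) by linarith
  rcases hv0.eq_or_lt with h0 | hpos
  · rw [← h0]
    have hz : ∀ x, wt l x * g x ^ 2 = 0 := by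
      intro x
      have := (Finset.sum_eq_zero_iff_of_nonneg (s := univ)
        (f := fun x => wt l x * g x ^ 2)
        (fun x _ => mul_nonneg (wt_nonneg hl0.le hl1.le x) (sq_nonneg _))).mp
        (by rw [← Ex, ← hv, ← h0])
      exact this x (Finset.mem_univ x)
    have : Ex l (fun x => g x ^ 2 * Real.log (g x ^ 2)) = 0 := by
      unfold Ex
      refine Finset.sum_eq_zero fun x _ => ?_
      rw [← mul_assoc, hz, zero_mul]
    rw [this]; simp
  · have hs : 0 < v / b := div_pos hpos hb
    have hp : ∀ x, 2 * Real.log (v / b) * g x ^ 2 + 2 * g x ^ 2 + (-(2 * (v / b))) * |g x|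
        ≤ g x ^ 2 * Real.log (g x ^ 2) := by
      intro x
      have h := xlogx_ge (abs_nonneg (g x)) hs
      have h2 := mul_le_mul_of_nonneg_left h (abs_nonneg (g x))
      have e : g x ^ 2 * Real.log (g x ^ 2) = 2 * (|g x| * (|g x| * Real.log |g x|)) := by
        rw [← sq_abs, Real.log_pow]; push_cast; ring
      rw [e, ← sq_abs]
      nlinarith
    have h3 := Ex_mono hl0.le hl1.le hp
    rw [Ex_add, Ex_add, Ex_smul, Ex_smul, Ex_smul, ← hv] at h3
    have h4 : v / b * Ex l (fun x => |g x|) ≤ v := by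
      calc v / b * Ex l (fun x => |g x|) ≤ v / b * b := mul_le_mul_of_nonneg_left hg hs.le
        _ = v := by field_simp
    rw [Real.log_div hpos.ne' hb.ne'] at h3
    linarith

/-- Dirichlet energy. -/
noncomputable def energy (l : ℝ) (g : (ι → Bool) → ℝ) : ℝ :=
  ∑ j, Ex l (fun x => df j g x ^ 2)

/-- The energy is additive along the orthogonal decomposition `g = (g - av l k g) + av l k g`. -/
lemma energy_split (l : ℝ) (k : ι) (g : (ι → Bool) → ℝ) :
    energy l (fun x => g x - av l k g x) = energy l g - energy l (av l k g) := by
  unfold energy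
  rw [← Finset.sum_sub_distrib]
  refine Finset.sum_congr rfl fun j _ => ?_
  have e : ∀ x, df j (fun x => g x - av l k g x) x = df j g x - df j (av l k g) x := by
    intro x; simp only [df]; ring
  simp only [e]
  by_cases hjk : j = k
  · subst hjk
    simp [df_av_self, Ex_const]
  · rw [df_av l hjk]
    exact pyth l k (df j g)

/-- Averaging over one coordinate does not increase the `L¹` norms of the increments. -/
lemma L1_contract {l : ℝ} (hl0 : 0 < l) (hl1 : l < 1) (j k : ι) (g : (ι → Bool) → ℝ) :
    Ex l (fun x => |av l j g x - av l k (av l j g) x|) ≤ Ex l (fun x => |g x - av l k g x|) := by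
  rw [av_comm l k j, ← Ex_av l j (fun x => |g x - av l k g x|)]
  refine Ex_mono hl0.le hl1.le fun x => ?_
  have hd : 0 < 1 - l := by linarith
  simp only [av.eq_1 l j]
  have e : ∀ a b c d : ℝ, l * a + (1 - l) * b - (l * c + (1 - l) * d)
      = l * (a - c) + (1 - l) * (b - d) := by intros; ring
  rw [e]
  refine (abs_add_le _ _).trans ?_
  rw [abs_mul, abs_mul, abs_of_pos hl0, abs_of_pos hd]

/-- The martingale step of the influence inequality: the increments `g - av l j g` obtained by
integrating out the coordinates of `s` one after another have orthogonal contributions both to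
the variance and to the energy, and each of them obeys the logarithmic Sobolev inequality. -/
lemma martingale_aux {l : ℝ} (hl0 : 0 < l) (hl1 : l < 1) (hl : 9 / 4 ≤ -Real.log (1 - l))
    (g : (ι → Bool) → ℝ) {b t : ℝ} (hb : 0 < b) (ht : 0 < t)
    (hg : ∀ k, Ex l (fun x => |g x - av l k g x|) ≤ b) (s : Finset ι) :
    ∃ G : (ι → Bool) → ℝ, (∀ j ∈ s, Inv j G) ∧ Ex l G = Ex l g ∧
      (∀ k, Ex l (fun x => |G x - av l k G x|) ≤ b) ∧
      (Ex l (fun x => g x ^ 2) - Ex l (fun x => G x ^ 2)) *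
        (Real.log t - 2 * Real.log b + 1) - s.card * t ≤
      4 * (1 - l) * (-Real.log (1 - l)) * (energy l g - energy l G) := by
  induction s using Finset.induction_on with
  | empty => exact ⟨g, by simp, rfl, hg, by simp⟩
  | insert j s hj ih =>
    obtain ⟨F, hF1, hF2, hF3, hF4⟩ := ih
    refine ⟨av l j F, ?_, ?_, ?_, ?_⟩
    · intro i hi
      rcases Finset.mem_insert.mp hi with rfl | hi
      · exact inv_av_self _ _ _
      · exact inv_av j (hF1 i hi)
    · rw [Ex_av, hF2]
    · exact fun k => (L1_contract hl0 hl1 j k F).trans (hF3 k)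
    · have h1 := ent_lower hl0 hl1 _ hb ht (hF3 j)
      have h2 := logsob hl0 hl1 hl (fun x => F x - av l j F x)
      have h3 := energy_split l j F
      rw [energy.eq_1 l (fun x => F x - av l j F x)] at h3
      rw [h3] at h2
      have h4 := h1.trans h2
      rw [pyth] at h4
      rw [Finset.card_insert_of_notMem hj]
      push_cast
      linarith

/-- Influence inequality: if all first-order differences have `L¹` norm at most `b`, then the
energy is at least of order `Var · log (Var / (n b²))`. -/
lemma influence {l : ℝ} (hl0 : 0 < l) (hl1 : l < 1) (hl : 9 / 4 ≤ -Real.log (1 - l))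
    (g : (ι → Bool) → ℝ) {b t : ℝ} (hb : 0 < b) (ht : 0 < t)
    (hg : ∀ k, Ex l (fun x => |g x - av l k g x|) ≤ b) :
    (Ex l (fun x => g x ^ 2) - Ex l g ^ 2) *
        (Real.log t - 2 * Real.log b + 1) - Fintype.card ι * t ≤
      4 * (1 - l) * (-Real.log (1 - l)) * energy l g := by
  obtain ⟨G, h1, h2, -, h4⟩ := martingale_aux hl0 hl1 hl g hb ht hg univ
  have hx : ∀ φ : ℝ → ℝ, Ex l (fun x => φ (G x)) = φ (G (fun _ => true)) := fun φ =>
    Ex_of_inv l (fun j x b => by simp only [h1 j (Finset.mem_univ j) x b]) _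
  have e1 := hx (fun y => y ^ 2)
  have e2 := hx (fun y => y)
  have e3 : Ex l (fun x => G x ^ 2) = Ex l g ^ 2 := by rw [e1, ← h2, ← e2]
  have h5 : 0 ≤ energy l G :=
    Finset.sum_nonneg fun j _ => Ex_nonneg hl0.le hl1.le fun x => sq_nonneg _
  have hC : 0 ≤ 4 * (1 - l) * (-Real.log (1 - l)) :=
    mul_nonneg (by linarith) (by linarith)
  rw [e3, Finset.card_univ] at h4
  nlinarith [mul_nonneg hC h5]

end LogSobolev

/-! ### Sharp threshold for monotone events with equal influences -/

section Threshold

variable {ι : Type} [Fintype ι] [DecidableEq ι]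

/-- The Margulis–Russo formula. -/
lemma russo {l : ℝ} (hl0 : 0 < l) (hl1 : l < 1) (f : (ι → Bool) → ℝ) :
    HasDerivAt (fun l => Ex l f) (∑ j, Ex l (df j f)) l := by
  have hd : 0 < 1 - l := by linarith
  have h1 : ∀ x : ι → Bool, HasDerivAt (fun l => wt l x)
      (∑ j, (∏ i ∈ univ.erase j, if x i then l else 1 - l) * (if x j then 1 else -1)) l := by
    intro x
    have := HasDerivAt.fun_finsetProd (u := (univ : Finset ι))
      (f := fun i l => if x i then l else 1 - l)
      (f' := fun i => if x i then (1 : ℝ) else -1) (x := l) (by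
        intro i _
        cases x i
        · simpa using (hasDerivAt_id l).const_sub 1
        · simpa using hasDerivAt_id' l)
    simpa [wt] using this
  have h2 : HasDerivAt (fun l => Ex l f) (∑ x, (∑ j, (∏ i ∈ univ.erase j,
      if x i then l else 1 - l) * (if x j then 1 else -1)) * f x) l := by
    unfold Ex
    exact HasDerivAt.fun_sum fun x _ => (h1 x).mul_const (f x)
  convert h2 using 1
  simp only [Finset.sum_mul]
  rw [Finset.sum_comm]
  refine Finset.sum_congr rfl fun j _ => ?_
  have e : Ex l (df j f) = Ex l (fun x => (if x j then 1 / l else -(1 / (1 - l))) * f x) := by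
    rw [← Ex_av l j (fun x => (if x j then 1 / l else -(1 / (1 - l))) * f x)]
    congr 1
    funext x
    simp only [df, av, Function.update_self]
    simp
    field_simp
    ring
  rw [e]
  unfold Ex
  refine Finset.sum_congr rfl fun x _ => ?_
  unfold wt
  rw [← Finset.mul_prod_erase univ _ (Finset.mem_univ j)]
  generalize (∏ i ∈ univ.erase j, if x i then l else 1 - l) = P
  cases hx : x j
  · simp [hx]; field_simp
  · simp [hx]; field_simp

lemma L1_diff {l : ℝ} (hl0 : 0 < l) (hl1 : l < 1) (j : ι) (f : (ι → Bool) → ℝ)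
    (hf : ∀ x, 0 ≤ df j f x) :
    Ex l (fun x => |f x - av l j f x|) = 2 * l * (1 - l) * Ex l (df j f) := by
  have hd : 0 < 1 - l := by linarith
  rw [← Ex_av l j (fun x => |f x - av l j f x|), ← Ex_smul]
  congr 1
  funext x
  have e := inv_av_self l j f x
  rw [av.eq_1 l j (fun x => |f x - av l j f x|)]
  simp only [e]
  have h1 : f (Function.update x j true) - av l j f x = (1 - l) * df j f x := by
    simp only [av, df]; ring
  have h2 : f (Function.update x j false) - av l j f x = -(l * df j f x) := by
    simp only [av, df]; ring
  rw [h1, h2, abs_neg, abs_of_nonneg (mul_nonneg hd.le (hf x)),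
    abs_of_nonneg (mul_nonneg hl0.le (hf x))]
  ring

/-- Differential inequality for the probability of a monotone event `f` which does not depend on
the coordinate `i` and whose other influences are all equal. -/
lemma sharp_deriv {l : ℝ} (hl0 : 0 < l) (hl1 : l < 1) (hl : 9 / 4 ≤ -Real.log (1 - l))
    (hn : 2 ≤ Fintype.card ι) (f : (ι → Bool) → ℝ) (i : ι)
    (hf : ∀ x, f x ^ 2 = f x) (hm : ∀ j x, 0 ≤ df j f x) (hi : Inv i f)
    (hs : ∀ j k, j ≠ i → k ≠ i → Ex l (df j f) = Ex l (df k f)) :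
    Ex l f * (1 - Ex l f) * Real.log (Fintype.card ι) ≤
      16 * (1 - l) * (-Real.log (1 - l)) * ∑ j, Ex l (df j f) := by
  have hd : 0 < 1 - l := by linarith
  set n : ℝ := (Fintype.card ι : ℝ) with hnd
  set L := -Real.log (1 - l) with hL
  set V := Ex l f * (1 - Ex l f) with hV
  set D := ∑ j, Ex l (df j f) with hD
  have hn2 : (2 : ℝ) ≤ n := by rw [hnd]; exact_mod_cast hn
  have hn0 : 0 < n := by linarith
  have hlogn : 0 < Real.log n := Real.log_pos (by linarith)
  have hLpos : 0 < L := by linarith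
  have hdn : ∀ j, 0 ≤ Ex l (df j f) := fun j => Ex_nonneg hl0.le hl1.le (hm j)
  have hD0 : 0 ≤ D := Finset.sum_nonneg fun j _ => hdn j
  have hf01 : ∀ x, f x = 0 ∨ f x = 1 := by
    intro x
    have : f x * (f x - 1) = 0 := by have := hf x; nlinarith
    rcases mul_eq_zero.mp this with h | h
    · exact Or.inl h
    · exact Or.inr (by linarith)
  have hsq : ∀ j x, df j f x ^ 2 = df j f x := by
    intro j x
    have h0 := hm j x
    unfold df at h0 ⊢
    rcases hf01 (Function.update x j true) with h | h <;>
      rcases hf01 (Function.update x j false) with h' | h' <;> rw [h, h'] at h0 ⊢ <;> norm_num at *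
  have hE : energy l f = D := by
    unfold energy
    simp only [hsq]
    exact hD.symm
  -- If the bound failed, every influence would be so small that `influence`, applied with
  -- `t = V / n`, gives a contradiction.
  by_contra hcon
  push Not at hcon
  have hVpos : 0 < V := by
    by_contra hneg
    push Not at hneg
    have h1 : V * Real.log n ≤ 0 := mul_nonpos_of_nonpos_of_nonneg hneg hlogn.le
    have h2 : 0 ≤ 16 * (1 - l) * L * D := by positivity
    linarith
  have hV1 : V ≤ 1 := by rw [hV]; nlinarith [sq_nonneg (Ex l f - 1 / 2)]
  set b := V * Real.log n / (9 * n) with hb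
  have hb0 : 0 < b := by positivity
  have hdi : Ex l (df i f) = 0 := by
    have : df i f = fun _ => 0 := by funext x; simp [df, hi x]
    rw [this, Ex_const]
  have hI : ∀ k, Ex l (fun x => |f x - av l k f x|) ≤ b := by
    intro k
    rw [L1_diff hl0 hl1 k f (hm k)]
    by_cases hk : k = i
    · subst hk; rw [hdi]; simpa using hb0.le
    · have hDk : D = (n - 1) * Ex l (df k f) := by
        rw [hD, ← Finset.add_sum_erase univ _ (Finset.mem_univ i), hdi, zero_add,
          Finset.sum_congr rfl (fun j hj => hs j k (Finset.ne_of_mem_erase hj) hk),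
          Finset.sum_const, Finset.card_erase_of_mem (Finset.mem_univ i), Finset.card_univ,
          nsmul_eq_mul, Nat.cast_sub (by omega)]
        simp [hnd]
      set I := Ex l (df k f) with hIdef
      have hI0 : 0 ≤ I := hdn k
      have h1 : n / 2 * I ≤ D := by rw [hDk]; exact mul_le_mul_of_nonneg_right (by linarith) hI0
      have h2 : 16 * (1 - l) * L * (n / 2 * I) ≤ 16 * (1 - l) * L * D :=
        mul_le_mul_of_nonneg_left h1 (by positivity)
      have h3 : 16 * (1 - l) * (9 / 4) * (n / 2 * I) ≤ 16 * (1 - l) * L * (n / 2 * I) := by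
        have : 0 ≤ n / 2 * I := by positivity
        gcongr
      have h4 : 2 * l * (1 - l) * I ≤ 2 * (1 - l) * I := by
        have : 0 ≤ (1 - l) * I := by positivity
        nlinarith
      rw [hb, le_div_iff₀ (by positivity)]
      have h5 : 2 * l * (1 - l) * I * (9 * n) ≤ 2 * (1 - l) * I * (9 * n) :=
        mul_le_mul_of_nonneg_right h4 (by positivity)
      linarith
  have hinf := influence hl0 hl1 hl f hb0 (div_pos hVpos hn0) hI
  simp only [hf] at hinf
  rw [hE, ← hL, ← hnd] at hinf
  have e1 : Ex l (fun x => f x) - Ex l f ^ 2 = V := by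
    rw [hV]; ring
  have e2 : n * (V / n) = V := by field_simp
  rw [e1, e2, Real.log_div hVpos.ne' hn0.ne', hb, Real.log_div (by positivity) (by positivity),
    Real.log_mul hVpos.ne' hlogn.ne', Real.log_mul (by norm_num) hn0.ne'] at hinf
  have h6 : V * (Real.log V - Real.log n -
      2 * (Real.log V + Real.log (Real.log n) - (Real.log 9 + Real.log n)))
      < V * (Real.log n / 4) := by linarith
  have h7 := lt_of_mul_lt_mul_left h6 hVpos.le
  have h8 : Real.log V ≤ 0 := Real.log_nonpos hVpos.le hV1
  have h9 := Real.log_le_sub_one_of_pos (by positivity : 0 < Real.log n * (3 / 8))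
  rw [Real.log_mul hlogn.ne' (by norm_num)] at h9
  have h10 : 0 ≤ Real.log (3 / 8) + Real.log 9 := by
    rw [← Real.log_mul (by norm_num) (by norm_num)]
    exact Real.log_nonneg (by norm_num)
  linarith

/-- Integrated form of `sharp_deriv`: on an interval on which the event has probability at most
`1 / 2`, the quantity `Ex l f · (log (1 / (1 - l))) ^ (-log n / 32)` increases. -/
lemma sharp {l₁ l₂ : ℝ} (h0 : 0 < l₁) (h12 : l₁ ≤ l₂) (h2 : l₂ < 1)
    (hl : 9 / 4 ≤ -Real.log (1 - l₁))
    (hn : 2 ≤ Fintype.card ι) (f : (ι → Bool) → ℝ) (i : ι)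
    (hf : ∀ x, f x ^ 2 = f x) (hm : ∀ j x, 0 ≤ df j f x) (hi : Inv i f)
    (hs : ∀ l j k, j ≠ i → k ≠ i → Ex l (df j f) = Ex l (df k f))
    (hhalf : ∀ l, l₁ ≤ l → l ≤ l₂ → Ex l f ≤ 1 / 2) :
    Ex l₁ f ≤ Real.exp (-(Real.log (Fintype.card ι) / 32 *
      (Real.log (-Real.log (1 - l₂)) - Real.log (-Real.log (1 - l₁))))) := by
  set κ := Real.log (Fintype.card ι) / 32 with hκ
  have hL : ∀ l, l₁ ≤ l → l ≤ l₂ → 9 / 4 ≤ -Real.log (1 - l) := by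
    intro l hl1 hl2
    have := Real.log_le_log (by linarith : 0 < 1 - l) (by linarith : 1 - l ≤ 1 - l₁)
    linarith
  have hder : ∀ l, l₁ ≤ l → l ≤ l₂ → HasDerivAt
      (fun l => Ex l f * Real.exp (-(κ * Real.log (-Real.log (1 - l)))))
      ((∑ j, Ex l (df j f)) * Real.exp (-(κ * Real.log (-Real.log (1 - l)))) +
        Ex l f * (Real.exp (-(κ * Real.log (-Real.log (1 - l)))) *
          -(κ * (-(-1 / (1 - l)) / -Real.log (1 - l))))) l := by
    intro l hl1 hl2
    have hh := hL l hl1 hl2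
    have a1 : HasDerivAt (fun l : ℝ => 1 - l) (-1) l := by
      simpa using (hasDerivAt_id l).const_sub 1
    have a2 := (a1.log (by linarith)).neg
    have a3 := ((a2.log (by simp only [Pi.neg_apply]; linarith)).const_mul κ).neg.exp
    exact (russo (by linarith) (by linarith) f).mul a3
  have hmono : MonotoneOn (fun l => Ex l f * Real.exp (-(κ * Real.log (-Real.log (1 - l)))))
      (Set.Icc l₁ l₂) := by
    refine monotoneOn_of_deriv_nonneg (convex_Icc _ _) ?_ ?_ ?_
    · exact fun l hl => (hder l hl.1 hl.2).continuousAt.continuousWithinAt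
    · intro l hl
      rw [interior_Icc] at hl
      exact (hder l hl.1.le hl.2.le).differentiableAt.differentiableWithinAt
    · intro l hl
      rw [interior_Icc] at hl
      rw [(hder l hl.1.le hl.2.le).deriv]
      have hh := hL l hl.1.le hl.2.le
      have hl0 : 0 < l := by linarith [hl.1]
      have hl1 : l < 1 := by linarith [hl.2]
      have hd : 0 < 1 - l := by linarith
      have key := sharp_deriv hl0 hl1 hh hn f i hf hm hi (hs l)
      have hha := hhalf l hl.1.le hl.2.le
      have hfn : ∀ x, 0 ≤ f x := fun x => by rw [← hf x]; positivity
      have hE0 : 0 ≤ Ex l f := Ex_nonneg hl0.le hl1.le hfn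
      have hκ0 : 0 ≤ Real.log (Fintype.card ι : ℝ) := Real.log_natCast_nonneg _
      have hLp : 0 < -Real.log (1 - l) := by linarith
      have h3 : Ex l f * κ ≤ (1 - l) * (-Real.log (1 - l)) * ∑ j, Ex l (df j f) := by
        have : Ex l f * (1 / 2) * Real.log (Fintype.card ι)
            ≤ Ex l f * (1 - Ex l f) * Real.log (Fintype.card ι) := by
          gcongr; linarith
        rw [hκ]
        linarith
      have h4 : Ex l f * (κ * (-(-1 / (1 - l)) / -Real.log (1 - l))) ≤ ∑ j, Ex l (df j f) := by
        have e : Ex l f * (κ * (-(-1 / (1 - l)) / -Real.log (1 - l)))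
            = Ex l f * κ / ((1 - l) * (-Real.log (1 - l))) := by
          have := hLp.ne'
          generalize -Real.log (1 - l) = y at this
          field_simp
        rw [e, div_le_iff₀ (by positivity)]
        linarith
      have h5 := mul_le_mul_of_nonneg_right h4
        (Real.exp_pos (-(κ * Real.log (-Real.log (1 - l))))).le
      linarith
  have h3 := hmono (Set.left_mem_Icc.mpr h12) (Set.right_mem_Icc.mpr h12) h12
  simp only at h3
  have h4 := hhalf l₂ h12 le_rfl
  have h5 : Ex l₂ f * Real.exp (-(κ * Real.log (-Real.log (1 - l₂))))
      ≤ 1 * Real.exp (-(κ * Real.log (-Real.log (1 - l₂)))) :=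
    mul_le_mul_of_nonneg_right (by linarith) (Real.exp_pos _).le
  have h6 := h3.trans h5
  rw [← le_div_iff₀ (Real.exp_pos _), one_mul, ← Real.exp_sub] at h6
  refine h6.trans (le_of_eq ?_)
  congr 1
  ring

end Threshold

/-! ### Weight enumerator and EXIT functions -/

section Code

variable {ι : Type} [Fintype ι] [DecidableEq ι]

open scoped Classical in
/-- Weight enumerator of `C` with a separate variable for each coordinate. -/
noncomputable def Z (C : Submodule (ZMod 2) (ι → ZMod 2)) (u : ι → ℝ) : ℝ :=
  ∑ c : C, ∏ i, if (c : ι → ZMod 2) i = 0 then 1 else u i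

lemma zmod_two_cases (a : ZMod 2) : a = 0 ∨ a = 1 := by
  revert a; decide

/-- Nonnegativity on the cube `[-1, 1]^ι`: the enumerator is multi-affine, and at the vertices it
is the sum of a character over the group `C`. -/
lemma Z_nonneg (C : Submodule (ZMod 2) (ι → ZMod 2)) (v : ι → ℝ) (hv : ∀ i, |v i| ≤ 1) :
    0 ≤ Z C v := by
  classical
  have hvert : ∀ x : ι → Bool, 0 ≤ Z C (fun i => if x i then 1 else -1) := by
    intro x
    set χ : C → ℝ := fun c => ∏ i, if (c : ι → ZMod 2) i = 0 then 1 else (if x i then 1 else -1)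
      with hχ
    have hmul : ∀ c d : C, χ (c + d) = χ c * χ d := by
      intro c d
      simp only [hχ]
      rw [← Finset.prod_mul_distrib]
      refine Finset.prod_congr rfl fun i _ => ?_
      have e : ((c + d : C) : ι → ZMod 2) i = (c : ι → ZMod 2) i + (d : ι → ZMod 2) i := rfl
      rw [e]
      have h11 : (1 + 1 : ZMod 2) = 0 := by decide
      rcases zmod_two_cases ((c : ι → ZMod 2) i) with h | h <;>
        rcases zmod_two_cases ((d : ι → ZMod 2) i) with h' | h' <;> rw [h, h'] <;>
        cases x i <;> simp [h11]
    have hS : (∑ c, χ c) * (∑ c, χ c) = (Fintype.card C : ℝ) * ∑ c, χ c := by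
      rw [Finset.sum_mul]
      have : ∀ c : C, χ c * ∑ d, χ d = ∑ d, χ d := by
        intro c
        rw [Finset.mul_sum]
        simp only [← hmul]
        exact Equiv.sum_comp (Equiv.addLeft c) χ
      simp only [this]
      simp
    have hcard : (0 : ℝ) < Fintype.card C := by exact_mod_cast Fintype.card_pos
    have h2 : 0 ≤ (Fintype.card C : ℝ) * ∑ c, χ c := by rw [← hS]; exact mul_self_nonneg _
    exact nonneg_of_mul_nonneg_right h2 hcard
  have hexp : Z C v = ∑ x : ι → Bool, (∏ i, if x i then (1 + v i) / 2 else (1 - v i) / 2) *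
      Z C (fun i => if x i then 1 else -1) := by
    unfold Z
    simp only [Finset.mul_sum]
    rw [Finset.sum_comm]
    refine Finset.sum_congr rfl fun c _ => ?_
    simp only [← Finset.prod_mul_distrib]
    have h := Fintype.prod_sum (κ := fun _ : ι => Bool)
      (fun i b => (if b then (1 + v i) / 2 else (1 - v i) / 2) *
        (if (c : ι → ZMod 2) i = 0 then 1 else (if b then 1 else -1)))
    rw [← h]
    refine Finset.prod_congr rfl fun i _ => ?_
    by_cases hc : (c : ι → ZMod 2) i = 0
    · simp [hc]; ring
    · simp [hc]; ring
  rw [hexp]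
  refine Finset.sum_nonneg fun x _ => mul_nonneg (Finset.prod_nonneg fun i _ => ?_) (hvert x)
  have := abs_le.mp (hv i)
  split_ifs <;> linarith

lemma Z_one_le (C : Submodule (ZMod 2) (ι → ZMod 2)) (u : ι → ℝ) (hu : ∀ i, 0 ≤ u i) :
    1 ≤ Z C u := by
  classical
  unfold Z
  have h := Finset.single_le_sum (s := univ)
    (f := fun c : C => ∏ i, if (c : ι → ZMod 2) i = 0 then 1 else u i)
    (fun c _ => Finset.prod_nonneg fun i _ => by split_ifs; exacts [zero_le_one, hu i])
    (Finset.mem_univ (0 : C))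
  simpa using h

/-- The enumerator is affine in each variable. -/
lemma Z_update (C : Submodule (ZMod 2) (ι → ZMod 2)) (u : ι → ℝ) (j : ι) (r : ℝ) :
    Z C (Function.update u j r) = Z C (Function.update u j 0) +
      r * (Z C (Function.update u j 1) - Z C (Function.update u j 0)) := by
  classical
  unfold Z
  rw [← Finset.sum_sub_distrib, Finset.mul_sum, ← Finset.sum_add_distrib]
  refine Finset.sum_congr rfl fun c _ => ?_
  have e : ∀ r : ℝ, (∏ i, if (c : ι → ZMod 2) i = 0 then 1 else Function.update u j r i)
      = (if (c : ι → ZMod 2) j = 0 then 1 else r) *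
        ∏ i ∈ univ.erase j, if (c : ι → ZMod 2) i = 0 then 1 else u i := by
    intro r
    rw [← Finset.mul_prod_erase univ _ (Finset.mem_univ j)]
    congr 1
    · simp
    · refine Finset.prod_congr rfl fun i hi => ?_
      rw [Function.update_of_ne (Finset.ne_of_mem_erase hi)]
  rw [e r, e 0, e 1]
  split_ifs <;> ring

/-- One coordinate of the comparison between the noisy and the erasure enumerators. By
`Z_nonneg` the codewords with `c j ≠ 0` contribute at most as much as those with `c j = 0`, and
`1 + (2 ^ l - 1) t ≤ (1 + t) ^ l` for `t ∈ [0, 1]` by concavity. -/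
lemma Z_step (C : Submodule (ZMod 2) (ι → ZMod 2)) (u : ι → ℝ) (hu0 : ∀ i, 0 ≤ u i)
    (hu1 : ∀ i, u i ≤ 1) (j : ι) {l : ℝ} (hl0 : 0 ≤ l) (hl1 : l ≤ 1) :
    Real.log (Z C (Function.update u j ((2 : ℝ) ^ l - 1))) ≤
      l * Real.log (Z C (Function.update u j 1)) +
        (1 - l) * Real.log (Z C (Function.update u j 0)) := by
  set A := Z C (Function.update u j 0) with hA
  set B := Z C (Function.update u j 1) - A with hB
  have upd_nn : ∀ r : ℝ, 0 ≤ r → ∀ i, 0 ≤ Function.update u j r i := by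
    intro r hr i
    by_cases h : i = j
    · subst h; simpa using hr
    · rw [Function.update_of_ne h]; exact hu0 i
  have hA1 : 1 ≤ A := Z_one_le C _ (upd_nn 0 le_rfl)
  have hB0 : 0 ≤ B := by
    rw [hB, hA, sub_nonneg]
    unfold Z
    refine Finset.sum_le_sum fun c _ => Finset.prod_le_prod (fun i _ => ?_) (fun i _ => ?_)
    · split_ifs
      · exact zero_le_one
      · exact upd_nn 0 le_rfl i
    · split_ifs
      · exact le_rfl
      · by_cases h : i = j
        · subst h; simp
        · simp [Function.update_of_ne h]
  have hBA : B ≤ A := by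
    have h := Z_nonneg C (Function.update u j (-1)) (by
      intro i
      by_cases h : i = j
      · subst h; simp
      · rw [Function.update_of_ne h, abs_of_nonneg (hu0 i)]; exact hu1 i)
    rw [Z_update, ← hA, ← hB] at h
    linarith
  have hApos : 0 < A := by linarith
  have hZ1 : Z C (Function.update u j 1) = A + B := by rw [hB]; ring
  rw [Z_update, ← hA, ← hB, hZ1]
  set t := B / A with ht
  have ht0 : 0 ≤ t := by positivity
  have ht1 : t ≤ 1 := by rw [ht, div_le_one hApos]; exact hBA
  have hBt : B = t * A := by rw [ht]; field_simp
  have h2 : (1 : ℝ) ≤ 2 ^ l := Real.one_le_rpow (by norm_num) hl0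
  have hconc : 1 + ((2 : ℝ) ^ l - 1) * t ≤ (1 + t) ^ l := by
    have h := (Real.concaveOn_rpow hl0 hl1).2 (Set.mem_Ici.mpr zero_le_one)
      (Set.mem_Ici.mpr (zero_le_two (α := ℝ))) (sub_nonneg.mpr ht1) ht0 (sub_add_cancel 1 t)
    simp only [smul_eq_mul, Real.one_rpow] at h
    have e : (1 - t) * 1 + t * 2 = 1 + t := by ring
    rw [e] at h
    linarith
  have hpos : 0 < 1 + ((2 : ℝ) ^ l - 1) * t := by
    have := mul_nonneg (sub_nonneg.mpr h2) ht0
    linarith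
  have e1 : A + (2 ^ l - 1) * B = A * (1 + (2 ^ l - 1) * t) := by rw [hBt]; ring
  have e2 : A + B = A * (1 + t) := by rw [hBt]; ring
  rw [e1, e2, Real.log_mul hApos.ne' hpos.ne', Real.log_mul hApos.ne' (by linarith)]
  have h3 := Real.log_le_log hpos hconc
  rw [Real.log_rpow (by linarith)] at h3
  linarith

/-- The weight enumerator at `2 ^ l - 1` is controlled by the expected logarithm of the number of
codewords supported on a Bernoulli(`l`) random set. -/
lemma Z_le (C : Submodule (ZMod 2) (ι → ZMod 2)) {l : ℝ} (hl0 : 0 ≤ l) (hl1 : l ≤ 1) :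
    Real.log (Z C (fun _ => (2 : ℝ) ^ l - 1)) ≤
      Ex l (fun x => Real.log (Z C (fun i => if x i then 1 else 0))) := by
  have h2 : (1 : ℝ) ≤ 2 ^ l := Real.one_le_rpow (by norm_num) hl0
  have h2' : (2 : ℝ) ^ l ≤ 2 := by
    have := Real.rpow_le_rpow_of_exponent_le (by norm_num : (1 : ℝ) ≤ 2) hl1
    simpa using this
  have key : ∀ s : Finset ι, Real.log (Z C (fun _ => (2 : ℝ) ^ l - 1)) ≤
      Ex l (fun x => Real.log (Z C (fun i => if i ∈ s then (if x i then 1 else 0)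
        else (2 : ℝ) ^ l - 1))) := by
    intro s
    induction s using Finset.induction_on with
    | empty => simp [Ex_const]
    | insert j s hj ih =>
      refine ih.trans ?_
      rw [← Ex_av l j (fun x => Real.log (Z C (fun i => if i ∈ insert j s then
        (if x i then 1 else 0) else (2 : ℝ) ^ l - 1)))]
      refine Ex_mono hl0 hl1 fun x => ?_
      set u : ι → ℝ := fun i => if i ∈ s then (if x i then 1 else 0) else (2 : ℝ) ^ l - 1 with hu
      have h := Z_step C u (fun i => by simp only [hu]; split_ifs <;> linarith)
        (fun i => by simp only [hu]; split_ifs <;> linarith) j hl0 hl1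
      have e0 : Function.update u j ((2 : ℝ) ^ l - 1) = u := by
        rw [Function.update_eq_self_iff]
        simp [hu, hj]
      have e : ∀ b : Bool, (fun i => if i ∈ insert j s then
          (if Function.update x j b i then (1 : ℝ) else 0) else (2 : ℝ) ^ l - 1)
          = Function.update u j (if b then 1 else 0) := by
        intro b
        funext i
        by_cases h : i = j
        · subst h; simp
        · simp [h, hu]
      rw [e0] at h
      simp only [av, e]
      simpa using h
  simpa using key univ

open scoped Classical in
/-- The EXIT event of coordinate `i`: when the coordinates marked `true` are erased, the others
do not determine the `i`-th coordinate of a codeword. -/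
noncomputable def exitInd (C : Submodule (ZMod 2) (ι → ZMod 2)) (i : ι) (x : ι → Bool) : ℝ :=
  if ∃ c ∈ C, c i ≠ 0 ∧ ∀ j, j ≠ i → c j ≠ 0 → x j = true then 1 else 0

variable (C : Submodule (ZMod 2) (ι → ZMod 2))

lemma ext_sq (i : ι) (x : ι → Bool) : exitInd C i x ^ 2 = exitInd C i x := by
  unfold exitInd; split_ifs <;> simp

lemma ext_nonneg (i : ι) (x : ι → Bool) : 0 ≤ exitInd C i x := by
  unfold exitInd; split_ifs <;> simp

lemma ext_inv (i : ι) : Inv i (exitInd C i) := by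
  intro x b
  have : (∃ c ∈ C, c i ≠ 0 ∧ ∀ j, j ≠ i → c j ≠ 0 → Function.update x i b j = true) ↔
      ∃ c ∈ C, c i ≠ 0 ∧ ∀ j, j ≠ i → c j ≠ 0 → x j = true := by
    refine exists_congr fun c => and_congr_right fun _ => and_congr_right fun _ =>
      forall_congr' fun j => ?_
    refine forall_congr' fun hj => ?_
    rw [Function.update_of_ne hj]
  classical
  exact if_congr this rfl rfl

lemma ext_mono (i j : ι) (x : ι → Bool) : 0 ≤ df j (exitInd C i) x := by
  unfold df
  rw [sub_nonneg]
  unfold exitInd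
  by_cases h : ∃ c ∈ C, c i ≠ 0 ∧ ∀ k, k ≠ i → c k ≠ 0 → Function.update x j false k = true
  · have h' : ∃ c ∈ C, c i ≠ 0 ∧ ∀ k, k ≠ i → c k ≠ 0 → Function.update x j true k = true := by
      obtain ⟨c, hc, h1, h2⟩ := h
      refine ⟨c, hc, h1, fun k hk hck => ?_⟩
      by_cases hkj : k = j
      · subst hkj; simp
      · have := h2 k hk hck
        rw [Function.update_of_ne hkj] at this ⊢
        exact this
    rw [if_pos h, if_pos h']
  · rw [if_neg h]
    split_ifs <;> simp

lemma ext_perm {π : Equiv.Perm ι} (hπ : PreservesCode C π) (i : ι) (x : ι → Bool) :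
    exitInd C i (x ∘ π) = exitInd C (π i) x := by
  have : (∃ c ∈ C, c i ≠ 0 ∧ ∀ j, j ≠ i → c j ≠ 0 → (x ∘ π) j = true) ↔
      ∃ c ∈ C, c (π i) ≠ 0 ∧ ∀ j, j ≠ π i → c j ≠ 0 → x j = true := by
    constructor
    · rintro ⟨c, hc, h1, h2⟩
      refine ⟨c ∘ π.symm, ?_, by simpa using h1, fun j hj hcj => ?_⟩
      · rw [hπ]
        simpa [Function.comp_assoc] using hc
      · have := h2 (π.symm j) (fun h => hj (by rw [← h]; simp)) hcj
        simpa using this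
    · rintro ⟨c, hc, h1, h2⟩
      refine ⟨c ∘ π, (hπ c).mp hc, h1, fun j hj hcj => ?_⟩
      exact h2 (π j) (fun h => hj (π.injective h)) hcj
  classical
  exact if_congr this rfl rfl

lemma Ex_perm (l : ℝ) (π : Equiv.Perm ι) (g : (ι → Bool) → ℝ) :
    Ex l (fun x => g (x ∘ π)) = Ex l g := by
  unfold Ex
  have hw : ∀ x : ι → Bool, wt l (x ∘ π) = wt l x := by
    intro x
    unfold wt
    exact Equiv.prod_comp π (fun i => if x i then l else 1 - l)
  have h := Equiv.sum_comp (Equiv.arrowCongr π.symm (Equiv.refl Bool)) (fun x => wt l x * g x)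
  rw [← h]
  refine Finset.sum_congr rfl fun x _ => ?_
  have e : (Equiv.arrowCongr π.symm (Equiv.refl Bool)) x = x ∘ π := by
    funext i; simp [Equiv.arrowCongr]
  rw [e, hw]

lemma Ex_ext_eq (hC : DoublyTransitive C) (hn : 2 ≤ Fintype.card ι) (l : ℝ) (i k : ι) :
    Ex l (exitInd C i) = Ex l (exitInd C k) := by
  have : Nontrivial ι := Fintype.one_lt_card_iff_nontrivial.mp (by omega)
  obtain ⟨i', hi'⟩ := exists_ne i
  obtain ⟨k', hk'⟩ := exists_ne k
  obtain ⟨π, hπ, h1, -⟩ := hC i i' k k' hi'.symm hk'.symm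
  rw [← Ex_perm l π (exitInd C i)]
  simp only [ext_perm C hπ, h1]

/-- The influences of the other coordinates on the EXIT event of `i` are equal: the stabilizer of
`i` acts transitively on them. -/
lemma Ex_df_eq (hC : DoublyTransitive C) (l : ℝ) (i j k : ι) (hj : j ≠ i) (hk : k ≠ i) :
    Ex l (df j (exitInd C i)) = Ex l (df k (exitInd C i)) := by
  obtain ⟨π, hπ, h1, h2⟩ := hC i j i k hj.symm hk.symm
  rw [← Ex_perm l π (df j (exitInd C i))]
  congr 1
  funext x
  have e : ∀ b, Function.update (x ∘ π) j b = Function.update x k b ∘ π := by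
    intro b
    rw [← h2]
    funext m
    by_cases h : m = j
    · subst h; simp
    · simp [Function.update_of_ne h, Function.update_of_ne (fun h' => h (π.injective h'))]
  simp only [df, e, ext_perm C hπ, h1]

open scoped Classical in
/-- Among the unerased coordinates at most `dim C` have their EXIT event: choosing for each of them
a witnessing codeword gives linearly independent codewords. -/
lemma card_outside (x : ι → Bool) :
    (∑ i, (if x i then 0 else 1) * exitInd C i x) ≤ Module.finrank (ZMod 2) C := by
  set J := univ.filter (fun i => x i = false ∧
    ∃ c ∈ C, c i ≠ 0 ∧ ∀ j, j ≠ i → c j ≠ 0 → x j = true) with hJ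
  have e : (∑ i, (if x i then 0 else 1) * exitInd C i x) = J.card := by
    rw [hJ, Finset.card_filter]
    push_cast
    refine Finset.sum_congr rfl fun i _ => ?_
    unfold exitInd
    cases x i <;> simp
  rw [e]
  norm_cast
  have hch : ∀ i : J, ∃ c : C, (c : ι → ZMod 2) i = 1 ∧
      ∀ j : J, j ≠ i → (c : ι → ZMod 2) j = 0 := by
    rintro ⟨i, hi⟩
    rw [hJ, Finset.mem_filter] at hi
    obtain ⟨-, -, c, hc, h1, h2⟩ := hi
    refine ⟨⟨c, hc⟩, ?_, ?_⟩
    · exact (zmod_two_cases (c i)).resolve_left h1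
    · rintro ⟨j, hj⟩ hji
      by_contra hne
      have h3 := h2 j (fun h => hji (Subtype.ext h)) hne
      rw [hJ, Finset.mem_filter] at hj
      rw [hj.2.1] at h3
      simp at h3
  choose c hc1 hc2 using hch
  have hli : LinearIndependent (ZMod 2) c := by
    rw [Fintype.linearIndependent_iff]
    intro g hg i
    have h := congrArg (fun y : C => (y : ι → ZMod 2) i) hg
    simp only [Submodule.coe_sum, Submodule.coe_smul, Finset.sum_apply, Pi.smul_apply,
      smul_eq_mul, Submodule.coe_zero, Pi.zero_apply] at h
    rw [Finset.sum_eq_single i] at h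
    · rw [hc1, mul_one] at h; exact h
    · intro j _ hj
      rw [hc2 j i hj.symm, mul_zero]
    · simp
  have := hli.fintype_card_le_finrank
  simpa using this

/-- The easy half of the area theorem: the EXIT function at erasure probability `l` is at most
`rate / (1 - l)`. -/
lemma exit_le (hC : DoublyTransitive C) (hn : 2 ≤ Fintype.card ι) {l : ℝ} (hl0 : 0 ≤ l)
    (hl1 : l < 1) (i : ι) : Ex l (exitInd C i) ≤ codeRate C / (1 - l) := by
  have h := Ex_mono hl0 hl1.le (card_outside C)
  rw [Ex_const, Ex_sum] at h
  have e : ∀ k, Ex l (fun x => (if x k then 0 else 1) * exitInd C k x) =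
      (1 - l) * Ex l (exitInd C i) := by
    intro k
    rw [← Ex_av l k, Ex_ext_eq C hC hn l i k, ← Ex_smul]
    congr 1
    funext x
    simp only [av, ext_inv C k x, Function.update_self]
    simp
  simp only [e] at h
  rw [Finset.sum_const, Finset.card_univ, nsmul_eq_mul] at h
  have hn0 : (0 : ℝ) < Fintype.card ι := by exact_mod_cast (by omega : 0 < Fintype.card ι)
  unfold codeRate
  rw [le_div_iff₀ (by linarith), le_div_iff₀ hn0]
  linarith

/-- The enumerator at the indicator of the erased set `x` counts the codewords supported on it, and
these are supported on the coordinates whose EXIT event occurs. -/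
lemma log_Z_le (x : ι → Bool) :
    Real.log (Z C (fun i => if x i then 1 else 0)) ≤ ∑ i, exitInd C i x := by
  classical
  set D := univ.filter (fun c : C => ∀ i, (c : ι → ZMod 2) i ≠ 0 → x i = true) with hD
  set J := univ.filter (fun i => ∃ c ∈ C, c i ≠ 0 ∧ ∀ j, j ≠ i → c j ≠ 0 → x j = true) with hJ
  have e1 : Z C (fun i => if x i then 1 else 0) = D.card := by
    rw [hD, Finset.card_filter]
    unfold Z
    push_cast
    refine Finset.sum_congr rfl fun c _ => ?_
    split_ifs with h
    · refine Finset.prod_eq_one fun i _ => ?_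
      by_cases hc : (c : ι → ZMod 2) i = 0
      · simp [hc]
      · simp [h i hc]
    · push Not at h
      obtain ⟨i, hi, hx⟩ := h
      refine Finset.prod_eq_zero (Finset.mem_univ i) ?_
      simp [hi, hx]
  have e2 : ∑ i, exitInd C i x = J.card := by
    rw [hJ, Finset.card_filter]
    push_cast
    rfl
  have hcard : D.card ≤ 2 ^ J.card := by
    have h := Finset.card_le_card_of_injOn (s := D) (t := J.powerset)
      (fun c => univ.filter (fun i => (c : ι → ZMod 2) i ≠ 0)) (by
        intro c hc
        have hc' := (Finset.mem_filter.mp (Finset.mem_coe.mp hc)).2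
        simp only [Finset.coe_powerset, Set.mem_preimage, Set.mem_powerset_iff]
        intro i hi
        have hi' : (c : ι → ZMod 2) i ≠ 0 := by simpa using hi
        simp only [hJ, Finset.coe_filter, Finset.mem_univ, true_and]
        exact ⟨c, c.2, hi', fun j _ hj => hc' j hj⟩) (by
        intro c _ d _ hcd
        ext i
        have h := Finset.ext_iff.mp hcd i
        simp only [Finset.mem_filter, Finset.mem_univ, true_and] at h
        rcases zmod_two_cases ((c : ι → ZMod 2) i) with h1 | h1 <;>
          rcases zmod_two_cases ((d : ι → ZMod 2) i) with h2 | h2 <;> simp_all)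
    rwa [Finset.card_powerset] at h
  have hZ1 : 1 ≤ Z C (fun i => if x i then 1 else 0) :=
    Z_one_le C _ (fun i => by split_ifs <;> norm_num)
  rw [e2]
  have h1 : Real.log (Z C (fun i => if x i then 1 else 0)) ≤ Real.log ((2 : ℝ) ^ J.card) := by
    refine Real.log_le_log (by linarith) ?_
    rw [e1]
    exact_mod_cast hcard
  rw [Real.log_pow] at h1
  have h2 : Real.log 2 ≤ 1 := by
    have := Real.log_le_sub_one_of_pos (by norm_num : (0 : ℝ) < 2)
    linarith
  have h3 : (J.card : ℝ) * Real.log 2 ≤ J.card * 1 := by gcongr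
  linarith

/-- The weight enumerator is close to `1` when the EXIT function is `o(1 / n)`. -/
lemma Z_le_exp (hC : DoublyTransitive C) (hn : 2 ≤ Fintype.card ι) {l : ℝ} (hl0 : 0 ≤ l)
    (hl1 : l ≤ 1) (i : ι) :
    Z C (fun _ => (2 : ℝ) ^ l - 1) ≤ Real.exp (Fintype.card ι * Ex l (exitInd C i)) := by
  have h := (Z_le C hl0 hl1).trans (Ex_mono hl0 hl1 (log_Z_le C))
  rw [Ex_sum, Finset.sum_congr rfl (fun k _ => Ex_ext_eq C hC hn l k i), Finset.sum_const,
    Finset.card_univ, nsmul_eq_mul] at h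
  have h2 : (1 : ℝ) ≤ 2 ^ l := Real.one_le_rpow (by norm_num) hl0
  have hZ1 : 1 ≤ Z C (fun _ => (2 : ℝ) ^ l - 1) := Z_one_le C _ (fun i => by linarith)
  rwa [← Real.log_le_iff_le_exp (by linarith)]

end Code

/-! ### Error probability on the binary symmetric channel -/

section Decoding

variable {ι : Type} [Fintype ι] [DecidableEq ι] (C : Submodule (ZMod 2) (ι → ZMod 2))

/-- The probability of an error pattern as the square of a product over coordinates. -/
lemma prob_eq {p : ℝ} (hp0 : 0 < p) (hp1 : p < 1 / 2) (z : ι → ZMod 2) :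
    p ^ hammingNorm z * (1 - p) ^ (Fintype.card ι - hammingNorm z) =
      (∏ i, if z i = 0 then √(1 - p) else √p) ^ 2 := by
  rw [← Finset.prod_pow]
  have e : ∀ i, (if z i = 0 then √(1 - p) else √p) ^ 2 = if z i = 0 then 1 - p else p := by
    intro i
    split_ifs
    · exact Real.sq_sqrt (by linarith)
    · exact Real.sq_sqrt hp0.le
  simp only [e]
  rw [Finset.prod_ite, Finset.prod_const, Finset.prod_const, mul_comm]
  have h1 : hammingNorm z = (univ.filter (fun i => ¬ z i = 0)).card := rfl
  have h2 := Finset.card_filter_add_card_filter_not (s := (univ : Finset ι)) (fun i => z i = 0)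
  rw [Finset.card_univ] at h2
  rw [h1]
  congr 2
  omega

/-- The Bhattacharyya union bound. -/
lemma Perr_le {p : ℝ} (hp0 : 0 < p) (hp1 : p < 1 / 2) :
    Perr C p ≤ Z C (fun _ => √(4 * p * (1 - p))) - 1 := by
  classical
  set S : (ι → ZMod 2) → ℝ := fun z => ∏ i, if z i = 0 then √(1 - p) else √p with hS
  have hS0 : ∀ z, 0 ≤ S z := fun z => Finset.prod_nonneg fun i _ => by
    split_ifs <;> exact Real.sqrt_nonneg _
  have hSle : ∀ z y : ι → ZMod 2, hammingNorm y ≤ hammingNorm z → S z ≤ S y := by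
    intro z y h
    refine le_of_sq_le_sq ?_ (hS0 y)
    rw [hS]
    simp only
    rw [← prob_eq hp0 hp1, ← prob_eq hp0 hp1]
    have hz : hammingNorm z ≤ Fintype.card ι := hammingNorm_le_card_fintype
    have e1 : hammingNorm z = hammingNorm y + (hammingNorm z - hammingNorm y) := by omega
    have e2 : Fintype.card ι - hammingNorm y =
      (hammingNorm z - hammingNorm y) + (Fintype.card ι - hammingNorm z) := by omega
    rw [e2, pow_add (1 - p)]
    nth_rewrite 1 [e1]
    rw [pow_add, mul_assoc]
    have : p ^ (hammingNorm z - hammingNorm y) ≤ (1 - p) ^ (hammingNorm z - hammingNorm y) :=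
      pow_le_pow_left₀ hp0.le (by linarith) _
    have h1p : 0 < 1 - p := by linarith
    gcongr
  have h1 : Perr C p ≤ ∑ z : ι → ZMod 2, ∑ c ∈ univ.erase (0 : C), S z * S (z + c) := by
    unfold Perr
    -- the `Fintype` instance on words inside `Perr` is the classical one
    refine le_trans (Finset.sum_le_sum
      (g := fun z => ∑ c ∈ univ.erase (0 : C), S z * S (z + c)) fun z _ => ?_)
      (le_of_eq (by congr!))
    have hnn : ∀ c : C, 0 ≤ S z * S (z + c) := fun c => mul_nonneg (hS0 _) (hS0 _)
    split_ifs with h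
    · obtain ⟨x, hx, hx0, hw⟩ := h
      have h2 : S z * S (z + x) ≤ ∑ c ∈ univ.erase (0 : C), S z * S (z + c) :=
        Finset.single_le_sum (f := fun c : C => S z * S (z + c)) (fun c _ => hnn c)
          (a := ⟨x, hx⟩) (by simpa using hx0)
      refine le_trans ?_ h2
      rw [prob_eq hp0 hp1, sq]
      exact mul_le_mul_of_nonneg_left (hSle z (z + x) hw) (hS0 z)
    · exact Finset.sum_nonneg fun c _ => hnn c
  refine h1.trans (le_of_eq ?_)
  rw [Finset.sum_comm]
  have h2 : ∀ c : C, ∑ z : ι → ZMod 2, S z * S (z + c) =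
      ∏ i, if (c : ι → ZMod 2) i = 0 then 1 else √(4 * p * (1 - p)) := by
    intro c
    simp only [hS, ← Finset.prod_mul_distrib]
    have h := Fintype.prod_sum (κ := fun _ : ι => ZMod 2)
      (fun i a => (if a = 0 then √(1 - p) else √p) *
        (if a + (c : ι → ZMod 2) i = 0 then √(1 - p) else √p))
    simp only [Pi.add_apply]
    rw [← h]
    refine Finset.prod_congr rfl fun i _ => ?_
    have hsum : ∀ F : ZMod 2 → ℝ, ∑ a, F a = F 0 + F 1 := fun F => Fin.sum_univ_two F
    rw [hsum]
    have h11 : (1 + 1 : ZMod 2) = 0 := by decide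
    have hp' := Real.mul_self_sqrt hp0.le
    have hq' := Real.mul_self_sqrt (by linarith : 0 ≤ 1 - p)
    rcases zmod_two_cases ((c : ι → ZMod 2) i) with hc | hc
    · simp [hc, hp', hq']
    · have e : √(4 * p * (1 - p)) = 2 * (√p * √(1 - p)) := by
        rw [mul_assoc, Real.sqrt_mul (by norm_num), Real.sqrt_mul hp0.le]
        congr 1
        rw [show (4 : ℝ) = 2 ^ 2 by norm_num]
        exact Real.sqrt_sq (by norm_num)
      simp [hc, h11, e]
      ring
  simp only [h2]
  unfold Z
  rw [← Finset.add_sum_erase univ _ (Finset.mem_univ (0 : C))]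
  simp

lemma Perr_nonneg {p : ℝ} (hp0 : 0 < p) (hp1 : p < 1 / 2) : 0 ≤ Perr C p := by
  unfold Perr
  refine Finset.sum_nonneg fun z _ => ?_
  have : 0 < 1 - p := by linarith
  split_ifs <;> positivity

lemma Z_mono {r s : ℝ} (hr : 0 ≤ r) (hrs : r ≤ s) : Z C (fun _ => r) ≤ Z C (fun _ => s) := by
  unfold Z
  refine Finset.sum_le_sum fun c _ => Finset.prod_le_prod (fun i _ => ?_) (fun i _ => ?_)
  · split_ifs
    · exact zero_le_one
    · exact hr
  · split_ifs
    · exact le_rfl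
    · exact hrs

/-- The exponent for which the EXIT function at `1 - R ^ expo` is at most `n ^ (-2)`. In
`exit_small` the factor `log (1 / δ)` grows by at least `exp 64`, and `64 / 32 = 2`, where `32` is
the denominator in `sharp`. -/
noncomputable def expo : ℝ := Real.exp (-64) / 2

lemma expo_pos : 0 < expo := by unfold expo; positivity

lemma expo_le : expo ≤ 1 / 2 := by
  unfold expo
  have : Real.exp (-64) ≤ 1 := Real.exp_le_one_iff.mpr (by norm_num)
  linarith

/-- At erasure probability `1 - R ^ expo` the EXIT function of a doubly transitive code of rate at
most `2 R` is at most `n ^ (-2)`. -/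
lemma exit_small (hC : DoublyTransitive C) (hn : 2 ≤ Fintype.card ι) {R : ℝ} (hR : 0 < R)
    (hR0 : R ≤ Real.exp (-(5 / expo))) (hrate : codeRate C ≤ 2 * R) (i : ι) :
    Ex (1 - R ^ expo) (exitInd C i) ≤ Real.exp (-(2 * Real.log (Fintype.card ι))) := by
  have he := expo_pos
  have he2 := expo_le
  set y := -Real.log R with hy
  have hy5 : 5 / expo ≤ y := by
    have := Real.log_le_log hR hR0
    rw [Real.log_exp] at this
    linarith
  have hy5' : 5 ≤ expo * y := by rw [div_le_iff₀ he] at hy5; linarith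
  have hy10 : 10 ≤ y := by nlinarith
  have hRy : R = Real.exp (-y) := by rw [hy, neg_neg, Real.exp_log hR]
  have hlog4 : Real.log 4 ≤ 3 := by
    have := Real.log_le_sub_one_of_pos (by norm_num : (0 : ℝ) < 4)
    linarith
  have hδ1 : R ^ expo = Real.exp (-(expo * y)) := by
    rw [Real.rpow_def_of_pos hR]
    congr 1
    rw [hy]; ring
  have hδ2 : 4 * R = Real.exp (Real.log 4 - y) := by
    rw [Real.exp_sub, Real.exp_log (by norm_num), hRy, Real.exp_neg]; ring
  have h12 : 4 * R ≤ R ^ expo := by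
    rw [hδ1, hδ2]
    refine Real.exp_le_exp.mpr ?_
    nlinarith
  have hlt : R ^ expo < 1 := by
    rw [hδ1]; exact Real.exp_lt_one_iff.mpr (by linarith)
  have hL1 : -Real.log (1 - (1 - R ^ expo)) = expo * y := by
    rw [sub_sub_cancel, hδ1, Real.log_exp, neg_neg]
  have hL2 : -Real.log (1 - (1 - 4 * R)) = y - Real.log 4 := by
    rw [sub_sub_cancel, hδ2, Real.log_exp]; ring
  have h := sharp (l₁ := 1 - R ^ expo) (l₂ := 1 - 4 * R) (by linarith) (by linarith)
    (by linarith) (by rw [hL1]; linarith) hn (exitInd C i) i (ext_sq C i)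
    (fun j x => ext_mono C i j x) (ext_inv C i)
    (fun l j k hj hk => Ex_df_eq C hC l i j k hj hk) (by
      intro l hl1 hl2
      refine (exit_le C hC hn (by linarith) (by linarith) i).trans ?_
      rw [div_le_iff₀ (by linarith)]
      linarith)
  refine h.trans (Real.exp_le_exp.mpr ?_)
  rw [hL1, hL2]
  have h64 : 64 ≤ Real.log (y - Real.log 4) - Real.log (expo * y) := by
    have h1 := Real.log_le_log (by linarith : 0 < y / 2) (by linarith : y / 2 ≤ y - Real.log 4)
    rw [Real.log_div (by linarith) (by norm_num)] at h1
    rw [Real.log_mul he.ne' (by linarith)]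
    have h2 : Real.log expo = -64 - Real.log 2 := by
      unfold expo
      rw [Real.log_div (Real.exp_pos _).ne' (by norm_num), Real.log_exp]
    linarith
  have hn0 : 0 ≤ Real.log (Fintype.card ι : ℝ) := Real.log_natCast_nonneg _
  nlinarith

/-- Quantitative form of the theorem for a single code, with `a = 1 - R ^ (expo / 2)`. -/
lemma Perr_small (hC : DoublyTransitive C) (hn : 2 ≤ Fintype.card ι) {R : ℝ} (hR : 0 < R)
    (hR0 : R ≤ Real.exp (-(5 / expo))) (hrate : codeRate C ≤ 2 * R)
    {p : ℝ} (hp0 : 0 < p) (hp1 : p < 1 / 2)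
    (hp : (4 * p * (1 - p)) ^ (1 / (4 * Real.log 2)) < 1 - R ^ (expo / 2)) :
    Perr C p ≤ Real.exp (1 / (Fintype.card ι : ℝ)) - 1 := by
  have he := expo_pos
  have hne : Nonempty ι := Fintype.card_pos_iff.mp (by omega)
  obtain ⟨i⟩ := hne
  set n : ℝ := (Fintype.card ι : ℝ) with hnd
  have hn0 : 0 < n := by rw [hnd]; exact_mod_cast (by omega : 0 < Fintype.card ι)
  have hx := exit_small C hC hn hR hR0 hrate i
  have hlogR : Real.log R * expo ≤ -5 := by
    have := Real.log_le_log hR hR0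
    rw [Real.log_exp] at this
    have h2 := mul_le_mul_of_nonneg_right this he.le
    have h3 : -(5 / expo) * expo = -5 := by field_simp
    linarith
  set d := R ^ expo with hd
  set s := R ^ (expo / 2) with hs
  have hs0 : 0 < s := Real.rpow_pos_of_pos hR _
  have hds : d = s ^ 2 := by
    rw [hd, hs, sq, ← Real.rpow_add hR]; congr 1; ring
  have hs2 : s ≤ 1 / 2 := by
    rw [hs, Real.rpow_def_of_pos hR]
    have h1 : Real.log R * (expo / 2) ≤ -1 := by linarith
    refine (Real.exp_le_exp.mpr h1).trans ?_
    rw [Real.exp_neg, one_div]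
    refine inv_anti₀ (by norm_num) ?_
    have := Real.add_one_le_exp (1 : ℝ)
    linarith
  have hd0 : 0 < d := by rw [hds]; positivity
  have hd1 : d ≤ 1 := by rw [hds]; nlinarith
  have hlog2 : 1 / 2 ≤ Real.log 2 := by linarith [Real.log_two_gt_d9]
  have hlog2' : Real.log 2 ≤ 1 := by linarith [Real.log_two_lt_d9]
  have hw0 : 0 < 4 * p * (1 - p) := mul_pos (by linarith) (by linarith)
  have hw1 : 4 * p * (1 - p) ≤ 1 := by nlinarith [sq_nonneg (p - 1 / 2)]
  have hsq : √(4 * p * (1 - p)) ≤ 1 - s := by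
    refine le_trans ?_ hp.le
    rw [Real.sqrt_eq_rpow]
    refine Real.rpow_le_rpow_of_exponent_ge hw0 hw1 ?_
    refine one_div_le_one_div_of_le (by norm_num) ?_
    linarith
  have h2 : 1 - s ≤ (2 : ℝ) ^ (1 - d) - 1 := by
    rw [Real.rpow_sub (by norm_num), Real.rpow_one, div_eq_mul_inv,
      ← Real.rpow_neg (by norm_num), Real.rpow_def_of_pos (by norm_num)]
    have h3 := Real.add_one_le_exp (Real.log 2 * -d)
    have h4 : s ^ 2 ≤ s / 2 := by nlinarith
    nlinarith
  refine (Perr_le C hp0 hp1).trans ?_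
  have h5 := (Z_mono C (Real.sqrt_nonneg _) (hsq.trans h2)).trans
    (Z_le_exp C hC hn (by linarith) (by linarith) i)
  refine (sub_le_sub_right h5 1).trans ?_
  refine sub_le_sub_right (Real.exp_le_exp.mpr ?_) 1
  calc n * Ex (1 - d) (exitInd C i) ≤ n * Real.exp (-(2 * Real.log n)) :=
        mul_le_mul_of_nonneg_left hx hn0.le
    _ = 1 / n := by
        rw [show -(2 * Real.log n) = -(Real.log n + Real.log n) by ring, Real.exp_neg,
          Real.exp_add, Real.exp_log hn0]
        field_simp

end Decoding

lemma tendsto_Perr {R : ℝ} (hR : 0 < R) (hR0 : R ≤ Real.exp (-(5 / expo)))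
    (n : ℕ → ℕ) (hn : StrictMono n)
    (C : (k : ℕ) → Submodule (ZMod 2) (Fin (n k) → ZMod 2))
    (hC : ∀ k, DoublyTransitive (C k))
    (hrate : Filter.Tendsto (fun k => codeRate (C k)) Filter.atTop (nhds R))
    {p : ℝ} (hp0 : 0 < p) (hp1 : p < 1 / 2)
    (hp : (4 * p * (1 - p)) ^ (1 / (4 * Real.log 2)) < 1 - R ^ (expo / 2)) :
    Filter.Tendsto (fun k => Perr (C k) p) Filter.atTop (nhds 0) := by
  have hlim : Filter.Tendsto (fun k => Real.exp (1 / (n k : ℝ)) - 1) Filter.atTop (nhds 0) := by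
    have h1 : Filter.Tendsto (fun k => 1 / (n k : ℝ)) Filter.atTop (nhds 0) :=
      tendsto_one_div_atTop_nhds_zero_nat.comp hn.tendsto_atTop
    have h2 := (Real.continuous_exp.tendsto 0).comp h1
    rw [Real.exp_zero] at h2
    simpa using h2.sub_const 1
  refine tendsto_of_tendsto_of_tendsto_of_le_of_le' tendsto_const_nhds hlim
    (Filter.Eventually.of_forall fun k => Perr_nonneg (C k) hp0 hp1) ?_
  filter_upwards [hrate.eventually (gt_mem_nhds (by linarith : R < 2 * R)),
    hn.tendsto_atTop.eventually_ge_atTop 2] with k hk1 hk2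
  have := Perr_small (C k) (hC k) (by simpa using hk2) hR hR0 hk1.le hp0 hp1 hp
  simpa using this

end BSC

/-- doubly transitive codes of sufficiently small rate decode errors on
BSC(p) w.h.p.; in particular for every fixed `p` all such codes of small enough rate do. -/
theorem doubly_transitive_small_rate_BSC :
    ∃ R₀ η : ℝ, 0 < R₀ ∧ 0 < η ∧
      ((∀ R : ℝ, 0 < R → R ≤ R₀ →
        ∀ n : ℕ → ℕ, StrictMono n → (∀ k, 0 < n k) →
        ∀ C : (k : ℕ) → Submodule (ZMod 2) (Fin (n k) → ZMod 2),
          (∀ k, DoublyTransitive (C k)) →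
          Filter.Tendsto (fun k => codeRate (C k)) Filter.atTop (nhds R) →
          ∃ a : ℝ, 1 - R ^ η ≤ a ∧
            ∀ p : ℝ, 0 < p → p < 1 / 2 →
              (4 * p * (1 - p)) ^ (1 / (4 * Real.log 2)) < a →
              Filter.Tendsto (fun k => Perr (C k) p) Filter.atTop (nhds 0)) ∧
      (∀ p : ℝ, 0 < p → p < 1 / 2 →
        ∃ R₁ : ℝ, 0 < R₁ ∧
          ∀ R : ℝ, 0 < R → R ≤ R₁ →
          ∀ n : ℕ → ℕ, StrictMono n → (∀ k, 0 < n k) →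
          ∀ C : (k : ℕ) → Submodule (ZMod 2) (Fin (n k) → ZMod 2),
            (∀ k, DoublyTransitive (C k)) →
            Filter.Tendsto (fun k => codeRate (C k)) Filter.atTop (nhds R) →
            Filter.Tendsto (fun k => Perr (C k) p) Filter.atTop (nhds 0))) := by
  refine ⟨Real.exp (-(5 / BSC.expo)), BSC.expo / 2, Real.exp_pos _, half_pos BSC.expo_pos, ?_, ?_⟩
  · intro R hR hR0 n hn _ C hC hrate
    exact ⟨1 - R ^ (BSC.expo / 2), le_rfl, fun p hp0 hp1 hp =>
      BSC.tendsto_Perr hR hR0 n hn C hC hrate hp0 hp1 hp⟩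
  · intro p hp0 hp1
    set W := (4 * p * (1 - p)) ^ (1 / (4 * Real.log 2)) with hW
    have hη : 0 < BSC.expo / 2 := half_pos BSC.expo_pos
    have hW1 : W < 1 := by
      have hlog2 : 0 < Real.log 2 := Real.log_pos (by norm_num)
      refine Real.rpow_lt_one (mul_nonneg (by linarith) (by linarith)) ?_ (by positivity)
      nlinarith [sq_pos_of_pos (by linarith : 0 < 1 / 2 - p)]
    refine ⟨min (Real.exp (-(5 / BSC.expo))) (((1 - W) / 2) ^ (1 / (BSC.expo / 2))),
      lt_min (Real.exp_pos _) (Real.rpow_pos_of_pos (by linarith) _), ?_⟩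
    intro R hR hR1 n hn _ C hC hrate
    refine BSC.tendsto_Perr hR (hR1.trans (min_le_left _ _)) n hn C hC hrate hp0 hp1 ?_
    have h := Real.rpow_le_rpow hR.le (hR1.trans (min_le_right _ _)) hη.le
    rw [← Real.rpow_mul (by linarith), one_div_mul_cancel hη.ne', Real.rpow_one] at h
    rw [← hW]
    linarith
end

section
/- Let C ⊆ F_2^n be a binary linear code. Then for every λ ∈ (0,1), the function μ_C is differentiable at λ and dμ_C/dλ (λ) = n · (1 - h(1-λ)), where h is the average EXIT function of C. -/
/-!
The derivative of `muC C` is computed by the Margulis–Russo formula (`hasDerivAt_subset_sum`): for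
any function `F` on subsets of an `n`-element set,
`d/dλ E_{S ~ λ} F(S) = ∑ i, E_{R ~ λ, i ∉ R} (F(R ∪ {i}) - F(R))`.
For `F = fC C`, adding one coordinate raises the rank by `0` or `1` (`rankC_le_insert`,
`rankC_insert_le`), so the increment of `F` is one minus the indicator that occurs in `Pbi C i`.
Since the weights of the sets `R` avoiding `i` add up to `1`, the `i`-th summand is
`1 - Pbi C i (1 - λ) / (1 - λ)`, and summing over `i` gives `n (1 - h(1 - λ))`.
-/

open Finset Filter

theorem rankC_le_insert {ι : Type} [Fintype ι] [DecidableEq ι]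
    (C : Submodule (ZMod 2) (ι → ZMod 2)) (i : ι) (R : Finset ι) :
    rankC C R ≤ rankC C (insert i R) := by
  unfold rankC
  let q : {j // j ∈ R} → {j // j ∈ insert i R} := fun j => ⟨j.1, mem_insert_of_mem j.2⟩
  have h : C.map (LinearMap.funLeft (ZMod 2) (ZMod 2) (Subtype.val : {j // j ∈ R} → ι)) =
      (C.map (LinearMap.funLeft (ZMod 2) (ZMod 2)
        (Subtype.val : {j // j ∈ insert i R} → ι))).map
        (LinearMap.funLeft (ZMod 2) (ZMod 2) q) := by
    rw [← Submodule.map_comp]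
    rfl
  rw [h]
  exact Submodule.finrank_map_le _ _

/-- The projection of `C` to `insert i R` embeds into the product of its projection to `R` with the
one-dimensional space of values at the coordinate `i`. -/
theorem rankC_insert_le {ι : Type} [Fintype ι] [DecidableEq ι]
    (C : Submodule (ZMod 2) (ι → ZMod 2)) (i : ι) (R : Finset ι) :
    rankC C (insert i R) ≤ rankC C R + 1 := by
  unfold rankC
  let q : {j // j ∈ R} → {j // j ∈ insert i R} := fun j => ⟨j.1, mem_insert_of_mem j.2⟩
  let g : ({j // j ∈ insert i R} → ZMod 2) →ₗ[ZMod 2] ({j // j ∈ R} → ZMod 2) × ZMod 2 :=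
    (LinearMap.funLeft (ZMod 2) (ZMod 2) q).prod (LinearMap.proj ⟨i, mem_insert_self i R⟩)
  have hg : Function.Injective g := by
    intro x y hxy
    have hR : ∀ j, x (q j) = y (q j) := fun j => congrFun (congrArg Prod.fst hxy) j
    have hi : x ⟨i, mem_insert_self i R⟩ = y ⟨i, mem_insert_self i R⟩ := congrArg Prod.snd hxy
    funext ⟨j, hj⟩
    rcases mem_insert.1 hj with rfl | hj'
    · exact hi
    · exact hR ⟨j, hj'⟩
  set V := C.map (LinearMap.funLeft (ZMod 2) (ZMod 2)
    (Subtype.val : {j // j ∈ insert i R} → ι)) with hV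
  set W := C.map (LinearMap.funLeft (ZMod 2) (ZMod 2) (Subtype.val : {j // j ∈ R} → ι)) with hW
  have hle : ∀ v : V, (g v).1 ∈ W := by
    rintro ⟨v, hv⟩
    obtain ⟨c, hc, rfl⟩ := hv
    exact ⟨c, hc, rfl⟩
  let k : V →ₗ[ZMod 2] W × ZMod 2 :=
    (((LinearMap.fst _ _ _ ∘ₗ g).domRestrict V).codRestrict W hle).prod
      ((LinearMap.snd _ _ _ ∘ₗ g).domRestrict V)
  have hk : Function.Injective k := by
    intro x y hxy
    apply Subtype.ext
    apply hg
    exact Prod.ext (congrArg (fun z => (z.1 : {j // j ∈ R} → ZMod 2)) hxy)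
      (congrArg (fun z => z.2) hxy)
  have := LinearMap.finrank_le_finrank_of_injective hk
  simpa using this

theorem fC_insert_sub {ι : Type} [Fintype ι] [DecidableEq ι]
    (C : Submodule (ZMod 2) (ι → ZMod 2)) (i : ι) (R : Finset ι) (hi : i ∉ R) :
    fC C (insert i R) - fC C R =
      1 - (if rankC C R < rankC C (insert i R) then (1 : ℝ) else 0) := by
  have h1 := rankC_le_insert C i R
  have h2 := rankC_insert_le C i R
  unfold fC
  rw [card_insert_of_notMem hi]
  split_ifs with h
  · have : rankC C (insert i R) = rankC C R + 1 := by omega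
    rw [this]; push_cast; ring
  · have : rankC C (insert i R) = rankC C R := by omega
    rw [this]; push_cast; ring

/-- The Margulis–Russo formula for an arbitrary real function on the subsets of a finite type. -/
theorem hasDerivAt_subset_sum {ι : Type} [Fintype ι] [DecidableEq ι]
    (F : Finset ι → ℝ) (l : ℝ) :
    HasDerivAt (fun x : ℝ => ∑ S : Finset ι, x ^ #S * (1 - x) ^ (Fintype.card ι - #S) * F S)
      (∑ i : ι, ∑ R ∈ ((univ : Finset ι).erase i).powerset,
        l ^ #R * (1 - l) ^ (Fintype.card ι - 1 - #R) * (F (insert i R) - F R)) l := by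
  -- The contribution of the coordinate `i` to the derivative of the summand of `S`.
  let G : ι → Finset ι → ℝ := fun i S =>
    if i ∈ S then l ^ (#S - 1) * (1 - l) ^ (Fintype.card ι - #S) * F S
    else -(l ^ #S * (1 - l) ^ (Fintype.card ι - #S - 1) * F S)
  have hterm : ∀ S ∈ (univ : Finset (Finset ι)),
      HasDerivAt (fun x : ℝ => x ^ #S * (1 - x) ^ (Fintype.card ι - #S) * F S)
        (∑ i, G i S) l := by
    intro S _
    have hd := (((hasDerivAt_id l).pow #S).mul
      (((hasDerivAt_id l).const_sub 1).pow (Fintype.card ι - #S))).mul_const (F S)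
    refine hd.congr_deriv ?_
    symm
    have hc : #(univ.filter fun i => i ∉ S) = Fintype.card ι - #S := by
      rw [← card_compl]; congr 1; ext; simp
    simp only [G, sum_ite, sum_const, nsmul_eq_mul, hc, filter_mem_eq_inter, univ_inter]
    simp only [id, Pi.pow_apply]
    ring
  have hsum := HasDerivAt.fun_sum hterm
  refine hsum.congr_deriv ?_
  symm
  rw [sum_comm]
  refine sum_congr rfl fun i _ => ?_
  have hsplit : ∑ S : Finset ι, G i S =
      ∑ R ∈ ((univ : Finset ι).erase i).powerset, G i R +
      ∑ R ∈ ((univ : Finset ι).erase i).powerset, G i (insert i R) := by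
    rw [← sum_powerset_insert (notMem_erase i univ), insert_erase (mem_univ i), powerset_univ]
  rw [hsplit, ← sum_add_distrib]
  refine sum_congr rfl fun R hR => ?_
  have hi : i ∉ R := fun h => notMem_erase i univ (mem_powerset.1 hR h)
  simp only [G, hi, mem_insert_self, if_true, if_false, card_insert_of_notMem hi,
    Nat.add_sub_cancel]
  rw [show Fintype.card ι - 1 - #R = Fintype.card ι - #R - 1 by omega,
    show Fintype.card ι - (#R + 1) = Fintype.card ι - #R - 1 by omega]
  ring

theorem sum_increment_fC {ι : Type} [Fintype ι] [DecidableEq ι]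
    (C : Submodule (ZMod 2) (ι → ZMod 2)) (i : ι) (l : ℝ) (h1 : l < 1) :
    ∑ R ∈ ((univ : Finset ι).erase i).powerset,
        l ^ #R * (1 - l) ^ (Fintype.card ι - 1 - #R) * (fC C (insert i R) - fC C R) =
      1 - Pbi C i (1 - l) / (1 - l) := by
  have hcard : #((univ : Finset ι).erase i) = Fintype.card ι - 1 := by
    rw [card_erase_of_mem (mem_univ i), card_univ]
  have htot : ∑ R ∈ ((univ : Finset ι).erase i).powerset,
      l ^ #R * (1 - l) ^ (Fintype.card ι - 1 - #R) = 1 := by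
    rw [← hcard, sum_pow_mul_eq_add_pow]
    simp
  -- Only the leading `1` of the right-hand side is replaced by the total weight.
  have hsub : 1 - Pbi C i (1 - l) / (1 - l) =
      (∑ R ∈ ((univ : Finset ι).erase i).powerset,
        l ^ #R * (1 - l) ^ (Fintype.card ι - 1 - #R)) - Pbi C i (1 - l) / (1 - l) := by
    rw [htot]
  rw [hsub, Pbi, sum_div, ← sum_sub_distrib]
  refine sum_congr rfl fun R hR => ?_
  have hi : i ∉ R := fun h => notMem_erase i univ (mem_powerset.1 hR h)
  have hpos : 0 < Fintype.card ι := Fintype.card_pos_iff.2 ⟨i⟩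
  have hRc : #R ≤ Fintype.card ι - 1 := hcard ▸ card_le_card (mem_powerset.1 hR)
  have hne : 1 - l ≠ 0 := by linarith
  rw [fC_insert_sub C i R hi,
    show Fintype.card ι - #R = (Fintype.card ι - 1 - #R) + 1 by omega, pow_succ, sub_sub_cancel]
  field_simp

/-- `dμ_C/dλ = n(1 - h(1-λ))`. -/
theorem muC_hasDerivAt (n : ℕ) (C : Submodule (ZMod 2) (Fin n → ZMod 2))
    (l : ℝ) (h0 : 0 < l) (h1 : l < 1) :
    HasDerivAt (muC C) ((n : ℝ) * (1 - exitAvg C (1 - l))) l := by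
  have h := hasDerivAt_subset_sum (fC C) l
  simp only [sum_increment_fC C _ l h1] at h
  refine HasDerivAt.congr_deriv h ?_
  rw [exitAvg, sum_sub_distrib]
  rcases Nat.eq_zero_or_pos n with rfl | hn
  · simp
  · have : (n : ℝ) ≠ 0 := by positivity
    simp only [Fintype.card_fin, sum_const, card_univ, nsmul_eq_mul, mul_one]
    field_simp
end
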